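/- Let n ≥ 2, 0 < α < 1 and k ≥ 1 be an integer. Let Ω ⊂ ℝⁿ be a bounded domain with 0 ∈ ∂Ω and let u solve Δu = f in Ω∩B₁ and u = g on ∂Ω∩B₁. Suppose u ∈ C^{k,α}(0), f ∈ C^{k−1,α}(0), g ∈ C^{k+1,α}(0), ∂Ω ∈ C^{1,α}(0), and u(0) = |Du(0)| = ⋯ = |D^k u(0)| = 0 and |Dg(0)| = ⋯ = |D^k g(0)| = 0. Then u ∈ C^{k+1,α}(0): there exist a constant C, depending only on n, k, α and ‖∂Ω∩B₁‖_{C^{1,α}(0)}, and a homogeneous polynomial P of degree k+1 such that |u(x) − P(x)| ≤ C|x|^{k+1+α}(‖u‖_{L^∞(Ω∩B₁)} + ‖f‖_{C^{k−1,α}(0)} + ‖g‖_{C^{k+1,α}(0)}) for all x ∈ Ω∩B₁, |D^{k+1}u(0)| ≤ C(‖u‖_{L^∞(Ω∩B₁)} + ‖f‖_{C^{k−1,α}(0)} + ‖g‖_{C^{k+1,α}(0)}), and moreover ΔP ≡ P_f and P(x′,0) ≡ P_g(x′,0). -/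

import Mathlib

open MvPolynomial Metric Set MeasureTheory Bornology

noncomputable section

/-- `ℝⁿ` with the Euclidean norm. -/
abbrev En (n : ℕ) := EuclideanSpace ℝ (Fin n)

variable {n : ℕ}

/-- Evaluation of a multivariate polynomial at a point of `ℝⁿ`. -/
def peval (P : MvPolynomial (Fin n) ℝ) (x : En n) : ℝ :=
  MvPolynomial.eval (fun i => x i) P

/-- Total degree of a monomial (multi-index). -/
def mdeg (d : Fin n →₀ ℕ) : ℕ := d.sum fun _ e => e

/-- `σ!` for a multi-index `σ`. -/
def mfact (d : Fin n →₀ ℕ) : ℕ := d.prod fun _ e => Nat.factorial e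

/-- The norm `‖P‖ = Σ_σ |a_σ|` of a polynomial `P = Σ_σ (a_σ/σ!) x^σ`. -/
def pnorm (P : MvPolynomial (Fin n) ℝ) : ℝ :=
  ∑ d ∈ P.support, (mfact d : ℝ) * |MvPolynomial.coeff d P|

/-- `|D^i P(0)|`, the Euclidean norm of the `i`-th derivative of `P` at `0`. -/
def derivNorm (i : ℕ) (P : MvPolynomial (Fin n) ℝ) : ℝ :=
  Real.sqrt (∑ d ∈ P.support.filter (fun d => mdeg d = i),
    ((mfact d : ℝ) * MvPolynomial.coeff d P) ^ 2)

/-- Polynomial Laplacian. -/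
def plap (P : MvPolynomial (Fin n) ℝ) : MvPolynomial (Fin n) ℝ :=
  ∑ i, MvPolynomial.pderiv i (MvPolynomial.pderiv i P)

/-- The index of the last coordinate. -/
def lastIdx (n : ℕ) [NeZero n] : Fin n :=
  ⟨n - 1, Nat.sub_lt (Nat.pos_of_ne_zero (NeZero.ne n)) Nat.one_pos⟩

variable [NeZero n]

/-- The last coordinate `x_n`. -/
def xn (x : En n) : ℝ := x (lastIdx n)

/-- `|x′|`, the norm of the first `n-1` coordinates. -/
def xpn (x : En n) : ℝ :=
  Real.sqrt (∑ i ∈ Finset.univ.erase (lastIdx n), (x i) ^ 2)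

/-- Substitution of the polynomial `q` for the last variable `x_n`. -/
def substLast (q P : MvPolynomial (Fin n) ℝ) : MvPolynomial (Fin n) ℝ :=
  MvPolynomial.aeval (fun i => if i = lastIdx n then q else MvPolynomial.X i) P

/-- The pointwise Laplacian of `u` at `x` (sum of pure second derivatives). -/
def lapAt (u : En n → ℝ) (x : En n) : ℝ :=
  ∑ i, fderiv ℝ (fderiv ℝ u) x (EuclideanSpace.single i 1) (EuclideanSpace.single i 1)

/-- `u` is a (classical) solution of `Δu = f` in `Ω ∩ B₁`, `u = g` on `∂Ω ∩ B₁`. -/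
def SolvesDirichlet (Ω : Set (En n)) (u f g : En n → ℝ) : Prop :=
  ContinuousOn u (closure Ω ∩ ball 0 1) ∧
  (∀ x ∈ Ω ∩ ball (0 : En n) 1,
    DifferentiableAt ℝ u x ∧ DifferentiableAt ℝ (fderiv ℝ u) x ∧ lapAt u x = f x) ∧
  (∀ x ∈ frontier Ω ∩ ball (0 : En n) 1, u x = g x)

/-- `u` is a (classical) solution of the oblique derivative problem `Δu = f` in `Ω ∩ B₁`,
`β·Du = g` on `∂Ω ∩ B₁`, with `‖β‖_∞ ≤ 1` and `β·e_n ≥ a₀`; `Du` is the (continuous up to the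
boundary) gradient of `u`. -/
def SolvesOblique (Ω : Set (En n)) (u f g : En n → ℝ) (β Du : En n → En n) (a₀ : ℝ) : Prop :=
  ContinuousOn u (closure Ω ∩ ball 0 1) ∧
  ContinuousOn Du (closure Ω ∩ ball 0 1) ∧
  (∀ x ∈ Ω ∩ ball (0 : En n) 1,
    DifferentiableAt ℝ u x ∧ (∀ i, fderiv ℝ u x (EuclideanSpace.single i 1) = Du x i) ∧
    DifferentiableAt ℝ (fderiv ℝ u) x ∧ lapAt u x = f x) ∧
  (∀ x ∈ frontier Ω ∩ ball (0 : En n) 1,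
    (∑ i, β x i * Du x i) = g x ∧ ‖β x‖ ≤ 1 ∧ a₀ ≤ β x (lastIdx n))

/-- `∂Ω ∈ C^{m,α}(0)` with polynomial `P_Ω = P` and constant `K`. -/
def DomainCmα (m : ℕ) (α K : ℝ) (P : MvPolynomial (Fin n) ℝ) (Ω : Set (En n)) : Prop :=
  P.totalDegree ≤ m ∧ MvPolynomial.coeff 0 P = 0 ∧
  MvPolynomial.pderiv (lastIdx n) P = 0 ∧
  (1 ≤ m → ∀ i, MvPolynomial.coeff (Finsupp.single i 1) P = 0) ∧
  (∀ x : En n, ‖x‖ < 1 → xn x > peval P x + K * (xpn x) ^ ((m : ℝ) + α) → x ∈ Ω) ∧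
  (∀ x : En n, ‖x‖ < 1 → xn x < peval P x - K * (xpn x) ^ ((m : ℝ) + α) → x ∉ Ω)

/-- `∂Ω ∈ C^{1,α}(0)` with constant `K` (the degree-one polynomial is necessarily `0`). -/
def Domain1α (α K : ℝ) (Ω : Set (En n)) : Prop :=
  (∀ x : En n, ‖x‖ < 1 → xn x > K * (xpn x) ^ ((1 : ℝ) + α) → x ∈ Ω) ∧
  (∀ x : En n, ‖x‖ < 1 → xn x < -(K * (xpn x) ^ ((1 : ℝ) + α)) → x ∉ Ω)

/-- `[∂Ω∩B₁]_{C^{0,1}(0)} ≤ δ`. -/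
def DomainLip (δ : ℝ) (Ω : Set (En n)) : Prop :=
  (∀ x : En n, ‖x‖ < 1 → xn x > δ * xpn x → x ∈ Ω) ∧
  (∀ x : En n, ‖x‖ < 1 → xn x < -(δ * xpn x) → x ∉ Ω)

/-- `osc_{B₁} ∂Ω ≤ δ`. -/
def FrontierOscLe (Ω : Set (En n)) (δ : ℝ) : Prop :=
  ∀ x ∈ frontier Ω ∩ ball (0 : En n) 1, ∀ y ∈ frontier Ω ∩ ball (0 : En n) 1,
    xn x - xn y ≤ δ

/-- The `L^n` norm of `f` on a set `S ⊆ ℝⁿ`. -/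
def LnNorm (n : ℕ) (S : Set (En n)) (f : En n → ℝ) : ℝ :=
  (∫ x in S, |f x| ^ (n : ℝ)) ^ ((n : ℝ)⁻¹)

/-- `∂Ω` is `C^{m,α}` at the point `x₀` with constants `K, r₀`: after an isometric change of
coordinates `φ` taking `x₀` to `0`, the boundary is trapped between `P_Ω(x′) ± K|x′|^{m+α}`. -/
def BoundaryPtCmα (m : ℕ) (α K r₀ : ℝ) (Ω : Set (En n)) (x₀ : En n) : Prop :=
  ∃ (φ : En n ≃ᵢ En n) (P : MvPolynomial (Fin n) ℝ), φ x₀ = 0 ∧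
    P.totalDegree ≤ m ∧ MvPolynomial.coeff 0 P = 0 ∧
    MvPolynomial.pderiv (lastIdx n) P = 0 ∧
    (1 ≤ m → ∀ i, MvPolynomial.coeff (Finsupp.single i 1) P = 0) ∧
    (∀ y : En n, ‖y‖ < r₀ → xn y > peval P y + K * (xpn y) ^ ((m : ℝ) + α) → φ.symm y ∈ Ω) ∧
    (∀ y : En n, ‖y‖ < r₀ → xn y < peval P y - K * (xpn y) ^ ((m : ℝ) + α) → φ.symm y ∉ Ω)

/-- `∂Ω ∩ B₁ ∈ C^{m,α}`: pointwise `C^{m,α}` with constants uniform on compact subsets. -/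
def BoundaryCmα (m : ℕ) (α : ℝ) (Ω : Set (En n)) : Prop :=
  ∀ S : Set (En n), IsCompact S → S ⊆ frontier Ω ∩ ball (0 : En n) 1 →
    ∃ K r₀ : ℝ, 0 ≤ K ∧ 0 < r₀ ∧ ∀ x₀ ∈ S, BoundaryPtCmα m α K r₀ Ω x₀

/-- `∂Ω ∩ B₁ ∈ C^∞`. -/
def BoundarySmooth (Ω : Set (En n)) : Prop :=
  ∀ m : ℕ, 1 ≤ m → ∀ α : ℝ, 0 < α → α ≤ 1 → BoundaryCmα m α Ω

/-- `u ∈ C^∞(Ω̄ ∩ B₁)`: near every point of `Ω̄ ∩ B₁`, `u` agrees on `Ω` with a globally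
smooth function. -/
def SmoothUpToBoundary (Ω : Set (En n)) (u : En n → ℝ) : Prop :=
  ∀ x₀ ∈ closure Ω ∩ ball (0 : En n) 1, ∃ ε : ℝ, 0 < ε ∧ ∃ v : En n → ℝ,
    ContDiff ℝ (⊤ : ℕ∞) v ∧ ∀ x ∈ Ω ∩ ball x₀ ε, v x = u x

end

/-!
Subtract from `u` a homogeneous polynomial `Q` of degree `k + 1` with `ΔQ = P_f` and `Q = P_g` on
`x_n = 0`. Since `∂Ω` lies in `|x_n| ≤ M|x|^{1+α}`, the difference `v = u - Q` satisfies
`|Δv| ≲ |x|^{k-1+α}` in `Ω` and `|v| ≲ |x|^{k+1+α}` on `∂Ω`. If moreover `|v| ≲ |x|^s`, then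
barriers bound `v` in `Ω ∩ B_r` by `r^{s+α}` on a slab of width `r^{1+α}` containing `∂Ω`.
Cutting `v` off there, reflecting it oddly and solving the Dirichlet problem on a ball for a
polynomial close to the result yields a harmonic polynomial, odd in `x_n`, within `O(r^{s+α})` of
`v`. Summed over dyadic `r`, these approximations converge to an expansion of `v` of order `σ`,
for each noninteger `σ ≤ s + α` up to `k + 1 + α`. As `u = O(|x|^{k+α})`, the expansion has no
terms of degree at most `k`, so that the exponent `s` improves step by step from `0` to `k + 1`;
one last step produces the homogeneous polynomial. The same smallness of `u` makes `P_f`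
homogeneous and `P_g(0) = 0`, which is why a homogeneous `Q` exists.
-/

section PolynomialFunctions

open Filter Topology

variable {n : ℕ}

@[simp]
lemma peval_zero (x : En n) : peval 0 x = 0 := map_zero _

@[simp]
lemma peval_C (c : ℝ) (x : En n) : peval (C c) x = c := eval_C _

@[simp]
lemma peval_X (i : Fin n) (x : En n) : peval (X i) x = x i := eval_X _

@[simp]
lemma peval_add (P Q : MvPolynomial (Fin n) ℝ) (x : En n) :
    peval (P + Q) x = peval P x + peval Q x := map_add _ _ _

@[simp]
lemma peval_neg (P : MvPolynomial (Fin n) ℝ) (x : En n) : peval (-P) x = -peval P x :=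
  map_neg _ _

@[simp]
lemma peval_sub (P Q : MvPolynomial (Fin n) ℝ) (x : En n) :
    peval (P - Q) x = peval P x - peval Q x := map_sub _ _ _

@[simp]
lemma peval_mul (P Q : MvPolynomial (Fin n) ℝ) (x : En n) :
    peval (P * Q) x = peval P x * peval Q x := map_mul _ _ _

@[simp]
lemma peval_pow (P : MvPolynomial (Fin n) ℝ) (m : ℕ) (x : En n) :
    peval (P ^ m) x = peval P x ^ m := map_pow _ _ _

@[simp]
lemma peval_sum {ι : Type*} (s : Finset ι) (P : ι → MvPolynomial (Fin n) ℝ) (x : En n) :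
    peval (∑ i ∈ s, P i) x = ∑ i ∈ s, peval (P i) x := map_sum _ _ _

@[simp]
lemma plap_zero : plap (0 : MvPolynomial (Fin n) ℝ) = 0 := by simp [plap]

@[simp]
lemma plap_C (c : ℝ) : plap (C c : MvPolynomial (Fin n) ℝ) = 0 := by simp [plap]

lemma plap_add (P Q : MvPolynomial (Fin n) ℝ) : plap (P + Q) = plap P + plap Q := by
  simp [plap, Finset.sum_add_distrib]

lemma plap_sub (P Q : MvPolynomial (Fin n) ℝ) : plap (P - Q) = plap P - plap Q := by
  simp [plap]

lemma plap_C_mul (c : ℝ) (P : MvPolynomial (Fin n) ℝ) : plap (C c * P) = C c * plap P := by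
  simp [plap, Finset.mul_sum, Derivation.leibniz]

lemma plap_sum {ι : Type*} (s : Finset ι) (P : ι → MvPolynomial (Fin n) ℝ) :
    plap (∑ i ∈ s, P i) = ∑ i ∈ s, plap (P i) := by
  simp only [plap, map_sum]
  exact Finset.sum_comm

@[simp]
lemma plap_X (j : Fin n) : plap (X j : MvPolynomial (Fin n) ℝ) = 0 := by
  refine Finset.sum_eq_zero fun i _ => ?_
  rw [pderiv_X, Pi.single_apply]
  split_ifs <;> simp

lemma plap_X_sub_C_sq (j : Fin n) (a : ℝ) : plap ((X j - C a) ^ 2) = C 2 := by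
  rw [plap, Finset.sum_eq_single_of_mem j (Finset.mem_univ j)]
  · simp [Derivation.leibniz_pow, Derivation.leibniz, ← map_ofNat C]
  · intro i _ hij
    simp [Derivation.leibniz_pow, pderiv_X_of_ne hij.symm]

lemma hasFDerivAt_peval (P : MvPolynomial (Fin n) ℝ) (x : En n) :
    HasFDerivAt (peval P)
      (∑ i, peval (pderiv i P) x • (EuclideanSpace.proj i : En n →L[ℝ] ℝ)) x := by
  induction P using MvPolynomial.induction_on with
  | C a =>
    rw [show peval (C a) = fun _ : En n => a from funext (peval_C a)]
    simpa using hasFDerivAt_const a x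
  | add p q hp hq =>
    rw [show peval (p + q) = peval p + peval q from funext (peval_add p q)]
    refine (hp.add hq).congr_fderiv ?_
    simp [add_smul, Finset.sum_add_distrib]
  | mul_X p j hp =>
    rw [show peval (p * X j) = fun y => peval p y * y j by funext y; simp]
    refine (hp.mul (EuclideanSpace.proj j : En n →L[ℝ] ℝ).hasFDerivAt).congr_fderiv ?_
    ext v
    simp [Derivation.leibniz, add_mul, Finset.sum_add_distrib, Finset.mul_sum, pderiv_X,
      Pi.single_apply, apply_ite (peval · x), mul_assoc]

lemma continuous_peval (P : MvPolynomial (Fin n) ℝ) : Continuous (peval P) :=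
  continuous_iff_continuousAt.2 fun x => (hasFDerivAt_peval P x).continuousAt

lemma hasFDerivAt_fderiv_peval (P : MvPolynomial (Fin n) ℝ) (x : En n) :
    HasFDerivAt (fderiv ℝ (peval P))
      (∑ i, (∑ j, peval (pderiv j (pderiv i P)) x •
        (EuclideanSpace.proj j : En n →L[ℝ] ℝ)).smulRight
          (EuclideanSpace.proj i : En n →L[ℝ] ℝ)) x := by
  rw [show fderiv ℝ (peval P) = fun y => ∑ i, peval (pderiv i P) y •
    (EuclideanSpace.proj i : En n →L[ℝ] ℝ) from funext fun y => (hasFDerivAt_peval P y).fderiv]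
  exact HasFDerivAt.fun_sum fun i _ =>
    (hasFDerivAt_peval (pderiv i P) x).smul_const (EuclideanSpace.proj i : En n →L[ℝ] ℝ)

lemma lapAt_peval (P : MvPolynomial (Fin n) ℝ) (x : En n) :
    lapAt (peval P) x = peval (plap P) x := by
  rw [lapAt, plap, (hasFDerivAt_fderiv_peval P x).fderiv, peval_sum]
  simp

/-- The function `w` is differentiable near `x` and its derivative is differentiable at `x`:
the pointwise regularity required of classical solutions. -/
def TwiceDifferentiableAt (w : En n → ℝ) (x : En n) : Prop :=
  (∀ᶠ y in 𝓝 x, DifferentiableAt ℝ w y) ∧ DifferentiableAt ℝ (fderiv ℝ w) x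

lemma twiceDifferentiableAt_peval (P : MvPolynomial (Fin n) ℝ) (x : En n) :
    TwiceDifferentiableAt (peval P) x :=
  ⟨.of_forall fun y => (hasFDerivAt_peval P y).differentiableAt,
    (hasFDerivAt_fderiv_peval P x).differentiableAt⟩

namespace TwiceDifferentiableAt

variable {u v w : En n → ℝ} {x : En n}

lemma continuousAt (hw : TwiceDifferentiableAt w x) : ContinuousAt w x :=
  hw.1.self_of_nhds.continuousAt

lemma hasFDerivAt_fderiv_sub (hu : TwiceDifferentiableAt u x) (hv : TwiceDifferentiableAt v x) :
    HasFDerivAt (fderiv ℝ (u - v)) (fderiv ℝ (fderiv ℝ u) x - fderiv ℝ (fderiv ℝ v) x) x := by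
  refine (hu.2.hasFDerivAt.sub hv.2.hasFDerivAt).congr_of_eventuallyEq ?_
  filter_upwards [hu.1, hv.1] with y huy hvy using fderiv_sub huy hvy

lemma sub (hu : TwiceDifferentiableAt u x) (hv : TwiceDifferentiableAt v x) :
    TwiceDifferentiableAt (u - v) x :=
  ⟨by filter_upwards [hu.1, hv.1] with y huy hvy using huy.sub hvy,
    (hu.hasFDerivAt_fderiv_sub hv).differentiableAt⟩

lemma lapAt_sub (hu : TwiceDifferentiableAt u x) (hv : TwiceDifferentiableAt v x) :
    lapAt (u - v) x = lapAt u x - lapAt v x := by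
  simp [lapAt, (hu.hasFDerivAt_fderiv_sub hv).fderiv]

lemma neg (hu : TwiceDifferentiableAt u x) : TwiceDifferentiableAt (-u) x := by
  simpa [show peval (0 : MvPolynomial (Fin n) ℝ) = 0 from funext peval_zero] using
    (twiceDifferentiableAt_peval 0 x).sub hu

lemma lapAt_neg (hu : TwiceDifferentiableAt u x) : lapAt (-u) x = -lapAt u x := by
  have := (twiceDifferentiableAt_peval 0 x).lapAt_sub hu
  rw [lapAt_peval, plap_zero, peval_zero, zero_sub] at this
  simpa [show peval (0 : MvPolynomial (Fin n) ℝ) = 0 from funext peval_zero] using this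

end TwiceDifferentiableAt

end PolynomialFunctions

section MaximumPrinciple

open Filter Topology

lemma deriv_deriv_nonpos_of_isLocalMax {f : ℝ → ℝ} {a : ℝ} (hf : IsLocalMax f a)
    (hc : ContinuousAt f a) : deriv (deriv f) a ≤ 0 := by
  by_contra! hpos
  have hmin : IsLocalMin f a := isLocalMin_of_deriv_deriv_pos hpos hf.deriv_eq_zero hc
  have hconst : f =ᶠ[𝓝 a] fun _ => f a := by
    filter_upwards [hf, hmin] with t hle hge using le_antisymm hle hge
  have hzero : deriv f =ᶠ[𝓝 a] fun _ => 0 := hconst.deriv.trans (by simp)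
  simp [hzero.deriv_eq] at hpos

variable {n : ℕ}

namespace TwiceDifferentiableAt

variable {w : En n → ℝ} {x : En n}

lemma deriv_deriv_comp_line (hw : TwiceDifferentiableAt w x) (e : En n) :
    deriv (deriv fun t : ℝ => w (x + t • e)) 0 = fderiv ℝ (fderiv ℝ w) x e e := by
  have hline (t : ℝ) : HasDerivAt (fun t : ℝ => x + t • e) e t := by
    simpa using ((hasDerivAt_id t).smul_const e).const_add x
  have htendsto : Tendsto (fun t : ℝ => x + t • e) (𝓝 0) (𝓝 x) := by
    simpa using (hline 0).continuousAt.tendsto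
  have hfirst : (deriv fun t : ℝ => w (x + t • e)) =ᶠ[𝓝 0] fun t => fderiv ℝ w (x + t • e) e := by
    filter_upwards [htendsto.eventually hw.1] with t ht
    exact (ht.hasFDerivAt.comp_hasDerivAt t (hline t)).deriv
  have hsecond : HasFDerivAt (fderiv ℝ w) (fderiv ℝ (fderiv ℝ w) x) (x + (0 : ℝ) • e) := by
    rw [zero_smul, add_zero]
    exact hw.2.hasFDerivAt
  have hcomp : HasDerivAt (fun t : ℝ => fderiv ℝ w (x + t • e)) (fderiv ℝ (fderiv ℝ w) x e) 0 :=
    hsecond.comp_hasDerivAt 0 (hline 0)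
  rw [hfirst.deriv_eq, (hcomp.clm_apply (hasDerivAt_const 0 e)).deriv, map_zero, add_zero]

lemma lapAt_nonpos_of_isLocalMax (hw : TwiceDifferentiableAt w x) (hmax : IsLocalMax w x) :
    lapAt w x ≤ 0 := by
  refine Finset.sum_nonpos fun i _ => ?_
  set e : En n := EuclideanSpace.single i 1
  have hline : ContinuousAt (fun t : ℝ => x + t • e) 0 := by fun_prop
  have htendsto : Tendsto (fun t : ℝ => x + t • e) (𝓝 0) (𝓝 x) := by simpa using hline.tendsto
  rw [← hw.deriv_deriv_comp_line e]
  refine deriv_deriv_nonpos_of_isLocalMax ?_ ?_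
  · simpa [IsLocalMax, IsMaxFilter] using htendsto.eventually hmax
  · simpa [ContinuousAt, Function.comp_def] using hw.continuousAt.tendsto.comp htendsto

end TwiceDifferentiableAt

/-- The polynomial `|x - c|²`. -/
noncomputable def distSq (c : En n) : MvPolynomial (Fin n) ℝ := ∑ i, (X i - C (c i)) ^ 2

@[simp]
lemma peval_distSq (c x : En n) : peval (distSq c) x = ‖x - c‖ ^ 2 := by
  simp [distSq, EuclideanSpace.norm_sq_eq]

lemma plap_distSq (c : En n) : plap (distSq c) = C (2 * n : ℝ) := by
  simp [distSq, plap_sum, plap_X_sub_C_sq, mul_comm]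

/-- The polynomial `b₀ + b₁|x - c|² + b₂(x_j - a) + b₃(x_j - a)²`, used as a comparison function
in the maximum principle. -/
noncomputable def quadBarrier (j : Fin n) (c : En n) (a b₀ b₁ b₂ b₃ : ℝ) :
    MvPolynomial (Fin n) ℝ :=
  C b₀ + C b₁ * distSq c + C b₂ * (X j - C a) + C b₃ * (X j - C a) ^ 2

@[simp]
lemma peval_quadBarrier (j : Fin n) (c : En n) (a b₀ b₁ b₂ b₃ : ℝ) (x : En n) :
    peval (quadBarrier j c a b₀ b₁ b₂ b₃) x =
      b₀ + b₁ * ‖x - c‖ ^ 2 + b₂ * (x j - a) + b₃ * (x j - a) ^ 2 := by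
  simp [quadBarrier]

lemma plap_quadBarrier (j : Fin n) (c : En n) (a b₀ b₁ b₂ b₃ : ℝ) :
    plap (quadBarrier j c a b₀ b₁ b₂ b₃) = C (2 * n * b₁ + 2 * b₃) := by
  simp only [quadBarrier, plap_add, plap_sub, plap_C, plap_X, plap_C_mul, plap_distSq,
    plap_X_sub_C_sq, sub_zero, mul_zero, zero_add, add_zero, ← C_mul, ← C_add]
  congr 1
  ring

variable [NeZero n]

lemma dim_pos : (0 : ℝ) < n := Nat.cast_pos.2 (NeZero.pos n)

theorem nonpos_of_lapAt_nonneg {D : Set (En n)} (hD : IsOpen D) (hb : IsBounded D)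
    {w : En n → ℝ} (hc : ContinuousOn w (closure D)) (h2 : ∀ x ∈ D, TwiceDifferentiableAt w x)
    (hlap : ∀ x ∈ D, 0 ≤ lapAt w x) (hfr : ∀ x ∈ frontier D, w x ≤ 0) : ∀ x ∈ D, w x ≤ 0 := by
  intro x₀ hx₀
  by_contra! hpos
  obtain ⟨R, hR0, hR⟩ : ∃ R : ℝ, 0 < R ∧ closure D ⊆ closedBall 0 R := by
    obtain ⟨R, hR0, hR⟩ := hb.closure.subset_closedBall_lt 0 (0 : En n)
    exact ⟨R, hR0, hR⟩
  set ε := w x₀ / (2 * R ^ 2) with hε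
  have hε0 : 0 < ε := by positivity
  have hεR : ε * R ^ 2 = w x₀ / 2 := by rw [hε]; field_simp
  -- Adding `ε|x|²` makes the Laplacian positive, so that no interior maximum can occur.
  set Q : MvPolynomial (Fin n) ℝ := C (ε * R ^ 2) - C ε * distSq 0 with hQ
  have hQe (x : En n) : peval Q x = ε * R ^ 2 - ε * ‖x‖ ^ 2 := by simp [hQ]
  obtain ⟨y, hy, hmax⟩ := hb.isCompact_closure.exists_isMaxOn ⟨x₀, subset_closure hx₀⟩
    (hc.sub (continuous_peval Q).continuousOn)
  have hypos : 0 < w y - peval Q y := by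
    refine lt_of_lt_of_le ?_ (hmax (subset_closure hx₀))
    rw [Pi.sub_apply, hQe]
    nlinarith [mul_nonneg hε0.le (sq_nonneg ‖x₀‖)]
  have hyD : y ∈ D := by
    by_contra hyD
    have hwy := hfr y (hD.frontier_eq ▸ ⟨hy, hyD⟩)
    have hyR : ‖y‖ ≤ R := by simpa using hR hy
    rw [hQe] at hypos
    nlinarith [mul_nonneg hε0.le (sub_nonneg.2 (pow_le_pow_left₀ (norm_nonneg y) hyR 2))]
  have hlocal : IsLocalMax (w - peval Q) y :=
    (hmax.on_subset subset_closure).isLocalMax (hD.mem_nhds hyD)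
  have hle := ((h2 y hyD).sub (twiceDifferentiableAt_peval Q y)).lapAt_nonpos_of_isLocalMax hlocal
  rw [(h2 y hyD).lapAt_sub (twiceDifferentiableAt_peval Q y), lapAt_peval, hQ, plap_sub, plap_C,
    plap_C_mul, plap_distSq, ← C_mul, zero_sub, peval_neg, peval_C] at hle
  nlinarith [hlap y hyD, mul_pos (dim_pos (n := n)) hε0]

variable {D : Set (En n)} {w : En n → ℝ}

theorem le_peval_of_plap_le_lapAt (hD : IsOpen D) (hb : IsBounded D) (Q : MvPolynomial (Fin n) ℝ)
    (hc : ContinuousOn w (closure D)) (h2 : ∀ x ∈ D, TwiceDifferentiableAt w x)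
    (hlap : ∀ x ∈ D, peval (plap Q) x ≤ lapAt w x) (hfr : ∀ x ∈ frontier D, w x ≤ peval Q x) :
    ∀ x ∈ D, w x ≤ peval Q x := by
  have hQ (x : En n) := twiceDifferentiableAt_peval Q x
  intro x hx
  refine sub_nonpos.1 (nonpos_of_lapAt_nonneg hD hb (hc.sub (continuous_peval Q).continuousOn)
    (fun y hy => (h2 y hy).sub (hQ y)) (fun y hy => ?_) (fun y hy => ?_) x hx)
  · rw [(h2 y hy).lapAt_sub (hQ y), lapAt_peval]
    exact sub_nonneg.2 (hlap y hy)
  · exact sub_nonpos.2 (hfr y hy)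

theorem abs_le_peval_of_abs_lapAt_le (hD : IsOpen D) (hb : IsBounded D)
    (Q : MvPolynomial (Fin n) ℝ) (hc : ContinuousOn w (closure D))
    (h2 : ∀ x ∈ D, TwiceDifferentiableAt w x) (hlap : ∀ x ∈ D, |lapAt w x| ≤ -peval (plap Q) x)
    (hfr : ∀ x ∈ frontier D, |w x| ≤ peval Q x) : ∀ x ∈ D, |w x| ≤ peval Q x := by
  intro x hx
  refine abs_le'.2
    ⟨le_peval_of_plap_le_lapAt hD hb Q hc h2 (fun y hy => ?_) (fun y hy => ?_) x hx,
      le_peval_of_plap_le_lapAt hD hb Q hc.neg (fun y hy => (h2 y hy).neg) (fun y hy => ?_)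
        (fun y hy => ?_) x hx⟩
  · linarith [(abs_le.1 (hlap y hy)).1]
  · exact (abs_le'.1 (hfr y hy)).1
  · rw [(h2 y hy).lapAt_neg]
    linarith [(abs_le.1 (hlap y hy)).2]
  · exact (abs_le'.1 (hfr y hy)).2

end MaximumPrinciple

section HarmonicPolynomials

open Filter Topology

variable {n : ℕ}

/-- The reflection of `x` in the hyperplane `x_j = a`. -/
noncomputable def reflectCoord (j : Fin n) (a : ℝ) (x : En n) : En n :=
  WithLp.toLp 2 fun i => if i = j then 2 * a - x j else x i

/-- Composition of a polynomial with the reflection in the hyperplane `x_j = a`. -/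
noncomputable def reflectPoly (j : Fin n) (a : ℝ) :
    MvPolynomial (Fin n) ℝ →ₐ[ℝ] MvPolynomial (Fin n) ℝ :=
  aeval fun i => if i = j then C (2 * a) - X j else X i

lemma reflectCoord_eq_self {j : Fin n} {a : ℝ} {x : En n} (hx : x j = a) :
    reflectCoord j a x = x := by
  ext i
  by_cases hi : i = j
  · subst hi; simp [reflectCoord, hx]; ring
  · simp [reflectCoord, hi]

lemma norm_reflectCoord_sub (j : Fin n) (c x : En n) :
    ‖reflectCoord j (c j) x - c‖ = ‖x - c‖ := by
  rw [EuclideanSpace.norm_eq, EuclideanSpace.norm_eq]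
  congr 1
  refine Finset.sum_congr rfl fun i _ => ?_
  by_cases hi : i = j
  · subst hi
    simp only [reflectCoord, PiLp.sub_apply, if_true, Real.norm_eq_abs, sq_abs]
    ring
  · simp [reflectCoord, hi]

lemma peval_reflectPoly (j : Fin n) (a : ℝ) (P : MvPolynomial (Fin n) ℝ) (x : En n) :
    peval (reflectPoly j a P) x = peval P (reflectCoord j a x) := by
  induction P using MvPolynomial.induction_on with
  | C c => simp [reflectPoly]
  | add p q hp hq => simp [hp, hq]
  | mul_X p i hp =>
    rw [map_mul, peval_mul, peval_mul, hp, peval_X, reflectPoly, aeval_X, reflectCoord]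
    split_ifs with hi <;> simp [hi]

lemma pderiv_reflectPoly (i j : Fin n) (a : ℝ) (P : MvPolynomial (Fin n) ℝ) :
    pderiv i (reflectPoly j a P) = (if i = j then -1 else 1) * reflectPoly j a (pderiv i P) := by
  induction P using MvPolynomial.induction_on with
  | C c => simp [reflectPoly]
  | add p q hp hq => simp only [map_add, hp, hq]; ring
  | mul_X p k hp =>
    have hX : pderiv i (reflectPoly j a (X k)) =
        (if i = j then -1 else 1) * reflectPoly j a (pderiv i (X k)) := by
      rcases eq_or_ne k i with rfl | hki
      · by_cases hkj : k = j <;> simp [reflectPoly, hkj]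
      · by_cases hkj : k = j
        · subst hkj; simp [reflectPoly, pderiv_X_of_ne hki]
        · simp [reflectPoly, hkj, pderiv_X_of_ne hki]
    rw [map_mul, pderiv_mul, pderiv_mul, hp, hX, map_add, map_mul, map_mul]
    ring

lemma plap_reflectPoly (j : Fin n) (a : ℝ) (P : MvPolynomial (Fin n) ℝ) :
    plap (reflectPoly j a P) = reflectPoly j a (plap P) := by
  rw [plap, plap, map_sum]
  refine Finset.sum_congr rfl fun i _ => ?_
  rw [pderiv_reflectPoly]
  split_ifs with hi <;> simp [pderiv_reflectPoly, hi]

lemma plap_pderiv (i : Fin n) (P : MvPolynomial (Fin n) ℝ) :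
    plap (pderiv i P) = pderiv i (plap P) := by
  have hcomm (j : Fin n) (Q : MvPolynomial (Fin n) ℝ) :
      pderiv j (pderiv i Q) = pderiv i (pderiv j Q) := by
    have hbracket : ⁅(pderiv j : Derivation ℝ (MvPolynomial (Fin n) ℝ) (MvPolynomial (Fin n) ℝ)),
        (pderiv i : Derivation ℝ (MvPolynomial (Fin n) ℝ) (MvPolynomial (Fin n) ℝ))⁆ = 0 := by
      refine MvPolynomial.derivation_ext fun k => ?_
      simp only [Derivation.commutator_apply, pderiv_X, Pi.single_apply, Derivation.zero_apply]
      split_ifs <;> simp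
    have := congrArg (· Q) hbracket
    simpa [Derivation.commutator_apply, sub_eq_zero] using this
  simp only [plap, map_sum, hcomm]

lemma peval_zero_right (P : MvPolynomial (Fin n) ℝ) : peval P 0 = coeff 0 P := by
  simp [peval, ← constantCoeff_eq]

lemma hasDerivAt_peval_line (P : MvPolynomial (Fin n) ℝ) (c : En n) (j : Fin n) :
    HasDerivAt (fun t : ℝ => peval P (c + t • EuclideanSpace.single j 1))
      (peval (pderiv j P) c) 0 := by
  have hline : HasDerivAt (fun t : ℝ => c + t • (EuclideanSpace.single j 1 : En n))
      (EuclideanSpace.single j 1) 0 := by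
    simpa using ((hasDerivAt_id (0 : ℝ)).smul_const (EuclideanSpace.single j 1)).const_add c
  have hP := hasFDerivAt_peval P (c + (0 : ℝ) • EuclideanSpace.single j 1)
  refine (hP.comp_hasDerivAt (0 : ℝ) hline).congr_deriv ?_
  simp

lemma abs_apply_le_norm (x : En n) (j : Fin n) : |x j| ≤ ‖x‖ := PiLp.norm_apply_le x j

/-- The half of the ball `B_ρ(c)` on which `x_j > c_j`. -/
def upperHalfBall (j : Fin n) (c : En n) (ρ : ℝ) : Set (En n) := ball c ρ ∩ {x | c j < x j}

lemma isOpen_upperHalfBall (j : Fin n) (c : En n) (ρ : ℝ) : IsOpen (upperHalfBall j c ρ) :=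
  isOpen_ball.inter (isOpen_lt continuous_const (by fun_prop))

lemma isBounded_upperHalfBall (j : Fin n) (c : En n) (ρ : ℝ) :
    IsBounded (upperHalfBall j c ρ) :=
  isBounded_ball.subset inter_subset_left

lemma of_mem_frontier_upperHalfBall {j : Fin n} {c : En n} {ρ : ℝ} {x : En n}
    (hx : x ∈ frontier (upperHalfBall j c ρ)) :
    ‖x - c‖ ≤ ρ ∧ c j ≤ x j ∧ (‖x - c‖ = ρ ∨ x j = c j) := by
  have hclosure : closure (upperHalfBall j c ρ) ⊆ closedBall c ρ ∩ {x | c j ≤ x j} :=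
    closure_minimal
      (inter_subset_inter ball_subset_closedBall fun y hy => (show c j < y j from hy).le)
      (isClosed_closedBall.inter (isClosed_le continuous_const (by fun_prop)))
  rw [(isOpen_upperHalfBall j c ρ).frontier_eq] at hx
  have hnorm : ‖x - c‖ ≤ ρ := by simpa [dist_eq_norm] using (hclosure hx.1).1
  have hcoord : c j ≤ x j := (hclosure hx.1).2
  refine ⟨hnorm, hcoord, ?_⟩
  by_contra! hne
  exact hx.2 ⟨mem_ball_iff_norm.2 (hnorm.lt_of_ne hne.1), hcoord.lt_of_ne hne.2.symm⟩

lemma norm_fderiv_peval_le (P : MvPolynomial (Fin n) ℝ) {x : En n} {T : ℝ}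
    (hT : ∀ i, |peval (pderiv i P) x| ≤ T) : ‖fderiv ℝ (peval P) x‖ ≤ n * T := by
  rw [(hasFDerivAt_peval P x).fderiv]
  refine (norm_sum_le_of_le _ fun i _ => ?_).trans (b := ∑ _i : Fin n, T) (by simp)
  have hproj : ‖(EuclideanSpace.proj i : En n →L[ℝ] ℝ)‖ ≤ 1 :=
    ContinuousLinearMap.opNorm_le_bound _ zero_le_one fun y => by simpa using abs_apply_le_norm y i
  rw [norm_smul]
  exact (mul_le_of_le_one_right (norm_nonneg _) hproj).trans (hT i)

lemma abs_peval_le_of_abs_pderiv_le {P : MvPolynomial (Fin n) ℝ} (hP : coeff 0 P = 0) {x : En n}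
    {T : ℝ} (hT : ∀ y ∈ closedBall (0 : En n) ‖x‖, ∀ i, |peval (pderiv i P) y| ≤ T) :
    |peval P x| ≤ n * T * ‖x‖ := by
  have := (convex_closedBall (0 : En n) ‖x‖).norm_image_sub_le_of_norm_fderiv_le (𝕜 := ℝ)
    (f := peval P) (fun y _ => (hasFDerivAt_peval P y).differentiableAt)
    (fun y hy => norm_fderiv_peval_le P (hT y hy)) (mem_closedBall_self (norm_nonneg x))
    (show x ∈ closedBall (0 : En n) ‖x‖ by simp)
  simpa [peval_zero_right, hP] using this

variable [NeZero n]

lemma one_le_dim : (1 : ℝ) ≤ n := Nat.one_le_cast.2 (NeZero.pos n)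

lemma abs_peval_le_of_eq_zero_on_hyperplane {ψ : MvPolynomial (Fin n) ℝ} (hψ : plap ψ = 0)
    {j : Fin n} {c : En n} {ρ T : ℝ} (hρ : 0 < ρ) (hT : ∀ x ∈ closedBall c ρ, |peval ψ x| ≤ T)
    (hzero : ∀ x : En n, x j = c j → peval ψ x = 0) :
    ∀ x ∈ upperHalfBall j c ρ,
      |peval ψ x| ≤ T / ρ ^ 2 * (‖x - c‖ ^ 2 + n * (x j - c j) * (ρ - (x j - c j))) := by
  have hT0 : 0 ≤ T := (abs_nonneg _).trans (hT c (mem_closedBall_self hρ.le))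
  have hK0 : 0 ≤ T / ρ ^ 2 := by positivity
  set K := T / ρ ^ 2
  set Q := quadBarrier j c (c j) 0 K (K * n * ρ) (-(K * n)) with hQ
  have hQe (x : En n) :
      peval Q x = K * (‖x - c‖ ^ 2 + n * (x j - c j) * (ρ - (x j - c j))) := by
    rw [hQ, peval_quadBarrier]; ring
  have hQlap : plap Q = 0 := by
    rw [hQ, plap_quadBarrier, show 2 * (n : ℝ) * K + 2 * -(K * n) = 0 by ring, C_0]
  simp only [← hQe]
  refine abs_le_peval_of_abs_lapAt_le (isOpen_upperHalfBall j c ρ) (isBounded_upperHalfBall j c ρ)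
    Q (continuous_peval ψ).continuousOn (fun x _ => twiceDifferentiableAt_peval ψ x) ?_ ?_
  · simp [lapAt_peval, hψ, hQlap]
  · intro x hx
    obtain ⟨hnorm, hcoord, hcases⟩ := of_mem_frontier_upperHalfBall hx
    have : 0 ≤ x j - c j := sub_nonneg.2 hcoord
    have : 0 ≤ ρ - (x j - c j) :=
      sub_nonneg.2 ((le_abs_self _).trans ((abs_apply_le_norm (x - c) j).trans hnorm))
    rw [hQe]
    rcases hcases with hsphere | hplane
    · calc |peval ψ x| ≤ T := hT x (mem_closedBall_iff_norm.2 hnorm)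
        _ = K * ‖x - c‖ ^ 2 := by rw [hsphere, div_mul_cancel₀ _ (by positivity)]
        _ ≤ _ := by gcongr; exact le_add_of_nonneg_right (by positivity)
    · rw [hzero x hplane, abs_zero]
      positivity

lemma abs_peval_pderiv_le_of_eq_zero_on_hyperplane {ψ : MvPolynomial (Fin n) ℝ}
    (hψ : plap ψ = 0) {j : Fin n} {c : En n} {ρ T : ℝ} (hρ : 0 < ρ)
    (hT : ∀ x ∈ closedBall c ρ, |peval ψ x| ≤ T) (hzero : ∀ x : En n, x j = c j → peval ψ x = 0) :
    |peval (pderiv j ψ) c| ≤ n * T / ρ := by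
  have hT0 : 0 ≤ T := (abs_nonneg _).trans (hT c (mem_closedBall_self hρ.le))
  set e : En n := EuclideanSpace.single j 1
  have hslope := (hasDerivAt_peval_line ψ c j).tendsto_slope_zero_right.abs
  refine le_of_tendsto hslope ?_
  filter_upwards [Ioo_mem_nhdsGT hρ] with t ht
  have ht0 : 0 < t := ht.1
  have hcoord : (c + t • e) j - c j = t := by simp [e]
  have hnorm : ‖c + t • e - c‖ = t := by simp [e, norm_smul, abs_of_pos ht0]
  have hle := abs_peval_le_of_eq_zero_on_hyperplane hψ hρ hT hzero (c + t • e)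
    ⟨by rw [mem_ball_iff_norm, hnorm]; exact ht.2, show c j < (c + t • e) j by linarith⟩
  rw [hcoord, hnorm] at hle
  rw [zero_add, zero_smul, add_zero, hzero c rfl, sub_zero, smul_eq_mul, abs_mul, abs_inv,
    abs_of_pos ht0, inv_mul_le_iff₀ ht0]
  calc |peval ψ (c + t • e)| ≤ T / ρ ^ 2 * (t ^ 2 + n * t * (ρ - t)) := hle
    _ ≤ T / ρ ^ 2 * (n * t * ρ) := by
      gcongr
      nlinarith [mul_nonneg (sub_nonneg.2 (one_le_dim (n := n))) (sq_nonneg t)]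
    _ = t * (n * T / ρ) := by field_simp

-- The odd part of `h` with respect to the hyperplane `x_j = c_j` has normal derivative
-- `2 ∂_j h` at `c` and vanishes on the hyperplane, so that explicit barriers apply to it.
theorem abs_peval_pderiv_le {h : MvPolynomial (Fin n) ℝ} (hh : plap h = 0) {c : En n} {ρ S : ℝ}
    (hρ : 0 < ρ) (hS : ∀ x ∈ closedBall c ρ, |peval h x| ≤ S) (j : Fin n) :
    |peval (pderiv j h) c| ≤ n * S / ρ := by
  set ψ := h - reflectPoly j (c j) h with hψ
  have hψe (x : En n) : peval ψ x = peval h x - peval h (reflectCoord j (c j) x) := by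
    rw [hψ, peval_sub, peval_reflectPoly]
  have hderiv : peval (pderiv j ψ) c = 2 * peval (pderiv j h) c := by
    rw [hψ, map_sub, pderiv_reflectPoly, if_pos rfl, peval_sub, peval_mul, peval_reflectPoly,
      reflectCoord_eq_self rfl, peval_neg, show (1 : MvPolynomial (Fin n) ℝ) = C 1 from C_1.symm,
      peval_C]
    ring
  have hle := abs_peval_pderiv_le_of_eq_zero_on_hyperplane (ψ := ψ) (j := j) (T := 2 * S)
    (by rw [hψ, plap_sub, plap_reflectPoly, hh, map_zero, sub_zero]) hρ
    (fun x hx => by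
      have hx' : reflectCoord j (c j) x ∈ closedBall c ρ := by
        rwa [mem_closedBall_iff_norm, norm_reflectCoord_sub, ← mem_closedBall_iff_norm]
      rw [hψe]
      linarith [abs_sub (peval h x) (peval h (reflectCoord j (c j) x)), hS x hx, hS _ hx'])
    (fun x hx => by rw [hψe, reflectCoord_eq_self hx, sub_self])
  rw [hderiv, abs_mul, abs_two, show n * (2 * S) / ρ = 2 * (n * S / ρ) by ring] at hle
  linarith

lemma abs_peval_pderiv_le_on_half {h : MvPolynomial (Fin n) ℝ} (hh : plap h = 0) {ρ S : ℝ}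
    (hρ : 0 < ρ) (hS : ∀ x ∈ closedBall (0 : En n) ρ, |peval h x| ≤ S) (j : Fin n) :
    ∀ x ∈ closedBall (0 : En n) (ρ / 2), |peval (pderiv j h) x| ≤ n * S / (ρ / 2) := by
  intro x hx
  refine abs_peval_pderiv_le hh (half_pos hρ) (fun y hy => hS y ?_) j
  refine closedBall_subset_closedBall' ?_ hy
  linarith [mem_closedBall.1 hx]

theorem exists_abs_coeff_le_of_plap_eq_zero (m : ℕ) : ∃ K : ℝ, 0 < K ∧
    ∀ d : Fin n →₀ ℕ, d.degree = m → ∀ (h : MvPolynomial (Fin n) ℝ) (ρ S : ℝ), plap h = 0 →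
    0 < ρ → (∀ x ∈ closedBall (0 : En n) ρ, |peval h x| ≤ S) → |coeff d h| ≤ K * S / ρ ^ m := by
  induction m with
  | zero =>
    refine ⟨1, one_pos, fun d hd h ρ S _ hρ hS => ?_⟩
    obtain rfl : d = 0 := (Finsupp.degree_eq_zero_iff d).1 hd
    simpa [peval_zero_right] using hS 0 (mem_closedBall_self hρ.le)
  | succ m ih =>
    obtain ⟨K, hK, ih⟩ := ih
    have hn := dim_pos (n := n)
    refine ⟨K * n * 2 ^ (m + 1), by positivity, fun d hd h ρ S hh hρ hS => ?_⟩
    obtain ⟨j, hj⟩ : ∃ j, d j ≠ 0 := by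
      by_contra! hzero
      obtain rfl : d = 0 := Finsupp.ext hzero
      simp at hd
    obtain ⟨d, rfl⟩ : ∃ d', d = d' + Finsupp.single j 1 :=
      ⟨d - Finsupp.single j 1, (tsub_add_cancel_of_le (Finsupp.single_le_iff.2 (by lia))).symm⟩
    have hle := ih d (by simpa using hd) (pderiv j h) (ρ / 2) (n * S / (ρ / 2))
      (by rw [plap_pderiv, hh, map_zero]) (by positivity) (abs_peval_pderiv_le_on_half hh hρ hS j)
    rw [coeff_pderiv, abs_mul] at hle
    have hone : (1 : ℝ) ≤ |(d j : ℝ) + 1| := by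
      rw [abs_of_nonneg (by positivity)]
      exact le_add_of_nonneg_left (by positivity)
    calc |coeff (d + Finsupp.single j 1) h|
        ≤ |coeff (d + Finsupp.single j 1) h| * |(d j : ℝ) + 1| :=
          le_mul_of_one_le_right (abs_nonneg _) hone
      _ ≤ K * (n * S / (ρ / 2)) / (ρ / 2) ^ m := hle
      _ = K * n * 2 ^ (m + 1) * S / ρ ^ (m + 1) := by rw [div_pow]; field_simp; ring

theorem exists_abs_peval_le_of_coeff_eq_zero (m : ℕ) : ∃ K : ℝ, 0 < K ∧
    ∀ (h : MvPolynomial (Fin n) ℝ) (ρ S : ℝ), plap h = 0 → 0 < ρ →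
    (∀ d : Fin n →₀ ℕ, d.degree < m → coeff d h = 0) →
    (∀ x ∈ closedBall (0 : En n) ρ, |peval h x| ≤ S) →
    ∀ x ∈ closedBall (0 : En n) ρ, |peval h x| ≤ K * S * (‖x‖ / ρ) ^ m := by
  induction m with
  | zero => exact ⟨1, one_pos, fun h ρ S _ _ _ hS x hx => by simpa using hS x hx⟩
  | succ m ih =>
    obtain ⟨K, hK, ih⟩ := ih
    have hn := dim_pos (n := n)
    refine ⟨max (K * n * (2 * n) * 2 ^ m) (2 ^ (m + 1)), by positivity,
      fun h ρ S hh hρ hzero hS x hx => ?_⟩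
    have hS0 : 0 ≤ S := (abs_nonneg _).trans (hS 0 (mem_closedBall_self hρ.le))
    rcases le_or_gt ‖x‖ (ρ / 2) with hnear | hfar
    · have hderiv : ∀ y ∈ closedBall (0 : En n) ‖x‖, ∀ i, |peval (pderiv i h) y| ≤
          K * (n * S / (ρ / 2)) * (‖x‖ / (ρ / 2)) ^ m := by
        intro y hy i
        rw [mem_closedBall_zero_iff] at hy
        refine (ih (pderiv i h) (ρ / 2) (n * S / (ρ / 2)) (by rw [plap_pderiv, hh, map_zero])
          (by positivity) (fun d hd => ?_) (abs_peval_pderiv_le_on_half hh hρ hS i) y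
          (mem_closedBall_zero_iff.2 (hy.trans hnear))).trans (by gcongr)
        rw [coeff_pderiv, hzero _ (by simpa using hd), zero_mul]
      calc |peval h x| ≤ n * (K * (n * S / (ρ / 2)) * (‖x‖ / (ρ / 2)) ^ m) * ‖x‖ :=
            abs_peval_le_of_abs_pderiv_le (hzero 0 (by simp)) hderiv
        _ = K * n * (2 * n) * 2 ^ m * S * (‖x‖ / ρ) ^ (m + 1) := by
            rw [div_pow, div_pow, div_pow]; field_simp; ring
        _ ≤ _ := by gcongr; exact le_max_left _ _
    · have hone : 1 ≤ 2 ^ (m + 1) * (‖x‖ / ρ) ^ (m + 1) := by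
        rw [← mul_pow]
        refine one_le_pow₀ ?_
        rw [mul_div_assoc', le_div_iff₀ hρ]
        linarith
      calc |peval h x| ≤ S := hS x hx
        _ ≤ S * (2 ^ (m + 1) * (‖x‖ / ρ) ^ (m + 1)) := le_mul_of_one_le_right hS0 hone
        _ = 2 ^ (m + 1) * S * (‖x‖ / ρ) ^ (m + 1) := by ring
        _ ≤ _ := by gcongr; exact le_max_right _ _

end HarmonicPolynomials

section DirichletProblemOnBalls

variable {n : ℕ}

lemma coeff_plap (P : MvPolynomial (Fin n) ℝ) (d : Fin n →₀ ℕ) :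
    coeff d (plap P) =
      ∑ i, coeff (d + Finsupp.single i 2) P * ((d i : ℝ) + 2) * ((d i : ℝ) + 1) := by
  rw [plap, coeff_sum]
  refine Finset.sum_congr rfl fun i _ => ?_
  rw [coeff_pderiv, coeff_pderiv, add_assoc, ← Finsupp.single_add]
  simp only [Finsupp.add_apply, Finsupp.single_eq_same, Nat.cast_add, Nat.cast_one]
  ring

lemma totalDegree_le_iff_coeff_eq_zero {P : MvPolynomial (Fin n) ℝ} {N : ℕ} :
    P.totalDegree ≤ N ↔ ∀ d : Fin n →₀ ℕ, N < d.degree → coeff d P = 0 := by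
  refine ⟨fun h d hd => coeff_eq_zero_of_totalDegree_lt (h.trans_lt hd), fun h => ?_⟩
  refine Finset.sup_le fun d hd => ?_
  by_contra! hlt
  exact mem_support_iff.1 hd (h d hlt)

lemma totalDegree_plap_le {P : MvPolynomial (Fin n) ℝ} {N : ℕ} (h : P.totalDegree ≤ N + 2) :
    (plap P).totalDegree ≤ N := by
  rw [totalDegree_le_iff_coeff_eq_zero] at h ⊢
  intro d hd
  rw [coeff_plap]
  refine Finset.sum_eq_zero fun i _ => ?_
  rw [h _ (by simpa using hd), zero_mul, zero_mul]

lemma totalDegree_distSq_le (c : En n) : (distSq c).totalDegree ≤ 2 := by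
  refine (totalDegree_finsetSum _ _).trans (Finset.sup_le fun i _ => ?_)
  have : (X i - C (c i) : MvPolynomial (Fin n) ℝ).totalDegree ≤ 1 :=
    (totalDegree_sub _ _).trans (by simp)
  exact (totalDegree_pow _ _).trans (mul_le_mul_right this 2)

lemma eq_zero_of_peval_eq_zero_on_open {P : MvPolynomial (Fin n) ℝ} {U : Set (En n)}
    (hU : IsOpen U) (hne : U.Nonempty) (h : ∀ x ∈ U, peval P x = 0) : P = 0 := by
  obtain ⟨x₀, hx₀⟩ := hne
  have hV : IsOpen ((WithLp.toLp 2 : (Fin n → ℝ) → En n) ⁻¹' U) :=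
    hU.preimage (PiLp.continuous_toLp 2 (fun _ : Fin n => ℝ))
  obtain ⟨ε, hε, hball⟩ := Metric.isOpen_iff.1 hV (fun i => x₀ i) hx₀
  rw [ball_pi _ hε] at hball
  refine MvPolynomial.funext_set (fun i => ball (x₀ i) ε) (fun i => ?_) (fun y hy => ?_)
  · rw [Real.ball_eq_Ioo]
    exact Ioo_infinite (by linarith)
  · simpa [peval] using h _ (hball hy)

/-- The polynomial Laplacian as a linear map. -/
noncomputable def plapLinear (n : ℕ) : MvPolynomial (Fin n) ℝ →ₗ[ℝ] MvPolynomial (Fin n) ℝ where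
  toFun := plap
  map_add' := plap_add
  map_smul' c P := by rw [smul_eq_C_mul, plap_C_mul, smul_eq_C_mul, RingHom.id_apply]

lemma exists_peval_close_on_sphere {R : ℝ} {φ : sphere (0 : En n) R → ℝ} (hφ : Continuous φ)
    {ε : ℝ} (hε : 0 < ε) :
    ∃ p : MvPolynomial (Fin n) ℝ, ∀ x : sphere (0 : En n) R, |peval p x - φ x| < ε := by
  let restrict : MvPolynomial (Fin n) ℝ →ₐ[ℝ] C(sphere (0 : En n) R, ℝ) :=
    aeval fun i => ⟨fun x => x.1 i, by fun_prop⟩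
  have hrestrict (P : MvPolynomial (Fin n) ℝ) (x) : restrict P x = peval P x := by
    induction P using MvPolynomial.induction_on with
    | C a => simp [restrict]
    | add p q hp hq => rw [map_add, ContinuousMap.add_apply, hp, hq, peval_add]
    | mul_X p i hp => simp [hp, restrict]
  have hsep : restrict.range.SeparatesPoints := by
    intro x y hxy
    obtain ⟨i, hi⟩ : ∃ i, x.1 i ≠ y.1 i := by
      by_contra! heq
      exact hxy (Subtype.ext (PiLp.ext heq))
    refine ⟨restrict (X i), ⟨restrict (X i), ⟨X i, rfl⟩, rfl⟩, ?_⟩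
    rwa [hrestrict, hrestrict, peval_X, peval_X]
  obtain ⟨⟨_, p, rfl⟩, hp⟩ :=
    ContinuousMap.exists_mem_subalgebra_near_continuous_of_separatesPoints restrict.range hsep φ hφ
      ε hε
  exact ⟨p, fun x => by rw [← hrestrict]; exact hp x⟩

variable [NeZero n]

lemma eq_zero_of_plap_eq_zero_of_sphere {h : MvPolynomial (Fin n) ℝ} {R : ℝ} (hR : 0 < R)
    (hh : plap h = 0) (hzero : ∀ x : En n, ‖x‖ = R → peval h x = 0) : h = 0 := by
  refine eq_zero_of_peval_eq_zero_on_open isOpen_ball ⟨0, mem_ball_self hR⟩ fun x hx => ?_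
  have hle := abs_le_peval_of_abs_lapAt_le isOpen_ball isBounded_ball 0
    (continuous_peval h).continuousOn (fun x _ => twiceDifferentiableAt_peval h x)
    (fun x _ => by simp [lapAt_peval, hh])
    (fun x hx => by
      rw [frontier_ball _ hR.ne'] at hx
      simp [hzero x (by simpa using hx)]) x hx
  simpa using hle

-- The map `q ↦ Δ((R² - |x|²) q)` is injective on the polynomials of degree `≤ N` by the maximum
-- principle, hence bijective, and `p - (R² - |x|²) q` is the solution when `q` is sent to `Δp`.
theorem exists_plap_eq_zero_eq_on_sphere {R : ℝ} (hR : 0 < R) (p : MvPolynomial (Fin n) ℝ) :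
    ∃ h : MvPolynomial (Fin n) ℝ, plap h = 0 ∧
      ∀ x : En n, ‖x‖ = R → peval h x = peval p x := by
  set N := p.totalDegree
  set g : MvPolynomial (Fin n) ℝ := C (R ^ 2) - distSq 0 with hg
  have hge (x : En n) : peval g x = R ^ 2 - ‖x‖ ^ 2 := by simp [hg]
  have hg0 : g ≠ 0 := by
    intro h0
    exact (pow_pos hR 2).ne (by simpa [h0] using hge 0)
  have hgdeg : g.totalDegree ≤ 2 :=
    (totalDegree_sub _ _).trans (max_le (by rw [totalDegree_C]; lia) (totalDegree_distSq_le 0))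
  have hmaps : ∀ q ∈ restrictTotalDegree (Fin n) ℝ N,
      (plapLinear n ∘ₗ LinearMap.mulLeft ℝ g) q ∈ restrictTotalDegree (Fin n) ℝ N := by
    intro q hq
    rw [mem_restrictTotalDegree] at hq ⊢
    exact totalDegree_plap_le ((totalDegree_mul _ _).trans (by lia))
  set T := (plapLinear n ∘ₗ LinearMap.mulLeft ℝ g).restrict hmaps
  have hinj : Function.Injective T := by
    rw [← LinearMap.ker_eq_bot, LinearMap.ker_eq_bot']
    intro q hq
    have hharm : plap (g * q.1) = 0 := congrArg Subtype.val hq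
    have hzero := eq_zero_of_plap_eq_zero_of_sphere hR hharm
      fun x hx => by rw [peval_mul, hge, hx, sub_self, zero_mul]
    exact Subtype.ext ((mul_eq_zero.1 hzero).resolve_left hg0)
  obtain ⟨q, hq⟩ := LinearMap.injective_iff_surjective.1 hinj
    ⟨plap p, (mem_restrictTotalDegree ..).2 (totalDegree_plap_le (by lia))⟩
  have hlap : plap (g * q.1) = plap p := congrArg Subtype.val hq
  refine ⟨p - g * q.1, by rw [plap_sub, hlap, sub_self], fun x hx => ?_⟩
  rw [peval_sub, peval_mul, hge, hx, sub_self, zero_mul, sub_zero]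

theorem exists_plap_eq_zero_close_on_sphere {R : ℝ} (hR : 0 < R) {φ : sphere (0 : En n) R → ℝ}
    (hφ : Continuous φ) {ε : ℝ} (hε : 0 < ε) :
    ∃ h : MvPolynomial (Fin n) ℝ, plap h = 0 ∧
      ∀ x : sphere (0 : En n) R, |peval h x - φ x| < ε := by
  obtain ⟨p, hp⟩ := exists_peval_close_on_sphere hφ hε
  obtain ⟨h, hh, heq⟩ := exists_plap_eq_zero_eq_on_sphere hR p
  exact ⟨h, hh, fun x => by rw [heq x (by simp)]; exact hp x⟩

end DirichletProblemOnBalls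

section FlatBoundary

variable {n : ℕ}

lemma of_mem_frontier_inter_ball {Ω : Set (En n)} (hΩ : IsOpen Ω) {c x : En n} {ρ : ℝ}
    (hx : x ∈ frontier (Ω ∩ ball c ρ)) :
    ‖x - c‖ ≤ ρ ∧ (x ∈ frontier Ω ∨ x ∈ Ω ∧ ‖x - c‖ = ρ) := by
  rw [(hΩ.inter isOpen_ball).frontier_eq] at hx
  have hcl : x ∈ closure Ω := closure_mono inter_subset_left hx.1
  have hle : ‖x - c‖ ≤ ρ := mem_closedBall_iff_norm.1 <|
    closure_minimal (inter_subset_right.trans ball_subset_closedBall) isClosed_closedBall hx.1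
  refine ⟨hle, ?_⟩
  by_cases hxΩ : x ∈ Ω
  · refine Or.inr ⟨hxΩ, hle.antisymm ?_⟩
    by_contra! hlt
    exact hx.2 ⟨hxΩ, mem_ball_iff_norm.2 hlt⟩
  · exact Or.inl (hΩ.frontier_eq ▸ ⟨hcl, hxΩ⟩)

variable [NeZero n]

lemma continuous_xn : Continuous (xn : En n → ℝ) := by unfold xn; fun_prop

/-- In the ball `B_r`, the boundary of `Ω` lies in the slab `|x_n| ≤ δ r`, and `v` satisfies
`|Δv| ≤ a` and `|v| ≤ S` in `Ω` and `|v| ≤ b` on `∂Ω`. -/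
structure FlatDirichletBound (Ω : Set (En n)) (v : En n → ℝ) (r δ S a b : ℝ) : Prop where
  radius_pos : 0 < r
  flatness_pos : 0 < δ
  sup_nonneg : 0 ≤ S
  lap_nonneg : 0 ≤ a
  boundary_nonneg : 0 ≤ b
  isOpen : IsOpen Ω
  continuousOn : ContinuousOn v (closure Ω ∩ ball 0 r)
  twiceDifferentiableAt : ∀ x ∈ Ω ∩ ball 0 r, TwiceDifferentiableAt v x
  abs_lapAt_le : ∀ x ∈ Ω ∩ ball 0 r, |lapAt v x| ≤ a
  abs_le_sup : ∀ x ∈ Ω ∩ ball 0 r, |v x| ≤ S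
  abs_le_of_mem_frontier : ∀ x ∈ frontier Ω ∩ ball 0 r, |v x| ≤ b
  mem_of_lt : ∀ x ∈ ball (0 : En n) r, δ * r < xn x → x ∈ Ω
  notMem_of_lt : ∀ x ∈ ball (0 : En n) r, xn x < -(δ * r) → x ∉ Ω

/-- The Lipschitz constant, at the boundary of `Ω`, of the functions satisfying
`FlatDirichletBound Ω v r δ S a b`. -/
noncomputable def boundarySlope (n : ℕ) (r S a : ℝ) : ℝ := 4 * n * S / r + a * r

namespace FlatDirichletBound

variable {Ω : Set (En n)} {v : En n → ℝ} {r δ S a b : ℝ}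

lemma boundarySlope_nonneg (H : FlatDirichletBound Ω v r δ S a b) :
    0 ≤ boundarySlope n r S a := by
  have := H.radius_pos
  have := H.sup_nonneg
  have := H.lap_nonneg
  unfold boundarySlope
  positivity

lemma neg_le_xn (H : FlatDirichletBound Ω v r δ S a b) {x : En n} (hx : x ∈ closure Ω)
    (hxr : x ∈ ball (0 : En n) r) : -(δ * r) ≤ xn x := by
  by_contra! hlt
  have hU : IsOpen (ball (0 : En n) r ∩ {y | xn y < -(δ * r)}) :=
    isOpen_ball.inter (isOpen_lt continuous_xn continuous_const)
  obtain ⟨y, hy, hyΩ⟩ := mem_closure_iff.1 hx _ hU ⟨hxr, hlt⟩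
  exact H.notMem_of_lt y hy.1 hy.2 hyΩ

lemma xn_le_of_mem_frontier (H : FlatDirichletBound Ω v r δ S a b) {x : En n}
    (hx : x ∈ frontier Ω) (hxr : x ∈ ball (0 : En n) r) : xn x ≤ δ * r := by
  by_contra! hlt
  rw [H.isOpen.frontier_eq] at hx
  exact hx.2 (H.mem_of_lt x hxr hlt)

lemma abs_le_barrier (H : FlatDirichletBound Ω v r δ S a b) {c : En n} {ρ : ℝ} (hρ : 0 < ρ)
    (hc : xn c = -(δ * r)) (hcr : closedBall c ρ ⊆ ball 0 r) {y : En n} (hy : y ∈ Ω ∩ ball c ρ) :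
    |v y| ≤ b + S / ρ ^ 2 * ‖y - c‖ ^ 2 +
      (S * n / ρ ^ 2 + a / 2) * ((xn y + δ * r) * (ρ - (xn y + δ * r))) := by
  have hS := H.sup_nonneg
  have ha := H.lap_nonneg
  have hb := H.boundary_nonneg
  have hc' : c (lastIdx n) = -(δ * r) := hc
  set q := S * n / ρ ^ 2 + a / 2 with hq
  have : 0 ≤ q := by positivity
  set Q := quadBarrier (lastIdx n) c (-(δ * r)) b (S / ρ ^ 2) (q * ρ) (-q) with hQ
  have hQe (x : En n) : peval Q x = b + S / ρ ^ 2 * ‖x - c‖ ^ 2 +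
      q * ((xn x + δ * r) * (ρ - (xn x + δ * r))) := by
    rw [hQ, peval_quadBarrier, xn]; ring
  have hQlap (x : En n) : peval (plap Q) x = -a := by
    rw [hQ, plap_quadBarrier, peval_C, hq]; ring
  have hclosure : closure (Ω ∩ ball c ρ) ⊆ closure Ω ∩ ball 0 r := fun x hx =>
    ⟨closure_mono inter_subset_left hx, hcr <|
      closure_minimal (inter_subset_right.trans ball_subset_closedBall) isClosed_closedBall hx⟩
  have hsub : Ω ∩ ball c ρ ⊆ Ω ∩ ball 0 r :=
    inter_subset_inter_right _ (ball_subset_closedBall.trans hcr)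
  rw [← hQe]
  refine abs_le_peval_of_abs_lapAt_le (H.isOpen.inter isOpen_ball)
    (isBounded_ball.subset inter_subset_right) Q (H.continuousOn.mono hclosure)
    (fun x hx => H.twiceDifferentiableAt x (hsub hx))
    (fun x hx => by rw [hQlap, neg_neg]; exact H.abs_lapAt_le x (hsub hx)) (fun x hx => ?_) y hy
  obtain ⟨hxc, hcases⟩ := of_mem_frontier_inter_ball H.isOpen hx
  obtain ⟨hxcl, hxr⟩ := hclosure (frontier_subset_closure hx)
  have hlow : 0 ≤ xn x + δ * r := by linarith [H.neg_le_xn hxcl hxr]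
  have hupp : 0 ≤ ρ - (xn x + δ * r) := by
    have := (le_abs_self _).trans ((abs_apply_le_norm (x - c) (lastIdx n)).trans hxc)
    rw [PiLp.sub_apply, hc'] at this
    rw [xn]; linarith
  have hslab : 0 ≤ q * ((xn x + δ * r) * (ρ - (xn x + δ * r))) := by positivity
  rw [hQe]
  rcases hcases with hfr | ⟨hxΩ, hsphere⟩
  · have : 0 ≤ S / ρ ^ 2 * ‖x - c‖ ^ 2 := by positivity
    linarith [H.abs_le_of_mem_frontier x ⟨hfr, hxr⟩]
  · rw [hsphere, div_mul_cancel₀ _ (by positivity)]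
    linarith [H.abs_le_sup x ⟨hxΩ, hxr⟩]

theorem abs_le_linear (H : FlatDirichletBound Ω v r δ S a b) {y : En n} (hy : y ∈ Ω)
    (hyr : ‖y‖ ≤ r / 2) :
    |v y| ≤ b + boundarySlope n r S a * (xn y + δ * r) := by
  have hr := H.radius_pos
  have hS := H.sup_nonneg
  have ha := H.lap_nonneg
  have hb := H.boundary_nonneg
  rw [boundarySlope]
  have hn := one_le_dim (n := n)
  have hyb : y ∈ ball (0 : En n) r := mem_ball_zero_iff.2 (by linarith)
  have hτ : 0 ≤ xn y + δ * r := by linarith [H.neg_le_xn (subset_closure hy) hyb]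
  set τ := xn y + δ * r with hτdef
  rcases le_or_gt (r / 4) τ with hfar | hnear
  · have hSτ : S ≤ 4 * n * S / r * τ :=
      calc S = 4 * 1 * S / r * (r / 4) := by field_simp
        _ ≤ 4 * n * S / r * τ := by gcongr
    nlinarith [H.abs_le_sup y ⟨hy, hyb⟩, mul_nonneg (mul_nonneg ha hr.le) hτ]
  · set e : En n := EuclideanSpace.single (lastIdx n) 1
    set c : En n := y - τ • e with hcdef
    have hyc : ‖y - c‖ = τ := by simp [hcdef, e, norm_smul, abs_of_nonneg hτ]
    have hc : xn c = -(δ * r) := by simp [hcdef, e, xn, hτdef]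
    have hcr : closedBall c (r / 4) ⊆ ball 0 r := by
      refine closedBall_subset_ball' ?_
      have : ‖c‖ ≤ ‖y‖ + ‖y - c‖ := by
        simpa [norm_sub_rev] using norm_sub_le y (y - c)
      rw [dist_zero_right]; linarith
    have hle := H.abs_le_barrier (by positivity) hc hcr
      ⟨hy, mem_ball_iff_norm.2 (hyc ▸ hnear)⟩
    rw [hyc, ← hτdef] at hle
    have hslope : (S * n / (r / 4) ^ 2 + a / 2) * (r / 4) = 4 * n * S / r + a * r / 8 := by
      field_simp; ring
    have hquad : S / (r / 4) ^ 2 * τ ^ 2 ≤ (S * n / (r / 4) ^ 2 + a / 2) * τ ^ 2 := by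
      gcongr
      have : S / (r / 4) ^ 2 ≤ S * n / (r / 4) ^ 2 := by gcongr; exact le_mul_of_one_le_right hS hn
      linarith
    have har : 0 ≤ a * r * τ := by positivity
    nlinarith

end FlatDirichletBound

end FlatBoundary

section OddHarmonicApproximation

variable {n : ℕ}

/-- Soft thresholding at level `t`: moves `s` by `t` towards `0`, stopping at `0`. -/
def softThreshold (t s : ℝ) : ℝ := max (s - t) 0 - max (-s - t) 0

lemma continuous_softThreshold (t : ℝ) : Continuous (softThreshold t) := by
  unfold softThreshold; fun_prop

lemma abs_softThreshold_sub_le {t : ℝ} (ht : 0 ≤ t) (s : ℝ) : |softThreshold t s - s| ≤ t := by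
  unfold softThreshold
  rcases max_cases (s - t) 0 with ⟨h₁, _⟩ | ⟨h₁, _⟩ <;>
  rcases max_cases (-s - t) 0 with ⟨h₂, _⟩ | ⟨h₂, _⟩ <;>
  rw [h₁, h₂, abs_le] <;> constructor <;> linarith [ht]

lemma abs_softThreshold_le {t s c : ℝ} (ht : 0 ≤ t) (hc : 0 ≤ c) (h : |s| ≤ c + t) :
    |softThreshold t s| ≤ c := by
  unfold softThreshold
  rw [abs_le] at h
  rcases max_cases (s - t) 0 with ⟨h₁, _⟩ | ⟨h₁, _⟩ <;>
  rcases max_cases (-s - t) 0 with ⟨h₂, _⟩ | ⟨h₂, _⟩ <;>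
  rw [h₁, h₂, abs_le] <;> constructor <;> linarith [ht, hc]

lemma norm_reflectCoord_zero (j : Fin n) (x : En n) : ‖reflectCoord j 0 x‖ = ‖x‖ := by
  simpa using norm_reflectCoord_sub j 0 x

lemma reflectCoord_zero_apply_self (j : Fin n) (x : En n) : reflectCoord j 0 x j = -x j := by
  simp [reflectCoord]

lemma coeff_reflectPoly_zero (j : Fin n) (P : MvPolynomial (Fin n) ℝ) (d : Fin n →₀ ℕ) :
    coeff d (reflectPoly j 0 P) = (-1) ^ d j * coeff d P := by
  induction P using MvPolynomial.induction_on generalizing d with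
  | C c =>
    rw [reflectPoly, algHom_C, algebraMap_eq, coeff_C]
    split_ifs with hd
    · simp [← hd]
    · simp
  | add p q hp hq => rw [map_add, coeff_add, coeff_add, hp, hq]; ring
  | mul_X p k hp =>
    rw [map_mul, show reflectPoly j 0 (X k) = if k = j then -X k else X k by
      unfold reflectPoly; rw [aeval_X]; split_ifs with hk <;> simp [hk]]
    split_ifs with hk
    · subst hk
      simp only [mul_neg, coeff_neg, coeff_mul_X', hp]
      split_ifs with hd
      · obtain ⟨m, hm⟩ := Nat.exists_eq_succ_of_ne_zero (Finsupp.mem_support_iff.1 hd)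
        simp [hm, pow_succ]
      · simp
    · simp only [coeff_mul_X', hp]
      split_ifs <;> simp [hk]

variable [NeZero n]

/-- `P` is odd in the variable `x_n`. -/
def OddInLast (P : MvPolynomial (Fin n) ℝ) : Prop :=
  ∀ d : Fin n →₀ ℕ, Even (d (lastIdx n)) → coeff d P = 0

lemma OddInLast.peval_reflectCoord {P : MvPolynomial (Fin n) ℝ} (hP : OddInLast P) (x : En n) :
    peval P (reflectCoord (lastIdx n) 0 x) = -peval P x := by
  have hneg : reflectPoly (lastIdx n) 0 P = -P := by
    ext d
    rw [coeff_reflectPoly_zero, coeff_neg]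
    rcases Nat.even_or_odd (d (lastIdx n)) with hd | hd
    · rw [hP d hd, mul_zero, neg_zero]
    · rw [hd.neg_one_pow, neg_one_mul]
  rw [← peval_reflectPoly, hneg, peval_neg]

lemma OddInLast.peval_eq_zero {P : MvPolynomial (Fin n) ℝ} (hP : OddInLast P) {x : En n}
    (hx : xn x = 0) : peval P x = 0 := by
  have := hP.peval_reflectCoord x
  rw [reflectCoord_eq_self hx] at this
  linarith

lemma xn_reflectCoord (x : En n) : xn (reflectCoord (lastIdx n) 0 x) = -xn x :=
  reflectCoord_zero_apply_self _ _

lemma exists_oddInLast_close_on_hemisphere {R : ℝ} (hR : 0 < R) {φ : En n → ℝ}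
    (hφ : Continuous fun x : sphere (0 : En n) R => φ x) (hφ0 : ∀ x, xn x ≤ 0 → φ x = 0) {ε : ℝ}
    (hε : 0 < ε) :
    ∃ h : MvPolynomial (Fin n) ℝ, plap h = 0 ∧ OddInLast h ∧
      ∀ x : En n, ‖x‖ = R → 0 ≤ xn x → |peval h x - φ x| ≤ 2 * ε := by
  obtain ⟨p, hp, hclose⟩ := exists_plap_eq_zero_close_on_sphere hR hφ hε
  refine ⟨p - reflectPoly (lastIdx n) 0 p, by rw [plap_sub, plap_reflectPoly, hp, map_zero,
    sub_zero], fun d hd => ?_, fun x hx hxn => ?_⟩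
  · rw [coeff_sub, coeff_reflectPoly_zero, hd.neg_one_pow, one_mul, sub_self]
  · have hup := hclose ⟨x, by simpa using hx⟩
    have hdown := hclose ⟨reflectCoord (lastIdx n) 0 x, by simpa [norm_reflectCoord_zero] using hx⟩
    simp only [hφ0 (reflectCoord (lastIdx n) 0 x) (by rw [xn_reflectCoord]; linarith),
      sub_zero] at hdown
    rw [peval_sub, peval_reflectPoly]
    rw [abs_lt] at hup hdown
    exact abs_le.2 ⟨by linarith, by linarith⟩

lemma OddInLast.abs_peval_le_of_hemisphere {h : MvPolynomial (Fin n) ℝ} (hodd : OddInLast h)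
    (hh : plap h = 0) {R L e : ℝ} (hL : 0 ≤ L) (he : 0 ≤ e)
    (hsphere : ∀ x : En n, ‖x‖ = R → 0 ≤ xn x → |peval h x| ≤ L * xn x + e) {x : En n}
    (hx : ‖x‖ ≤ R) : |peval h x| ≤ L * |xn x| + e := by
  wlog hxn : 0 ≤ xn x generalizing x
  · have := this (x := reflectCoord (lastIdx n) 0 x) (by rwa [norm_reflectCoord_zero])
      (by rw [xn_reflectCoord]; linarith)
    rwa [hodd.peval_reflectCoord, xn_reflectCoord, abs_neg, abs_neg] at this
  rw [abs_of_nonneg hxn]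
  rcases hx.eq_or_lt with hx | hx
  · exact hsphere x hx hxn
  rcases hxn.eq_or_lt with hxn | hxn
  · rw [hodd.peval_eq_zero hxn.symm, ← hxn]
    simpa using he
  set Q := quadBarrier (lastIdx n) (0 : En n) 0 e 0 L 0 with hQ
  have hQe (x : En n) : peval Q x = L * xn x + e := by
    rw [hQ, peval_quadBarrier, xn]; ring
  rw [← hQe]
  refine abs_le_peval_of_abs_lapAt_le (isOpen_upperHalfBall (lastIdx n) 0 R)
    (isBounded_upperHalfBall _ _ _) Q (continuous_peval h).continuousOn
    (fun x _ => twiceDifferentiableAt_peval h x) (fun y _ => ?_) (fun y hy => ?_) x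
    ⟨by simpa using hx, hxn⟩
  · rw [lapAt_peval, hh, hQ, plap_quadBarrier]; simp
  · obtain ⟨-, hcoord, hcases⟩ := of_mem_frontier_upperHalfBall hy
    have hyn : 0 ≤ xn y := hcoord
    rw [hQe]
    rcases hcases with hsph | hplane
    · exact hsphere y (by simpa using hsph) hyn
    · rw [hodd.peval_eq_zero hplane, abs_zero]
      positivity

/-- The function `v` with its values near and below the hyperplane `x_n = 0` replaced by `0`;
the thresholding at level `t` removes the jump on `x_n = σ`. -/
noncomputable def slabCutoff (v : En n → ℝ) (σ t : ℝ) (x : En n) : ℝ :=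
  if xn x ≤ σ then 0 else softThreshold t (v x)

namespace FlatDirichletBound

variable {Ω : Set (En n)} {v : En n → ℝ} {r δ S a b : ℝ}

lemma continuousAt (H : FlatDirichletBound Ω v r δ S a b) {x : En n} (hx : x ∈ Ω ∩ ball 0 r) :
    ContinuousAt v x :=
  (H.twiceDifferentiableAt x hx).continuousAt

lemma abs_sub_peval_le_of_frontier (H : FlatDirichletBound Ω v r δ S a b)
    {h : MvPolynomial (Fin n) ℝ} (hh : plap h = 0) {T : ℝ}
    (hT : ∀ x ∈ frontier (Ω ∩ ball 0 (r / 2)), |v x - peval h x| ≤ T) :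
    ∀ x ∈ Ω ∩ ball 0 (r / 2), |v x - peval h x| ≤ T + a * r ^ 2 := by
  have hn := one_le_dim (n := n)
  have hr := H.radius_pos
  have ha := H.lap_nonneg
  have hsub : ball (0 : En n) (r / 2) ⊆ ball 0 r := ball_subset_ball (by linarith)
  have hclosure : closure (Ω ∩ ball 0 (r / 2)) ⊆ closure Ω ∩ ball 0 r := fun x hx =>
    ⟨closure_mono inter_subset_left hx, closedBall_subset_ball (by linarith) <|
      closure_minimal (inter_subset_right.trans ball_subset_closedBall) isClosed_closedBall hx⟩
  set c := a / (2 * n) with hc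
  have hc0 : 0 ≤ c := by positivity
  have hca : c ≤ a := div_le_self ha (by linarith)
  set Q := quadBarrier (lastIdx n) (0 : En n) 0 (T + c * (r / 2) ^ 2) (-c) 0 0 with hQ
  have hQe (x : En n) : peval Q x = T + c * ((r / 2) ^ 2 - ‖x‖ ^ 2) := by
    rw [hQ, peval_quadBarrier, sub_zero x]; ring
  intro x hx
  calc |v x - peval h x| ≤ peval Q x := by
        refine abs_le_peval_of_abs_lapAt_le (w := v - peval h) (H.isOpen.inter isOpen_ball)
          (isBounded_ball.subset inter_subset_right) Q
          ((H.continuousOn.mono hclosure).sub (continuous_peval h).continuousOn)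
          (fun y hy => (H.twiceDifferentiableAt y ⟨hy.1, hsub hy.2⟩).sub
            (twiceDifferentiableAt_peval h y)) (fun y hy => ?_) (fun y hy => ?_) x hx
        · rw [(H.twiceDifferentiableAt y ⟨hy.1, hsub hy.2⟩).lapAt_sub
            (twiceDifferentiableAt_peval h y), lapAt_peval, hh, peval_zero, sub_zero, hQ,
            plap_quadBarrier, peval_C]
          refine (H.abs_lapAt_le y ⟨hy.1, hsub hy.2⟩).trans_eq ?_
          rw [hc]; field_simp; ring
        · have hy2 := (of_mem_frontier_inter_ball H.isOpen hy).1
          rw [sub_zero] at hy2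
          have : 0 ≤ c * ((r / 2) ^ 2 - ‖y‖ ^ 2) := mul_nonneg hc0 (sub_nonneg.2 (by gcongr))
          rw [hQe]
          exact (hT y hy).trans (by linarith)
    _ ≤ T + a * r ^ 2 := by
        rw [hQe]
        have hrad : (r / 2) ^ 2 - ‖x‖ ^ 2 ≤ r ^ 2 := by nlinarith [sq_nonneg ‖x‖]
        linarith [mul_le_mul_of_nonneg_left hrad hc0, mul_le_mul_of_nonneg_right hca (sq_nonneg r)]

variable (n r δ S a b) in
/-- The accuracy, up to `a r²`, of the odd harmonic approximation of `v`. -/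
noncomputable def thresholdLevel : ℝ := b + 3 * (boundarySlope n r S a * (δ * r))

lemma thresholdLevel_nonneg (H : FlatDirichletBound Ω v r δ S a b) :
    0 ≤ thresholdLevel n r δ S a b := by
  have := H.radius_pos
  have := H.flatness_pos
  have := H.boundary_nonneg
  have := H.boundarySlope_nonneg
  unfold thresholdLevel
  positivity

lemma continuous_slabCutoff (H : FlatDirichletBound Ω v r δ S a b) :
    Continuous fun x : sphere (0 : En n) (r / 2) =>
      slabCutoff v (2 * (δ * r)) (thresholdLevel n r δ S a b) x := by
  have hδr : 0 < δ * r := mul_pos H.flatness_pos H.radius_pos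
  have ht := H.thresholdLevel_nonneg
  have hmem (x : sphere (0 : En n) (r / 2)) (hx : 2 * (δ * r) ≤ xn x.1) : x.1 ∈ Ω ∩ ball 0 r := by
    have hball : x.1 ∈ ball (0 : En n) r := sphere_subset_ball (half_lt_self H.radius_pos) x.2
    exact ⟨H.mem_of_lt x hball (by linarith), hball⟩
  refine continuous_if_le (continuous_xn.comp continuous_subtype_val) continuous_const
    continuousOn_const (fun x hx => ?_) (fun x hx => ?_)
  · refine ((continuous_softThreshold _).continuousAt.comp ?_).continuousWithinAt
    exact ContinuousAt.comp (f := Subtype.val) (H.continuousAt (hmem x hx))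
      continuous_subtype_val.continuousAt
  · have hle := H.abs_le_linear (hmem x hx.ge).1 (by simp)
    rw [hx] at hle
    refine (abs_nonpos_iff.1 (abs_softThreshold_le ht le_rfl (hle.trans_eq ?_))).symm
    rw [thresholdLevel]; ring

lemma abs_slabCutoff_le (H : FlatDirichletBound Ω v r δ S a b) {x : En n} (hx : ‖x‖ ≤ r / 2)
    (hxn : 0 ≤ xn x) :
    |slabCutoff v (2 * (δ * r)) (thresholdLevel n r δ S a b) x| ≤
      boundarySlope n r S a * xn x := by
  have hδr : 0 < δ * r := mul_pos H.flatness_pos H.radius_pos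
  have hL := H.boundarySlope_nonneg
  have ht := H.thresholdLevel_nonneg
  rw [slabCutoff]
  split_ifs with hσ
  · rw [abs_zero]; positivity
  · have hxb : x ∈ ball (0 : En n) r :=
      mem_ball_zero_iff.2 (hx.trans_lt (half_lt_self H.radius_pos))
    have hxΩ : x ∈ Ω := H.mem_of_lt x hxb (by linarith)
    refine abs_softThreshold_le ht (by positivity) ?_
    rw [thresholdLevel]
    nlinarith [H.abs_le_linear hxΩ hx, mul_nonneg hL hδr.le]

lemma abs_slabCutoff_sub_le (H : FlatDirichletBound Ω v r δ S a b) {x : En n} (hxΩ : x ∈ Ω)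
    (hx : ‖x‖ ≤ r / 2) :
    |slabCutoff v (2 * (δ * r)) (thresholdLevel n r δ S a b) x - v x| ≤
      thresholdLevel n r δ S a b := by
  have hL := H.boundarySlope_nonneg
  rw [slabCutoff]
  split_ifs with hσ
  · rw [zero_sub, abs_neg, thresholdLevel]
    nlinarith [H.abs_le_linear hxΩ hx]
  · exact abs_softThreshold_sub_le H.thresholdLevel_nonneg _

theorem exists_oddInLast_close (H : FlatDirichletBound Ω v r δ S a b) {ε : ℝ} (hε : 0 < ε) :
    ∃ h : MvPolynomial (Fin n) ℝ, plap h = 0 ∧ OddInLast h ∧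
      (∀ x : En n, ‖x‖ ≤ r / 2 → |peval h x| ≤ boundarySlope n r S a * |xn x| + 2 * ε) ∧
      ∀ x ∈ Ω ∩ ball 0 (r / 2),
        |v x - peval h x| ≤ thresholdLevel n r δ S a b + 2 * ε + a * r ^ 2 := by
  have hδr : 0 < δ * r := mul_pos H.flatness_pos H.radius_pos
  have hL := H.boundarySlope_nonneg
  set φ := slabCutoff v (2 * (δ * r)) (thresholdLevel n r δ S a b)
  obtain ⟨h, hh, hodd, hclose⟩ := exists_oddInLast_close_on_hemisphere (half_pos H.radius_pos)
    (H.continuous_slabCutoff) (fun x hx => if_pos (by linarith)) hε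
  have hlin {x : En n} (hx : ‖x‖ ≤ r / 2) :
      |peval h x| ≤ boundarySlope n r S a * |xn x| + 2 * ε :=
    hodd.abs_peval_le_of_hemisphere hh hL (by positivity) (fun y hy hyn => by
      linarith [abs_sub_abs_le_abs_sub (peval h y) (φ y), hclose y hy hyn,
        H.abs_slabCutoff_le hy.le hyn]) hx
  refine ⟨h, hh, hodd, fun x => hlin, H.abs_sub_peval_le_of_frontier hh fun x hx => ?_⟩
  obtain ⟨hxr, hcases⟩ := of_mem_frontier_inter_ball H.isOpen hx
  rw [sub_zero] at hxr hcases
  have hxb : x ∈ ball (0 : En n) r := mem_ball_zero_iff.2 (hxr.trans_lt (half_lt_self H.radius_pos))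
  have hlow := H.neg_le_xn (closure_mono inter_subset_left (frontier_subset_closure hx)) hxb
  have hslab (hup : xn x ≤ δ * r) :
      |peval h x| ≤ boundarySlope n r S a * (δ * r) + 2 * ε :=
    (hlin hxr).trans (by gcongr; exact abs_le.2 ⟨hlow, hup⟩)
  have hLδ : 0 ≤ boundarySlope n r S a * (δ * r) := by positivity
  rcases hcases with hfr | ⟨hxΩ, hsphere⟩
  · rw [thresholdLevel]
    linarith [abs_sub (v x) (peval h x), H.abs_le_of_mem_frontier x ⟨hfr, hxb⟩,
      hslab (H.xn_le_of_mem_frontier hfr hxb)]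
  rcases le_total 0 (xn x) with hxn | hxn
  · rw [abs_sub_comm]
    linarith [abs_sub_le (peval h x) (φ x) (v x), hclose x hsphere hxn,
      H.abs_slabCutoff_sub_le hxΩ hxr]
  · rw [thresholdLevel]
    nlinarith [abs_sub (v x) (peval h x), hslab (by linarith),
      H.abs_le_linear hxΩ hxr, mul_nonneg hL (neg_nonneg.2 hxn)]

end FlatDirichletBound

end OddHarmonicApproximation

section CampanatoIteration

variable {n : ℕ}

open Filter Topology

/-- The multi-indices of degree at most `m`. -/
noncomputable def multiIndices (n m : ℕ) : Finset (Fin n →₀ ℕ) :=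
  (Finsupp.finite_of_degree_le m).toFinset

lemma mem_multiIndices {m : ℕ} {d : Fin n →₀ ℕ} : d ∈ multiIndices n m ↔ d.degree ≤ m := by
  simp [multiIndices]

/-- The polynomial of degree at most `m` whose coefficients in these degrees are given by `c`. -/
noncomputable def polyOfCoeff (m : ℕ) (c : (Fin n →₀ ℕ) → ℝ) : MvPolynomial (Fin n) ℝ :=
  ∑ d ∈ multiIndices n m, monomial d (c d)

lemma coeff_polyOfCoeff (m : ℕ) (c : (Fin n →₀ ℕ) → ℝ) (d : Fin n →₀ ℕ) :
    coeff d (polyOfCoeff m c) = if d.degree ≤ m then c d else 0 := by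
  classical
  simp only [polyOfCoeff, coeff_sum, coeff_monomial, Finset.sum_ite_eq', mem_multiIndices]

lemma peval_monomial (d : Fin n →₀ ℕ) (c : ℝ) (x : En n) :
    peval (monomial d c) x = c * d.prod fun i e => x i ^ e :=
  eval_monomial

lemma abs_prod_pow_le_norm_pow (d : Fin n →₀ ℕ) (x : En n) :
    |d.prod fun i e => x i ^ e| ≤ ‖x‖ ^ d.degree := by
  rw [Finsupp.prod, Finset.abs_prod, Finsupp.degree_apply, ← Finset.prod_pow_eq_pow_sum]
  refine Finset.prod_le_prod (fun _ _ => abs_nonneg _) fun i _ => ?_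
  rw [abs_pow]
  exact pow_le_pow_left₀ (abs_nonneg _) (abs_apply_le_norm x i) _

lemma abs_peval_polyOfCoeff_le {m : ℕ} {c : (Fin n →₀ ℕ) → ℝ} {x : En n} {B R : ℝ}
    (h : ∀ d, d.degree ≤ m → |c d| * R ^ d.degree ≤ B) (hx : ‖x‖ ≤ R) :
    |peval (polyOfCoeff m c) x| ≤ (multiIndices n m).card * B := by
  rw [polyOfCoeff, peval_sum, ← nsmul_eq_mul]
  refine (Finset.abs_sum_le_sum_abs _ _).trans (Finset.sum_le_card_nsmul _ _ _ fun d hd => ?_)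
  rw [peval_monomial, abs_mul]
  refine le_trans ?_ (h d (mem_multiIndices.1 hd))
  gcongr
  exact (abs_prod_pow_le_norm_pow d x).trans (by gcongr)

lemma polyOfCoeff_coeff {m : ℕ} {P : MvPolynomial (Fin n) ℝ}
    (hP : ∀ d, m < d.degree → coeff d P = 0) : polyOfCoeff m (fun d => coeff d P) = P := by
  ext d
  rw [coeff_polyOfCoeff, ite_eq_left_iff]
  exact fun hd => (hP d (not_le.1 hd)).symm

/-- The part of `P` of degree at most `m`. -/
noncomputable def truncate (m : ℕ) (P : MvPolynomial (Fin n) ℝ) : MvPolynomial (Fin n) ℝ :=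
  polyOfCoeff m fun d => coeff d P

lemma coeff_truncate (m : ℕ) (P : MvPolynomial (Fin n) ℝ) (d : Fin n →₀ ℕ) :
    coeff d (truncate m P) = if d.degree ≤ m then coeff d P else 0 :=
  coeff_polyOfCoeff m _ d

lemma truncate_zero (m : ℕ) : truncate m (0 : MvPolynomial (Fin n) ℝ) = 0 := by
  ext d; simp [coeff_truncate]

lemma truncate_sub (m : ℕ) (P Q : MvPolynomial (Fin n) ℝ) :
    truncate m (P - Q) = truncate m P - truncate m Q := by
  ext d
  simp only [coeff_sub, coeff_truncate]
  split_ifs <;> simp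

lemma plap_truncate (m : ℕ) {P : MvPolynomial (Fin n) ℝ} (h : plap P = 0) :
    plap (truncate m P) = 0 := by
  ext d
  have hdeg (i : Fin n) : (d + Finsupp.single i 2).degree = d.degree + 2 := by
    rw [map_add, Finsupp.degree_single]
  simp only [coeff_plap, coeff_truncate, hdeg]
  split_ifs
  · rw [← coeff_plap, h]
  · simp

lemma exists_abs_coeff_le_of_degree_le (n m : ℕ) [NeZero n] :
    ∃ K > 0, ∀ (P : MvPolynomial (Fin n) ℝ) (ρ S : ℝ), plap P = 0 → 0 < ρ → 0 ≤ S →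
      (∀ x ∈ closedBall (0 : En n) ρ, |peval P x| ≤ S) →
      ∀ d, d.degree ≤ m → |coeff d P| ≤ K * S / ρ ^ d.degree := by
  choose K hK hcoeff using fun l => exists_abs_coeff_le_of_plap_eq_zero (n := n) l
  have hle {l : ℕ} (hl : l ≤ m) : K l ≤ ∑ l ∈ Finset.range (m + 1), K l :=
    Finset.single_le_sum (fun i _ => (hK i).le) (Finset.mem_range.2 (by lia))
  refine ⟨∑ l ∈ Finset.range (m + 1), K l, (hK 0).trans_le (hle m.zero_le), ?_⟩
  intro P ρ S hP hρ hS hPS d hd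
  have := hle hd
  exact (hcoeff _ d rfl P ρ S hP hρ hPS).trans (by gcongr)

lemma exists_abs_peval_sub_truncate_le (n m : ℕ) [NeZero n] :
    ∃ K > 0, ∀ (P : MvPolynomial (Fin n) ℝ) (ρ S : ℝ), plap P = 0 → 0 < ρ → 0 ≤ S →
      (∀ x ∈ closedBall (0 : En n) ρ, |peval P x| ≤ S) →
      ∀ x ∈ closedBall (0 : En n) ρ,
        |peval (P - truncate m P) x| ≤ K * S * (‖x‖ / ρ) ^ (m + 1) := by
  obtain ⟨K₁, hK₁, hcoeff⟩ := exists_abs_coeff_le_of_degree_le n m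
  obtain ⟨K₂, hK₂, htail⟩ := exists_abs_peval_le_of_coeff_eq_zero (n := n) (m + 1)
  set N : ℝ := ((multiIndices n m).card : ℝ) with hN
  refine ⟨K₂ * (1 + N * K₁), by positivity, fun P ρ S hP hρ hS hPS x hx => ?_⟩
  have htrunc {y : En n} (hy : y ∈ closedBall (0 : En n) ρ) :
      |peval (truncate m P) y| ≤ N * (K₁ * S) :=
    abs_peval_polyOfCoeff_le
      (fun d hd => (le_div_iff₀ (by positivity)).1 (hcoeff P ρ S hP hρ hS hPS d hd))
      (mem_closedBall_zero_iff.1 hy)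
  have hplap : plap (P - truncate m P) = 0 := by rw [plap_sub, hP, plap_truncate m hP, sub_zero]
  have hlow (d : Fin n →₀ ℕ) (hd : d.degree < m + 1) : coeff d (P - truncate m P) = 0 := by
    rw [coeff_sub, coeff_truncate, if_pos (by lia), sub_self]
  refine (htail _ ρ ((1 + N * K₁) * S) hplap hρ hlow (fun y hy => ?_) x hx).trans_eq (by ring)
  rw [peval_sub]
  linarith [abs_sub (peval P y) (peval (truncate m P) y), hPS y hy, htrunc hy]

lemma div_two_pow_rpow {ρ : ℝ} (hρ : 0 < ρ) (τ : ℝ) (i : ℕ) :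
    (ρ / 2 ^ i) ^ τ = ρ ^ τ * ((2 : ℝ) ^ (-τ)) ^ i := by
  rw [Real.div_rpow hρ.le (by positivity), ← Real.rpow_natCast, ← Real.rpow_natCast,
    ← Real.rpow_mul zero_le_two, ← Real.rpow_mul zero_le_two, div_eq_mul_inv,
    ← Real.rpow_neg zero_le_two]
  congr 2; ring

lemma abs_le_of_dyadic_increments {ρ τ A : ℝ} (hρ : 0 < ρ) (hτ : τ < 0) (hA : 0 ≤ A)
    {a : ℕ → ℝ} (ha : a 0 = 0) {i : ℕ}
    (h : ∀ j < i, |a (j + 1) - a j| ≤ A * (ρ / 2 ^ j) ^ τ) :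
    |a i| ≤ 2 ^ τ / (1 - 2 ^ τ) * A * (ρ / 2 ^ i) ^ τ := by
  have hq : 0 < 1 - (2 : ℝ) ^ τ := sub_pos.2 (Real.rpow_lt_one_of_one_lt_of_neg one_lt_two hτ)
  have hfix : 2 ^ τ / (1 - 2 ^ τ) * 2 ^ τ + 2 ^ τ = (2 : ℝ) ^ τ / (1 - 2 ^ τ) := by
    field_simp; ring
  induction i with
  | zero => rw [ha, abs_zero]; positivity
  | succ i ih =>
    have hhalf : (ρ / 2 ^ i) ^ τ = 2 ^ τ * (ρ / 2 ^ (i + 1)) ^ τ := by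
      rw [← Real.mul_rpow zero_le_two (by positivity), pow_succ]
      congr 1; field_simp
    have hprev := ih fun j hj => h j (by lia)
    have hstep := h i (by lia)
    rw [hhalf] at hprev hstep
    calc |a (i + 1)| ≤ |a i| + |a (i + 1) - a i| := by
          linarith [abs_sub_abs_le_abs_sub (a (i + 1)) (a i)]
      _ ≤ _ := add_le_add hprev hstep
      _ = _ := by linear_combination (A * (ρ / 2 ^ (i + 1)) ^ τ) * hfix

/-- A sequence of harmonic polynomials starting at `0`, the approximations of a function at the
dyadic scales `ρ / 2 ^ i`, with increments of order `σ` in the scale. -/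
structure DyadicHarmonicSeq (h : ℕ → MvPolynomial (Fin n) ℝ) (ρ E σ : ℝ) : Prop where
  radius_pos : 0 < ρ
  const_nonneg : 0 ≤ E
  zero : h 0 = 0
  plap_eq_zero : ∀ i, plap (h i) = 0
  abs_peval_sub_le : ∀ i, ∀ x ∈ closedBall (0 : En n) (ρ / 2 ^ i),
    |peval (h (i + 1) - h i) x| ≤ E * (ρ / 2 ^ i) ^ σ

namespace DyadicHarmonicSeq

lemma plap_sub_eq_zero {h : ℕ → MvPolynomial (Fin n) ℝ} {ρ E σ : ℝ}
    (H : DyadicHarmonicSeq h ρ E σ) (i : ℕ) : plap (h (i + 1) - h i) = 0 := by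
  rw [plap_sub, H.plap_eq_zero, H.plap_eq_zero, sub_zero]

lemma exists_tendsto_coeff (n m : ℕ) [NeZero n] {σ : ℝ} (hσ : m < σ) :
    ∃ K > 0, ∀ (h : ℕ → MvPolynomial (Fin n) ℝ) (ρ E : ℝ), DyadicHarmonicSeq h ρ E σ →
      ∀ d, d.degree ≤ m → ∃ c, Tendsto (fun i => coeff d (h i)) atTop (𝓝 c) ∧
        ∀ i, |coeff d (h i) - c| ≤ K * E * (ρ / 2 ^ i) ^ (σ - d.degree) := by
  obtain ⟨K, hK, hcoeff⟩ := exists_abs_coeff_le_of_degree_le n m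
  set q := (2 : ℝ) ^ (-(σ - m))
  have hq : q < 1 := Real.rpow_lt_one_of_one_lt_of_neg one_lt_two (by linarith)
  have : 0 < 1 - q := by linarith
  refine ⟨K / (1 - q), by positivity, fun h ρ E H d hd => ?_⟩
  have hρ := H.radius_pos
  have hE := H.const_nonneg
  have hqd : (2 : ℝ) ^ (-(σ - d.degree)) ≤ q :=
    Real.rpow_le_rpow_of_exponent_le one_le_two (by gcongr)
  have hgeom (i : ℕ) : dist (coeff d (h i)) (coeff d (h (i + 1))) ≤
      K * E * ρ ^ (σ - d.degree) * ((2 : ℝ) ^ (-(σ - d.degree))) ^ i := by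
    have hi : 0 < ρ / 2 ^ i := by positivity
    rw [dist_comm, Real.dist_eq, ← coeff_sub]
    refine (hcoeff _ _ _ (H.plap_sub_eq_zero i) hi (by positivity)
      (H.abs_peval_sub_le i) d hd).trans_eq ?_
    rw [mul_assoc _ (ρ ^ _), ← div_two_pow_rpow hρ, Real.rpow_sub hi, Real.rpow_natCast]
    ring
  obtain ⟨c, hc⟩ := cauchySeq_tendsto_of_complete
    (cauchySeq_of_le_geometric _ _ (hqd.trans_lt hq) hgeom)
  refine ⟨c, hc, fun i => ?_⟩
  calc |coeff d (h i) - c|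
      ≤ K * E * ρ ^ (σ - d.degree) * ((2 : ℝ) ^ (-(σ - d.degree))) ^ i /
          (1 - (2 : ℝ) ^ (-(σ - d.degree))) :=
        dist_le_of_le_geometric_of_tendsto _ _ (hqd.trans_lt hq) hgeom hc i
    _ ≤ K * E * ρ ^ (σ - d.degree) * ((2 : ℝ) ^ (-(σ - d.degree))) ^ i / (1 - q) := by gcongr
    _ = K / (1 - q) * E * (ρ / 2 ^ i) ^ (σ - d.degree) := by rw [div_two_pow_rpow hρ]; ring

lemma plap_eq_zero_of_tendsto_coeff_truncate {h : ℕ → MvPolynomial (Fin n) ℝ} {ρ E σ : ℝ}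
    (H : DyadicHarmonicSeq h ρ E σ) {m : ℕ} {P : MvPolynomial (Fin n) ℝ}
    (hP : ∀ d, Tendsto (fun i => coeff d (truncate m (h i))) atTop (𝓝 (coeff d P))) :
    plap P = 0 := by
  ext d
  have hlim : Tendsto (fun i => coeff d (plap (truncate m (h i)))) atTop
      (𝓝 (coeff d (plap P))) := by
    simp only [coeff_plap]
    exact tendsto_finsetSum _ fun i _ => ((hP _).mul_const _).mul_const _
  simp only [plap_truncate m (H.plap_eq_zero _)] at hlim
  exact tendsto_nhds_unique hlim tendsto_const_nhds

lemma exists_tendsto_truncate (n m : ℕ) [NeZero n] {σ : ℝ} (hσ : m < σ) :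
    ∃ K > 0, ∀ (h : ℕ → MvPolynomial (Fin n) ℝ) (ρ E : ℝ), DyadicHarmonicSeq h ρ E σ →
      ∃ P : MvPolynomial (Fin n) ℝ, plap P = 0 ∧
        (∀ d, Tendsto (fun i => coeff d (truncate m (h i))) atTop (𝓝 (coeff d P))) ∧
        ∀ d i, |coeff d (truncate m (h i) - P)| ≤ K * E * (ρ / 2 ^ i) ^ (σ - d.degree) := by
  obtain ⟨K, hK, hlim⟩ := exists_tendsto_coeff n m hσ
  refine ⟨K, hK, fun h ρ E H => ?_⟩
  have hρ := H.radius_pos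
  have hE := H.const_nonneg
  choose! c hc hcd using hlim h ρ E H
  have hP (d : Fin n →₀ ℕ) : Tendsto (fun i => coeff d (truncate m (h i))) atTop
      (𝓝 (coeff d (polyOfCoeff m c))) := by
    simp only [coeff_truncate, coeff_polyOfCoeff]
    split_ifs with hd
    · exact hc d hd
    · exact tendsto_const_nhds
  refine ⟨polyOfCoeff m c, H.plap_eq_zero_of_tendsto_coeff_truncate hP, hP, fun d i => ?_⟩
  rw [coeff_sub, coeff_truncate, coeff_polyOfCoeff]
  split_ifs with hd
  · exact hcd d hd i
  · rw [sub_zero, abs_zero]; positivity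

lemma exists_abs_peval_sub_truncate_le (n m : ℕ) [NeZero n] {σ : ℝ} (hσ : σ < m + 1) :
    ∃ K > 0, ∀ (h : ℕ → MvPolynomial (Fin n) ℝ) (ρ E : ℝ), DyadicHarmonicSeq h ρ E σ →
      ∀ i, ∀ x ∈ closedBall (0 : En n) (ρ / 2 ^ i),
        |peval (h i - truncate m (h i)) x| ≤ K * E * (ρ / 2 ^ i) ^ σ := by
  obtain ⟨K, hK, htail⟩ := _root_.exists_abs_peval_sub_truncate_le n m
  set τ : ℝ := σ - (m + 1 : ℕ) with hτ
  have hτ₀ : τ < 0 := by rw [hτ]; push_cast; linarith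
  have : 0 < 1 - (2 : ℝ) ^ τ := sub_pos.2 (Real.rpow_lt_one_of_one_lt_of_neg one_lt_two hτ₀)
  set c := (2 : ℝ) ^ τ / (1 - 2 ^ τ)
  refine ⟨c * K, by positivity, fun h ρ E H i x hx => ?_⟩
  have hρ := H.radius_pos
  have hE := H.const_nonneg
  have hscale (j : ℕ) : (ρ / 2 ^ j) ^ σ * (‖x‖ / (ρ / 2 ^ j)) ^ (m + 1) =
      (ρ / 2 ^ j) ^ τ * ‖x‖ ^ (m + 1) := by
    rw [div_pow, Real.rpow_sub (by positivity), Real.rpow_natCast]; ring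
  have hinc (j : ℕ) (hj : j < i) : |peval (h (j + 1) - truncate m (h (j + 1))) x -
      peval (h j - truncate m (h j)) x| ≤ K * E * ‖x‖ ^ (m + 1) * (ρ / 2 ^ j) ^ τ := by
    have hxj : x ∈ closedBall (0 : En n) (ρ / 2 ^ j) :=
      closedBall_subset_closedBall (by gcongr; simp) hx
    have hle := htail _ _ _ (H.plap_sub_eq_zero j) (by positivity) (by positivity)
      (H.abs_peval_sub_le j) x hxj
    rw [← mul_assoc, mul_assoc (K * E), hscale] at hle
    rw [← peval_sub, sub_sub_sub_comm, ← truncate_sub]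
    exact hle.trans_eq (by ring)
  calc |peval (h i - truncate m (h i)) x|
      ≤ c * (K * E * ‖x‖ ^ (m + 1)) * (ρ / 2 ^ i) ^ τ :=
        abs_le_of_dyadic_increments hρ hτ₀ (by positivity)
          (a := fun j => peval (h j - truncate m (h j)) x) (by simp [H.zero, truncate_zero]) hinc
    _ = c * K * E * ((ρ / 2 ^ i) ^ σ * (‖x‖ / (ρ / 2 ^ i)) ^ (m + 1)) := by rw [hscale]; ring
    _ ≤ c * K * E * (ρ / 2 ^ i) ^ σ := by
        gcongr
        exact mul_le_of_le_one_right (by positivity)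
          (pow_le_one₀ (by positivity) (div_le_one_of_le₀ (by simpa using hx) (by positivity)))

theorem exists_limit (n m : ℕ) [NeZero n] {σ : ℝ} (hmσ : m < σ) (hσm : σ < m + 1) :
    ∃ K > 0, ∀ (h : ℕ → MvPolynomial (Fin n) ℝ) (ρ E : ℝ), DyadicHarmonicSeq h ρ E σ →
      ∃ P : MvPolynomial (Fin n) ℝ, plap P = 0 ∧
        (∀ d, m < d.degree → coeff d P = 0) ∧
        (∀ d, (∀ i, coeff d (h i) = 0) → coeff d P = 0) ∧
        (∀ d, |coeff d P| ≤ K * E * ρ ^ (σ - d.degree)) ∧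
        ∀ i, ∀ x ∈ closedBall (0 : En n) (ρ / 2 ^ i),
          |peval (h i) x - peval P x| ≤ K * E * (ρ / 2 ^ i) ^ σ := by
  obtain ⟨K₁, hK₁, hlow⟩ := exists_tendsto_truncate n m hmσ
  obtain ⟨K₂, hK₂, htail⟩ := exists_abs_peval_sub_truncate_le n m hσm
  set N : ℝ := ((multiIndices n m).card : ℝ) with hN
  refine ⟨K₁ + N * K₁ + K₂, by positivity, fun h ρ E H => ?_⟩
  have hρ := H.radius_pos
  have hE := H.const_nonneg
  obtain ⟨P, hP, hlim, hdiff⟩ := hlow h ρ E H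
  have hcoeff_zero {d : Fin n →₀ ℕ} (hd : ∀ i, coeff d (truncate m (h i)) = 0) :
      coeff d P = 0 :=
    tendsto_nhds_unique (hlim d) (by simp only [hd, tendsto_const_nhds])
  have hdeg (d : Fin n →₀ ℕ) (hd : m < d.degree) : coeff d P = 0 :=
    hcoeff_zero fun i => by rw [coeff_truncate, if_neg hd.not_ge]
  refine ⟨P, hP, hdeg, fun d hd => hcoeff_zero fun i => by rw [coeff_truncate, hd i, ite_self],
    fun d => ?_, fun i x hx => ?_⟩
  · have hd := hdiff d 0
    rw [H.zero, truncate_zero, zero_sub, coeff_neg, abs_neg, pow_zero, div_one] at hd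
    refine hd.trans ?_
    gcongr
    have : 0 ≤ N * K₁ := by positivity
    linarith [hK₂]
  · have hlow_le : |peval (truncate m (h i) - P) x| ≤ N * (K₁ * E * (ρ / 2 ^ i) ^ σ) := by
      rw [← polyOfCoeff_coeff (m := m) (P := truncate m (h i) - P) fun d hd => by
        rw [coeff_sub, coeff_truncate, if_neg hd.not_ge, hdeg d hd, sub_zero]]
      refine abs_peval_polyOfCoeff_le (fun d _ => ?_) (mem_closedBall_zero_iff.1 hx)
      refine (mul_le_mul_of_nonneg_right (hdiff d i) (by positivity)).trans_eq ?_
      rw [mul_assoc, ← Real.rpow_add_natCast (by positivity), sub_add_cancel]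
    have hsplit : peval (h i) x - peval P x =
        peval (h i - truncate m (h i)) x + peval (truncate m (h i) - P) x := by
      simp only [peval_sub]; ring
    rw [hsplit]
    have : 0 ≤ K₁ * E * (ρ / 2 ^ i) ^ σ := by positivity
    linarith [abs_add_le (peval (h i - truncate m (h i)) x) (peval (truncate m (h i) - P) x),
      htail h ρ E H i x hx]

end DyadicHarmonicSeq

end CampanatoIteration

section HarmonicExpansion

variable {n : ℕ}

lemma rpow_sub_two_mul_sq {r : ℝ} (hr : 0 < r) (κ : ℝ) : r ^ (κ - 2) * r ^ 2 = r ^ κ := by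
  rw [← Real.rpow_add_natCast hr.ne', Nat.cast_ofNat, sub_add_cancel]

lemma boundarySlope_mul_le {A B κ s r : ℝ} (hr : 0 < r) (hr₁ : r ≤ 1) (hA : 0 ≤ A) (hAB : A ≤ B)
    (hsκ : s ≤ κ) :
    boundarySlope n r (B * r ^ s) (A * r ^ (κ - 2)) * r ≤ (4 * n + 1) * B * r ^ s := by
  have hκs : A * r ^ κ ≤ B * r ^ s :=
    mul_le_mul hAB (Real.rpow_le_rpow_of_exponent_ge hr hr₁ hsκ) (by positivity) (hA.trans hAB)
  calc boundarySlope n r (B * r ^ s) (A * r ^ (κ - 2)) * r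
      = 4 * n * B * r ^ s + A * (r ^ (κ - 2) * r ^ 2) := by rw [boundarySlope]; field_simp
    _ ≤ (4 * n + 1) * B * r ^ s := by rw [rpow_sub_two_mul_sq hr]; linarith

lemma boundarySlope_mul_rpow_le {A B κ s α σ r : ℝ} (hr : 0 < r) (hr₁ : r ≤ 1) (hA : 0 ≤ A)
    (hAB : A ≤ B) (hsκ : s ≤ κ) (hσα : σ ≤ s + α) :
    boundarySlope n r (B * r ^ s) (A * r ^ (κ - 2)) * r ^ (1 + α) ≤ (4 * n + 1) * B * r ^ σ := by
  have hB : 0 ≤ B := hA.trans hAB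
  calc boundarySlope n r (B * r ^ s) (A * r ^ (κ - 2)) * r ^ (1 + α)
      = boundarySlope n r (B * r ^ s) (A * r ^ (κ - 2)) * r * r ^ α := by
        rw [Real.rpow_add hr, Real.rpow_one, mul_assoc]
    _ ≤ (4 * n + 1) * B * r ^ s * r ^ α := by
        exact mul_le_mul_of_nonneg_right (boundarySlope_mul_le hr hr₁ hA hAB hsκ) (by positivity)
    _ = (4 * n + 1) * B * r ^ (s + α) := by rw [Real.rpow_add hr, mul_assoc]
    _ ≤ (4 * n + 1) * B * r ^ σ := by
        gcongr 1; exact Real.rpow_le_rpow_of_exponent_ge hr hr₁ hσα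

variable [NeZero n]

/-- In the unit ball, the boundary of `Ω` lies in `|x_n| ≤ M |x| ^ (1 + α)`, and `v` satisfies
`|Δv| ≤ A |x| ^ (κ - 2)` in `Ω` and `|v| ≤ A |x| ^ κ` on `∂Ω`. -/
structure VanishingDirichletBound (Ω : Set (En n)) (v : En n → ℝ) (A κ α M : ℝ) : Prop where
  const_nonneg : 0 ≤ A
  isOpen : IsOpen Ω
  zero_notMem : (0 : En n) ∉ Ω
  continuousOn : ContinuousOn v (closure Ω ∩ ball 0 1)
  twiceDifferentiableAt : ∀ x ∈ Ω ∩ ball 0 1, TwiceDifferentiableAt v x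
  abs_lapAt_le : ∀ x ∈ Ω ∩ ball 0 1, |lapAt v x| ≤ A * ‖x‖ ^ (κ - 2)
  abs_le_of_mem_frontier : ∀ x ∈ frontier Ω ∩ ball 0 1, |v x| ≤ A * ‖x‖ ^ κ
  mem_of_lt : ∀ x : En n, ‖x‖ < 1 → M * ‖x‖ ^ (1 + α) < xn x → x ∈ Ω
  notMem_of_lt : ∀ x : En n, ‖x‖ < 1 → xn x < -(M * ‖x‖ ^ (1 + α)) → x ∉ Ω

/-- `h` is a harmonic polynomial, odd in `x_n`, which approximates `v` in `Ω ∩ B_{r/2}` up to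
`E r ^ σ`; it is itself of size `r ^ s`, and even of size `r ^ σ` in the slab of width `r ^ (1 + α)`
that contains the boundary. -/
structure OddHarmonicApprox (Ω : Set (En n)) (v : En n → ℝ) (h : MvPolynomial (Fin n) ℝ)
    (M α s σ E r : ℝ) : Prop where
  plap_eq_zero : plap h = 0
  oddInLast : OddInLast h
  abs_peval_le : ∀ x : En n, ‖x‖ ≤ r / 2 → |peval h x| ≤ E * r ^ s
  abs_peval_le_of_slab : ∀ x : En n, ‖x‖ ≤ r / 2 → |xn x| ≤ 4 * M * r ^ (1 + α) →
    |peval h x| ≤ E * r ^ σ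
  abs_sub_peval_le : ∀ x ∈ Ω ∩ ball 0 (r / 2), |v x - peval h x| ≤ E * r ^ σ

/-- The constant `E / B` in the `OddHarmonicApprox` of a function `v` with `|v| ≤ B |x| ^ s`. -/
noncomputable def approxConst (n : ℕ) (M : ℝ) : ℝ := 4 + 4 * M * (4 * n + 1)

namespace VanishingDirichletBound

variable {Ω : Set (En n)} {v : En n → ℝ} {A κ α M s σ B r : ℝ}

lemma flatDirichletBound (H : VanishingDirichletBound Ω v A κ α M) (hα : 0 ≤ 1 + α) (hκ : 2 ≤ κ)
    (hM : 0 < M) (hs : 0 ≤ s) (hB : 0 ≤ B) (hv : ∀ x ∈ Ω ∩ ball 0 1, |v x| ≤ B * ‖x‖ ^ s)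
    (hr : 0 < r) (hr₁ : r ≤ 1) :
    FlatDirichletBound Ω v r (M * r ^ α) (B * r ^ s) (A * r ^ (κ - 2)) (A * r ^ κ) := by
  have hA := H.const_nonneg
  have hsub : ball (0 : En n) r ⊆ ball 0 1 := ball_subset_ball hr₁
  have hpow {x : En n} (hx : x ∈ ball (0 : En n) r) {τ : ℝ} (hτ : 0 ≤ τ) : ‖x‖ ^ τ ≤ r ^ τ :=
    Real.rpow_le_rpow (norm_nonneg x) (mem_ball_zero_iff.1 hx).le hτ
  have hslab {x : En n} (hx : x ∈ ball (0 : En n) r) :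
      M * ‖x‖ ^ (1 + α) ≤ M * r ^ α * r := by
    rw [mul_assoc, ← Real.rpow_add_one hr.ne', add_comm α]
    exact mul_le_mul_of_nonneg_left (hpow hx hα) hM.le
  exact
    { radius_pos := hr
      flatness_pos := by positivity
      sup_nonneg := by positivity
      lap_nonneg := by positivity
      boundary_nonneg := by positivity
      isOpen := H.isOpen
      continuousOn := H.continuousOn.mono (inter_subset_inter_right _ hsub)
      twiceDifferentiableAt := fun x hx => H.twiceDifferentiableAt x ⟨hx.1, hsub hx.2⟩
      abs_lapAt_le := fun x hx => (H.abs_lapAt_le x ⟨hx.1, hsub hx.2⟩).trans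
        (mul_le_mul_of_nonneg_left (hpow hx.2 (by linarith)) hA)
      abs_le_sup := fun x hx => (hv x ⟨hx.1, hsub hx.2⟩).trans
        (mul_le_mul_of_nonneg_left (hpow hx.2 hs) hB)
      abs_le_of_mem_frontier := fun x hx => (H.abs_le_of_mem_frontier x ⟨hx.1, hsub hx.2⟩).trans
        (mul_le_mul_of_nonneg_left (hpow hx.2 (by linarith)) hA)
      mem_of_lt := fun x hx hlt =>
        H.mem_of_lt x (mem_ball_zero_iff.1 (hsub hx)) ((hslab hx).trans_lt hlt)
      notMem_of_lt := fun x hx hlt =>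
        H.notMem_of_lt x (mem_ball_zero_iff.1 (hsub hx)) (by linarith [hslab hx]) }

lemma exists_oddHarmonicApprox (H : VanishingDirichletBound Ω v A κ α M) (hα : 0 ≤ 1 + α)
    (hκ : 2 ≤ κ) (hM : 1 ≤ M) (hs : 0 ≤ s) (hσα : σ ≤ s + α) (hsσ : s ≤ σ) (hσκ : σ ≤ κ)
    (hB : 0 < B) (hAB : A ≤ B) (hv : ∀ x ∈ Ω ∩ ball 0 1, |v x| ≤ B * ‖x‖ ^ s)
    (hr : 0 < r) (hr₁ : r ≤ 1) :
    ∃ h, OddHarmonicApprox Ω v h M α s σ (approxConst n M * B) r := by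
  have hA := H.const_nonneg
  have hflat := H.flatDirichletBound hα hκ (by linarith) hs hB.le hv hr hr₁
  obtain ⟨h, hh, hodd, hlin, hclose⟩ := hflat.exists_oddInLast_close (ε := B * r ^ σ)
    (by positivity)
  set L := boundarySlope n r (B * r ^ s) (A * r ^ (κ - 2)) with hL
  have hL₀ : 0 ≤ L := hflat.boundarySlope_nonneg
  have hLr : L * r ≤ (4 * n + 1) * B * r ^ s := boundarySlope_mul_le hr hr₁ hA hAB (hsσ.trans hσκ)
  have hLα : L * r ^ (1 + α) ≤ (4 * n + 1) * B * r ^ σ :=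
    boundarySlope_mul_rpow_le hr hr₁ hA hAB (hsσ.trans hσκ) hσα
  have hLα₀ : 0 ≤ (4 * n + 1) * B * r ^ σ := by positivity
  have hBσ : 0 < B * r ^ σ := by positivity
  refine ⟨h, hh, hodd, fun x hx => ?_, fun x hx hxn => ?_, fun x hx => ?_⟩
  · have hxr : L * |xn x| ≤ L * r := by
      gcongr; exact (abs_apply_le_norm x _).trans (by linarith)
    have hσs : B * r ^ σ ≤ B * r ^ s :=
      mul_le_mul_of_nonneg_left (Real.rpow_le_rpow_of_exponent_ge hr hr₁ hsσ) hB.le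
    have : 0 ≤ (4 * n + 1) * B * r ^ s := by positivity
    rw [approxConst]
    nlinarith [hlin x hx]
  · have hxr : L * |xn x| ≤ L * (4 * M * r ^ (1 + α)) := by gcongr
    rw [approxConst]
    nlinarith [hlin x hx]
  · have hκσ : A * r ^ κ ≤ B * r ^ σ :=
      mul_le_mul hAB (Real.rpow_le_rpow_of_exponent_ge hr hr₁ hσκ) (by positivity) hB.le
    have hδ : M * r ^ α * r = M * r ^ (1 + α) := by rw [Real.rpow_add hr, Real.rpow_one]; ring
    have := hclose x hx
    rw [FlatDirichletBound.thresholdLevel, ← hL, hδ, mul_assoc A,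
      rpow_sub_two_mul_sq hr] at this
    rw [approxConst]
    nlinarith

lemma abs_peval_sub_le_of_half (H : VanishingDirichletBound Ω v A κ α M) (hα : 0 ≤ 1 + α)
    (hα₁ : α ≤ 1) (hM : 0 ≤ M) (hσ : 0 ≤ σ) {E : ℝ} (hE : 0 ≤ E) (hr : 0 < r) (hr₁ : r ≤ 1)
    {h h' : MvPolynomial (Fin n) ℝ} (hh : OddHarmonicApprox Ω v h M α s σ E r)
    (hh' : OddHarmonicApprox Ω v h' M α s σ E (r / 2)) {x : En n} (hx : ‖x‖ ≤ r / 16) :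
    |peval (h' - h) x| ≤ 2 * E * r ^ σ := by
  have hhalf : E * (r / 2) ^ σ ≤ E * r ^ σ := by gcongr; linarith
  have hslab : M * r ^ (1 + α) ≤ 4 * M * (r / 2) ^ (1 + α) := calc
    M * r ^ (1 + α) = M * (2 ^ (1 + α) * (r / 2) ^ (1 + α)) := by
      rw [← Real.mul_rpow zero_le_two (by positivity), mul_div_cancel₀ r two_ne_zero]
    _ ≤ M * (4 * (r / 2) ^ (1 + α)) := by
      gcongr
      calc (2 : ℝ) ^ (1 + α) ≤ 2 ^ (2 : ℝ) :=
            Real.rpow_le_rpow_of_exponent_le one_le_two (by linarith)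
        _ = 4 := by norm_num
    _ = 4 * M * (r / 2) ^ (1 + α) := by ring
  have hupper {y : En n} (hy : ‖y‖ ≤ r / 16) (hyn : M * r ^ (1 + α) < xn y) :
      |peval (h' - h) y| ≤ 2 * E * r ^ σ := by
    have hyΩ : y ∈ Ω := H.mem_of_lt y (by linarith) (lt_of_le_of_lt (by gcongr; linarith) hyn)
    have h₁ := hh.abs_sub_peval_le y ⟨hyΩ, mem_ball_zero_iff.2 (by linarith)⟩
    have h₂ := hh'.abs_sub_peval_le y ⟨hyΩ, mem_ball_zero_iff.2 (by linarith)⟩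
    rw [peval_sub]
    linarith [abs_sub_le (peval h' y) (v y) (peval h y), abs_sub_comm (v y) (peval h' y)]
  rcases le_or_gt |xn x| (M * r ^ (1 + α)) with hxn | hxn
  · have h₁ := hh.abs_peval_le_of_slab x (by linarith) (by
      linarith [mul_nonneg hM (Real.rpow_nonneg hr.le (1 + α))])
    have h₂ := hh'.abs_peval_le_of_slab x (by linarith) (hxn.trans hslab)
    rw [peval_sub]
    linarith [abs_sub (peval h' x) (peval h x)]
  rcases lt_abs.1 hxn with hxn | hxn
  · exact hupper hx hxn
  · have := hupper (y := reflectCoord (lastIdx n) 0 x) (by rwa [norm_reflectCoord_zero])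
      (by rwa [xn_reflectCoord])
    rwa [peval_sub, hh.oddInLast.peval_reflectCoord, hh'.oddInLast.peval_reflectCoord,
      ← neg_sub', abs_neg, ← peval_sub] at this

lemma dyadicHarmonicSeq (H : VanishingDirichletBound Ω v A κ α M) (hα : 0 ≤ 1 + α)
    (hα₁ : α ≤ 1) (hM : 0 ≤ M) (hσ : 0 ≤ σ) {E : ℝ} (hE : 0 ≤ E)
    {h : ℕ → MvPolynomial (Fin n) ℝ} (h₀ : h 0 = 0)
    (hh : ∀ i, OddHarmonicApprox Ω v (h (i + 1)) M α s σ E (1 / 2 ^ i)) :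
    DyadicHarmonicSeq h (1 / 8) (2 * E * 16 ^ σ) σ where
  radius_pos := by norm_num
  const_nonneg := by positivity
  zero := h₀
  plap_eq_zero
    | 0 => by rw [h₀, plap_zero]
    | i + 1 => (hh i).plap_eq_zero
  abs_peval_sub_le i x hx := by
    rw [mem_closedBall_zero_iff] at hx
    rw [mul_assoc, ← Real.mul_rpow (by norm_num) (by positivity)]
    cases i with
    | zero =>
      have hle := (hh 0).abs_peval_le x (hx.trans (by norm_num))
      have hone : (1 : ℝ) ≤ (16 * (1 / 8 / 2 ^ 0)) ^ σ := Real.one_le_rpow (by norm_num) hσ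
      rw [h₀, sub_zero]
      rw [pow_zero, div_one, Real.one_rpow] at hle
      nlinarith
    | succ i =>
      have hscale : 16 * (1 / 8 / 2 ^ (i + 1)) = (1 : ℝ) / 2 ^ i := by
        rw [pow_succ]; field_simp; norm_num
      rw [hscale]
      refine H.abs_peval_sub_le_of_half hα hα₁ hM hσ hE (by positivity)
        (div_le_one_of_le₀ (one_le_pow₀ one_le_two) (by positivity)) (hh i) ?_ (by linarith)
      convert hh (i + 1) using 1
      rw [pow_succ]; field_simp

lemma abs_sub_peval_le_of_dyadic (hσ : 0 ≤ σ) {E F : ℝ} (hE : 0 ≤ E) (hF : 0 ≤ F)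
    {h : ℕ → MvPolynomial (Fin n) ℝ} {P : MvPolynomial (Fin n) ℝ}
    (hh : ∀ i, OddHarmonicApprox Ω v (h (i + 1)) M α s σ E (1 / 2 ^ i))
    (hP : ∀ i, ∀ x ∈ closedBall (0 : En n) (1 / 8 / 2 ^ i),
      |peval (h i) x - peval P x| ≤ F * (1 / 8 / 2 ^ i) ^ σ)
    {x : En n} (hxΩ : x ∈ Ω) (hx₀ : 0 < ‖x‖) (hx : ‖x‖ ≤ 1 / 16) :
    |v x - peval P x| ≤ (E * 32 ^ σ + F * 2 ^ σ) * ‖x‖ ^ σ := by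
  obtain ⟨i, hlo, hhi⟩ := exists_nat_pow_near_of_lt_one (x := 16 * ‖x‖) (y := (1 : ℝ) / 2)
    (by positivity) (by linarith) (by norm_num) (by norm_num)
  set r := (1 : ℝ) / 2 ^ i with hr
  have hpow : ((1 : ℝ) / 2) ^ i = r := by rw [hr, div_pow, one_pow]
  have hscale : (1 : ℝ) / 8 / 2 ^ (i + 1) = r / 16 := by
    rw [hr, pow_succ]; field_simp; norm_num
  have hr₀ : 0 < r := by positivity
  rw [pow_succ, hpow] at hlo
  rw [hpow] at hhi
  have hvh := (hh i).abs_sub_peval_le x ⟨hxΩ, mem_ball_zero_iff.2 (by linarith)⟩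
  have hhP := hP (i + 1) x (mem_closedBall_zero_iff.2 (by linarith))
  rw [hscale] at hhP
  calc |v x - peval P x|
      ≤ |v x - peval (h (i + 1)) x| + |peval (h (i + 1)) x - peval P x| := abs_sub_le _ _ _
    _ ≤ E * r ^ σ + F * (r / 16) ^ σ := add_le_add hvh hhP
    _ ≤ E * (32 * ‖x‖) ^ σ + F * (2 * ‖x‖) ^ σ := by gcongr <;> linarith
    _ = (E * 32 ^ σ + F * 2 ^ σ) * ‖x‖ ^ σ := by
      rw [Real.mul_rpow (by norm_num) hx₀.le, Real.mul_rpow (by norm_num) hx₀.le]; ring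

lemma exists_harmonic_expansion_near_zero (n : ℕ) [NeZero n] {α κ M s σ : ℝ} {m : ℕ}
    (hα : 0 ≤ 1 + α) (hα₁ : α ≤ 1) (hκ : 2 ≤ κ) (hM : 1 ≤ M) (hs : 0 ≤ s) (hσα : σ ≤ s + α)
    (hsσ : s ≤ σ) (hσκ : σ ≤ κ) (hmσ : m < σ) (hσm : σ < m + 1) :
    ∃ C > 0, ∀ (Ω : Set (En n)) (v : En n → ℝ) (A B : ℝ), VanishingDirichletBound Ω v A κ α M →
      0 < B → A ≤ B → (∀ x ∈ Ω ∩ ball 0 1, |v x| ≤ B * ‖x‖ ^ s) →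
      ∃ P : MvPolynomial (Fin n) ℝ, plap P = 0 ∧ (∀ d, m < d.degree → coeff d P = 0) ∧
        OddInLast P ∧ (∀ d, |coeff d P| ≤ C * B) ∧
        ∀ x ∈ Ω, ‖x‖ ≤ 1 / 16 → |v x - peval P x| ≤ C * B * ‖x‖ ^ σ := by
  obtain ⟨K, hK, hlimit⟩ := DyadicHarmonicSeq.exists_limit n m hmσ hσm
  have hσ : 0 < σ := m.cast_nonneg.trans_lt hmσ
  set E := approxConst n M with hE
  have hE₀ : 0 < E := by rw [hE, approxConst]; positivity
  set F := K * (2 * E * 16 ^ σ) with hF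
  have : 0 < F := by positivity
  refine ⟨F + (E * 32 ^ σ + F * 2 ^ σ), by positivity, fun Ω v A B H hB hAB hv => ?_⟩
  choose h hh using fun i : ℕ => H.exists_oddHarmonicApprox hα hκ hM hs hσα hsσ hσκ hB hAB hv
    (r := 1 / 2 ^ i) (by positivity) (div_le_one_of_le₀ (one_le_pow₀ one_le_two) (by positivity))
  obtain ⟨P, hP, hdeg, hzero, hcoeff, hclose⟩ :=
    hlimit (fun | 0 => 0 | i + 1 => h i) (1 / 8) (2 * (E * B) * 16 ^ σ)
      (H.dyadicHarmonicSeq hα hα₁ (by linarith) hσ.le (by positivity) rfl hh)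
  have hFB : K * (2 * (E * B) * 16 ^ σ) = F * B := by rw [hF]; ring
  rw [hFB] at hclose hcoeff
  refine ⟨P, hP, hdeg, fun d hd => hzero d fun
    | 0 => coeff_zero d
    | i + 1 => (hh i).oddInLast d hd, fun d => ?_, fun x hxΩ hx => ?_⟩
  · refine le_trans ?_ (mul_le_mul_of_nonneg_right (le_add_of_nonneg_right (by positivity)) hB.le)
    by_cases hd : d.degree ≤ m
    · have hd' : (d.degree : ℝ) ≤ m := by exact_mod_cast hd
      exact (hcoeff d).trans (mul_le_of_le_one_right (by positivity)
        (Real.rpow_le_one (by norm_num) (by norm_num) (by linarith)))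
    · rw [hdeg d (not_le.1 hd), abs_zero]; positivity
  · have hx₀ : 0 < ‖x‖ := norm_pos_iff.2 fun hx₀ => H.zero_notMem (hx₀ ▸ hxΩ)
    have : 0 ≤ F * B * ‖x‖ ^ σ := by positivity
    linarith [abs_sub_peval_le_of_dyadic hσ.le (by positivity) (by positivity) hh hclose hxΩ hx₀ hx]

theorem exists_harmonic_expansion (n : ℕ) [NeZero n] {α κ M s σ : ℝ} {m : ℕ} (hα : 0 ≤ 1 + α)
    (hα₁ : α ≤ 1) (hκ : 2 ≤ κ) (hM : 1 ≤ M) (hs : 0 ≤ s) (hσα : σ ≤ s + α) (hsσ : s ≤ σ)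
    (hσκ : σ ≤ κ) (hmσ : m < σ) (hσm : σ < m + 1) :
    ∃ C > 0, ∀ (Ω : Set (En n)) (v : En n → ℝ) (A B : ℝ), VanishingDirichletBound Ω v A κ α M →
      0 < B → A ≤ B → (∀ x ∈ Ω ∩ ball 0 1, |v x| ≤ B * ‖x‖ ^ s) →
      ∃ P : MvPolynomial (Fin n) ℝ, plap P = 0 ∧ (∀ d, m < d.degree → coeff d P = 0) ∧
        OddInLast P ∧ (∀ d, |coeff d P| ≤ C * B) ∧
        ∀ x ∈ Ω ∩ ball 0 1, |v x - peval P x| ≤ C * B * ‖x‖ ^ σ := by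
  obtain ⟨C, hC, hnear⟩ :=
    exists_harmonic_expansion_near_zero n hα hα₁ hκ hM hs hσα hsσ hσκ hmσ hσm
  set N : ℝ := ((multiIndices n m).card : ℝ) with hN
  have hN₀ : 0 ≤ N := by positivity
  refine ⟨C + (1 + N * C) * 16 ^ σ, by positivity, fun Ω v A B H hB hAB hv => ?_⟩
  obtain ⟨P, hP, hdeg, hodd, hcoeff, hclose⟩ := hnear Ω v A B H hB hAB hv
  refine ⟨P, hP, hdeg, hodd, fun d => (hcoeff d).trans ?_, fun x hx => ?_⟩
  · gcongr
    exact le_add_of_nonneg_right (by positivity)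
  have hx₁ : ‖x‖ < 1 := mem_ball_zero_iff.1 hx.2
  rcases le_or_gt ‖x‖ (1 / 16) with hx16 | hx16
  · have : 0 ≤ (1 + N * C) * 16 ^ σ * B * ‖x‖ ^ σ := by positivity
    linarith [hclose x hx.1 hx16]
  have hone : (1 : ℝ) ≤ 16 ^ σ * ‖x‖ ^ σ := by
    rw [← Real.mul_rpow (by norm_num) (norm_nonneg x)]
    exact Real.one_le_rpow (by linarith) (hs.trans hsσ)
  have hvB : |v x| ≤ B := (hv x hx).trans
    (mul_le_of_le_one_right hB.le (Real.rpow_le_one (norm_nonneg x) hx₁.le hs))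
  have hPB : |peval P x| ≤ N * (C * B) := by
    rw [← polyOfCoeff_coeff hdeg]
    exact abs_peval_polyOfCoeff_le (fun d _ => by simpa using hcoeff d) hx₁.le
  have hfar := le_mul_of_one_le_right (by positivity : 0 ≤ (1 + N * C) * B) hone
  have : 0 ≤ C * B * ‖x‖ ^ σ := by positivity
  linarith [abs_sub (v x) (peval P x)]

end VanishingDirichletBound

end HarmonicExpansion

section VanishingTaylorCoefficients

lemma isHomogeneous_iff_coeff_eq_zero {n j : ℕ} {P : MvPolynomial (Fin n) ℝ} :
    P.IsHomogeneous j ↔ ∀ d, d.degree ≠ j → coeff d P = 0 := by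
  refine ⟨fun h d => h.coeff_eq_zero, fun h d hd => ?_⟩
  rw [Pi.one_def, ← Finsupp.degree_eq_weight_one]
  exact not_imp_comm.1 (h d) hd

lemma polynomial_coeff_eq_zero_of_abs_eval_le {p : Polynomial ℝ} {C θ t₀ : ℝ} (ht₀ : 0 < t₀)
    (h : ∀ t, 0 < t → t < t₀ → |p.eval t| ≤ C * t ^ θ) {j : ℕ} (hj : (j : ℝ) < θ) :
    p.coeff j = 0 := by
  induction j using Nat.strong_induction_on with
  | _ j ih =>
    obtain ⟨q, rfl⟩ := Polynomial.X_pow_dvd_iff.2 fun i hi =>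
      ih i hi ((Nat.cast_lt.2 hi).trans hj)
    have hq : ∀ᶠ t in nhdsWithin (0 : ℝ) (Ioi 0), |q.eval t| ≤ C * t ^ (θ - j) := by
      filter_upwards [Ioo_mem_nhdsGT ht₀] with t ht
      have hle := h t ht.1 ht.2
      rw [Polynomial.eval_mul, Polynomial.eval_pow, Polynomial.eval_X, abs_mul, abs_pow,
        abs_of_pos ht.1] at hle
      rwa [Real.rpow_sub_natCast ht.1.ne', ← mul_div_assoc, le_div_iff₀' (pow_pos ht.1 j)]
    have hlim : Filter.Tendsto (fun t : ℝ => C * t ^ (θ - j)) (nhdsWithin 0 (Ioi 0)) (nhds 0) := by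
      have hcont := (Real.continuousAt_rpow_const 0 (θ - j) (Or.inr (by linarith))).const_mul C
      simpa [Real.zero_rpow (sub_pos.2 hj).ne'] using hcont.tendsto.mono_left nhdsWithin_le_nhds
    have hle := le_of_tendsto_of_tendsto
      (q.continuous.abs.continuousAt.tendsto.mono_left nhdsWithin_le_nhds) hlim hq
    rw [Polynomial.coeff_X_pow_mul', if_pos le_rfl, Nat.sub_self,
      Polynomial.coeff_zero_eq_eval_zero]
    exact abs_nonpos_iff.1 hle

variable {n : ℕ}

lemma peval_smul_of_isHomogeneous {P : MvPolynomial (Fin n) ℝ} {j : ℕ} (hP : P.IsHomogeneous j)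
    (t : ℝ) (x : En n) : peval P (t • x) = t ^ j * peval P x := by
  simp only [peval, eval_eq, Finset.mul_sum]
  refine Finset.sum_congr rfl fun d hd => ?_
  have hdj : d.degree = j := not_imp_comm.1 hP.coeff_eq_zero (mem_support_iff.1 hd)
  simp only [PiLp.smul_apply, smul_eq_mul, mul_pow, Finset.prod_mul_distrib,
    Finset.prod_pow_eq_pow_sum, ← Finsupp.degree_apply, hdj]
  ring

lemma exists_polynomial_eval_eq_peval_smul (P : MvPolynomial (Fin n) ℝ) (x : En n) :
    ∃ p : Polynomial ℝ, (∀ t, p.eval t = peval P (t • x)) ∧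
      ∀ j, p.coeff j = peval (homogeneousComponent j P) x := by
  refine ⟨∑ j ∈ Finset.range (P.totalDegree + 1),
    Polynomial.monomial j (peval (homogeneousComponent j P) x), fun t => ?_, fun j => ?_⟩
  · nth_rw 3 [← sum_homogeneousComponent P]
    simp only [Polynomial.eval_finsetSum, Polynomial.eval_monomial, peval_sum,
      peval_smul_of_isHomogeneous (homogeneousComponent_isHomogeneous _ P), mul_comm]
  · simp only [Polynomial.finsetSum_coeff, Polynomial.coeff_monomial, Finset.sum_ite_eq',
      Finset.mem_range]
    split_ifs with hj
    · rfl
    · rw [homogeneousComponent_eq_zero _ _ (by omega), peval_zero]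

lemma coeff_eq_zero_of_abs_peval_smul_le {P : MvPolynomial (Fin n) ℝ} {U : Set (En n)}
    (hU : IsOpen U) (hne : U.Nonempty) {t₀ C θ : ℝ} (ht₀ : 0 < t₀)
    (h : ∀ x ∈ U, ∀ t, 0 < t → t < t₀ → |peval P (t • x)| ≤ C * t ^ θ) {d : Fin n →₀ ℕ}
    (hd : (d.degree : ℝ) < θ) : coeff d P = 0 := by
  have hcomp : homogeneousComponent d.degree P = 0 := by
    refine eq_zero_of_peval_eq_zero_on_open hU hne fun x hx => ?_
    obtain ⟨p, heval, hcoeff⟩ := exists_polynomial_eval_eq_peval_smul P x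
    rw [← hcoeff]
    exact polynomial_coeff_eq_zero_of_abs_eval_le ht₀
      (fun t ht ht' => heval t ▸ h x hx t ht ht') hd
  simpa [coeff_homogeneousComponent] using congrArg (coeff d) hcomp

lemma abs_peval_le_of_isHomogeneous {P : MvPolynomial (Fin n) ℝ} {j : ℕ} {c : ℝ}
    (hP : P.IsHomogeneous j) (hc : ∀ d, |coeff d P| ≤ c) (x : En n) :
    |peval P x| ≤ (multiIndices n j).card * (c * ‖x‖ ^ j) := by
  have hc₀ : 0 ≤ c := (abs_nonneg _).trans (hc 0)
  rw [← polyOfCoeff_coeff fun d hd => hP.coeff_eq_zero hd.ne']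
  refine abs_peval_polyOfCoeff_le (R := ‖x‖) (fun d _ => ?_) le_rfl
  by_cases hd : d.degree = j
  · rw [hd]
    gcongr
    exact hc d
  · rw [hP.coeff_eq_zero hd, abs_zero, zero_mul]
    positivity

variable [NeZero n]

/-- An open set of directions along which every domain that is `C^{1,α}` at `0`, with inner normal
`e_n`, contains short segments starting at `0`. -/
def upperCap (n : ℕ) [NeZero n] : Set (En n) := {x | ‖x‖ < 1 ∧ 1 / 2 < xn x}

lemma isOpen_upperCap : IsOpen (upperCap n) :=
  (isOpen_lt continuous_norm continuous_const).inter (isOpen_lt continuous_const continuous_xn)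

lemma upperCap_nonempty : (upperCap n).Nonempty := by
  refine ⟨EuclideanSpace.single (lastIdx n) (3 / 4), ?_, ?_⟩
  · norm_num [PiLp.norm_single]
  · norm_num [xn]

lemma norm_smul_le_of_mem_upperCap {x : En n} (hx : x ∈ upperCap n) {t : ℝ} (ht : 0 ≤ t) :
    ‖t • x‖ ≤ t := by
  rw [norm_smul, Real.norm_of_nonneg ht]
  exact mul_le_of_le_one_right ht hx.1.le

lemma exists_smul_mem_of_mem_upperCap {Ω : Set (En n)} {M α : ℝ} (hα : 0 < α) (hM : 1 ≤ M)
    (hΩ : ∀ x : En n, ‖x‖ < 1 → M * ‖x‖ ^ (1 + α) < xn x → x ∈ Ω) :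
    ∃ t₀ : ℝ, 0 < t₀ ∧ ∀ x ∈ upperCap n, ∀ t, 0 < t → t < t₀ → t • x ∈ Ω ∩ ball 0 1 := by
  have : 0 < M := by linarith
  have ht₀ : (1 / (2 * M)) ^ (1 / α) ≤ 1 := by
    refine Real.rpow_le_one (by positivity) ?_ (by positivity)
    rw [div_le_one (by positivity)]
    linarith
  refine ⟨(1 / (2 * M)) ^ (1 / α), by positivity, fun x hx t ht htt₀ => ?_⟩
  have hle : ‖t • x‖ ≤ t := norm_smul_le_of_mem_upperCap hx ht.le
  have hlt : ‖t • x‖ < 1 := hle.trans_lt (htt₀.trans_le ht₀)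
  have htα : t ^ α ≤ 1 / (2 * M) :=
    calc t ^ α ≤ ((1 / (2 * M)) ^ (1 / α)) ^ α := by gcongr
      _ = 1 / (2 * M) := by
        rw [← Real.rpow_mul (by positivity), one_div_mul_cancel hα.ne', Real.rpow_one]
  refine ⟨hΩ _ hlt ?_, mem_ball_zero_iff.2 hlt⟩
  calc M * ‖t • x‖ ^ (1 + α) ≤ M * t ^ (1 + α) := by gcongr
    _ = M * t ^ α * t := by rw [add_comm, Real.rpow_add_one ht.ne', mul_assoc]
    _ ≤ M * (1 / (2 * M)) * t := by gcongr
    _ = t * (1 / 2) := by field_simp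
    _ < t * xn x := by gcongr; exact hx.2
    _ = xn (t • x) := rfl

lemma coeff_eq_zero_of_abs_peval_le {Ω : Set (En n)} {M α : ℝ} (hα : 0 < α) (hM : 1 ≤ M)
    (hΩ : ∀ x : En n, ‖x‖ < 1 → M * ‖x‖ ^ (1 + α) < xn x → x ∈ Ω)
    {P : MvPolynomial (Fin n) ℝ} {C θ : ℝ} (hC : 0 ≤ C)
    (h : ∀ x ∈ Ω ∩ ball 0 1, |peval P x| ≤ C * ‖x‖ ^ θ) {d : Fin n →₀ ℕ}
    (hd : (d.degree : ℝ) < θ) : coeff d P = 0 := by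
  obtain ⟨t₀, ht₀, hmem⟩ := exists_smul_mem_of_mem_upperCap hα hM hΩ
  refine coeff_eq_zero_of_abs_peval_smul_le (C := C) isOpen_upperCap upperCap_nonempty ht₀
    (fun x hx t ht htt₀ => ?_) hd
  have hθ : 0 ≤ θ := (Nat.cast_nonneg _).trans hd.le
  calc |peval P (t • x)| ≤ C * ‖t • x‖ ^ θ := h _ (hmem x hx t ht htt₀)
    _ ≤ C * t ^ θ := by gcongr; exact norm_smul_le_of_mem_upperCap hx ht.le

end VanishingTaylorCoefficients

section HomogeneousExpansion

namespace VanishingDirichletBound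

lemma norm_pos_of_mem {n : ℕ} [NeZero n] {Ω : Set (En n)} {v : En n → ℝ} {A κ α M : ℝ}
    (H : VanishingDirichletBound Ω v A κ α M) {x : En n} (hx : x ∈ Ω) : 0 < ‖x‖ :=
  norm_pos_iff.2 fun h => H.zero_notMem (h ▸ hx)

lemma isHomogeneous_of_abs_sub_peval_le {n : ℕ} [NeZero n] {Ω : Set (En n)} {v : En n → ℝ}
    {A κ α M σ E K : ℝ} {k m : ℕ} (H : VanishingDirichletBound Ω v A κ α M) (hα : 0 < α)
    (hM : 1 ≤ M) (hmσ : m < σ) (hmk : m ≤ k + 1)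
    (hv : ∀ x ∈ Ω ∩ ball 0 1, |v x| ≤ K * ‖x‖ ^ (k + α)) {P : MvPolynomial (Fin n) ℝ}
    (hdeg : ∀ d, m < d.degree → coeff d P = 0)
    (hP : ∀ x ∈ Ω ∩ ball 0 1, |v x - peval P x| ≤ E * ‖x‖ ^ σ) : P.IsHomogeneous (k + 1) := by
  refine isHomogeneous_iff_coeff_eq_zero.2 fun d hdk => ?_
  rcases lt_or_ge m d.degree with hdm | hdm
  · exact hdeg d hdm
  have hdm' : (d.degree : ℝ) ≤ m := by exact_mod_cast hdm
  have hdk' : (d.degree : ℝ) ≤ k := by exact_mod_cast (by omega : d.degree ≤ k)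
  refine coeff_eq_zero_of_abs_peval_le (C := |K| + |E|) (θ := min (k + α) σ) hα hM H.mem_of_lt
    (by positivity) (fun x hx => ?_) (lt_min (by linarith) (by linarith))
  have hx₀ : 0 < ‖x‖ := H.norm_pos_of_mem hx.1
  have hx₁ : ‖x‖ ≤ 1 := (mem_ball_zero_iff.1 hx.2).le
  calc |peval P x| = |v x - (v x - peval P x)| := by rw [sub_sub_cancel]
    _ ≤ |v x| + |v x - peval P x| := abs_sub _ _
    _ ≤ |K| * ‖x‖ ^ (k + α) + |E| * ‖x‖ ^ σ := by
      refine add_le_add ((hv x hx).trans ?_) ((hP x hx).trans ?_) <;>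
      · gcongr
        exact le_abs_self _
    _ ≤ |K| * ‖x‖ ^ min (k + α) σ + |E| * ‖x‖ ^ min (k + α) σ := by
      gcongr ?_ * ?_ + ?_ * ?_
      · exact Real.rpow_le_rpow_of_exponent_ge hx₀ hx₁ (min_le_left _ _)
      · exact Real.rpow_le_rpow_of_exponent_ge hx₀ hx₁ (min_le_right _ _)
    _ = (|K| + |E|) * ‖x‖ ^ min (k + α) σ := by ring

lemma exists_homogeneous_expansion_of_abs_le_rpow (n : ℕ) [NeZero n] {k m : ℕ} {α κ M s σ : ℝ}
    (hα : 0 < α) (hα₁ : α ≤ 1) (hκ : 2 ≤ κ) (hM : 1 ≤ M) (hs : 0 ≤ s) (hσα : σ ≤ s + α)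
    (hsσ : s ≤ σ) (hσκ : σ ≤ κ) (hmσ : m < σ) (hσm : σ < m + 1) (hmk : m ≤ k + 1) :
    ∃ C > 0, ∀ (Ω : Set (En n)) (v : En n → ℝ) (A B K : ℝ), VanishingDirichletBound Ω v A κ α M →
      0 < B → A ≤ B → (∀ x ∈ Ω ∩ ball 0 1, |v x| ≤ B * ‖x‖ ^ s) →
      (∀ x ∈ Ω ∩ ball 0 1, |v x| ≤ K * ‖x‖ ^ (k + α)) →
      ∃ P : MvPolynomial (Fin n) ℝ, plap P = 0 ∧ P.IsHomogeneous (k + 1) ∧ OddInLast P ∧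
        (∀ d, |coeff d P| ≤ C * B) ∧
        ∀ x ∈ Ω ∩ ball 0 1, |v x - peval P x| ≤ C * B * ‖x‖ ^ σ := by
  obtain ⟨C, hC, hexp⟩ :=
    exists_harmonic_expansion n (by linarith) hα₁ hκ hM hs hσα hsσ hσκ hmσ hσm
  refine ⟨C, hC, fun Ω v A B K H hB hAB hvs hvk => ?_⟩
  obtain ⟨P, hharm, hdeg, hodd, hcoeff, hclose⟩ := hexp Ω v A B H hB hAB hvs
  exact ⟨P, hharm, H.isHomogeneous_of_abs_sub_peval_le hα hM hmσ hmk hvk hdeg hclose, hodd,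
    hcoeff, hclose⟩

lemma exists_abs_le_rpow_min (n : ℕ) [NeZero n] {k m : ℕ} {α κ M s σ : ℝ}
    (hα : 0 < α) (hα₁ : α ≤ 1) (hκ : 2 ≤ κ) (hM : 1 ≤ M) (hs : 0 ≤ s) (hσα : σ ≤ s + α)
    (hsσ : s ≤ σ) (hσκ : σ ≤ κ) (hmσ : m < σ) (hσm : σ < m + 1) (hmk : m ≤ k + 1) :
    ∃ C > 0, ∀ (Ω : Set (En n)) (v : En n → ℝ) (A B K : ℝ), VanishingDirichletBound Ω v A κ α M →
      0 < B → A ≤ B → (∀ x ∈ Ω ∩ ball 0 1, |v x| ≤ B * ‖x‖ ^ s) →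
      (∀ x ∈ Ω ∩ ball 0 1, |v x| ≤ K * ‖x‖ ^ (k + α)) →
      ∀ x ∈ Ω ∩ ball 0 1, |v x| ≤ C * B * ‖x‖ ^ min σ (k + 1) := by
  obtain ⟨C, hC, hexp⟩ := exists_homogeneous_expansion_of_abs_le_rpow n (k := k) hα hα₁ hκ hM hs
    hσα hsσ hσκ hmσ hσm hmk
  set N : ℝ := ((multiIndices n (k + 1)).card : ℝ) with hN
  refine ⟨(N + 1) * C, by positivity, fun Ω v A B K H hB hAB hvs hvk x hx => ?_⟩
  obtain ⟨P, -, hhom, -, hcoeff, hclose⟩ := hexp Ω v A B K H hB hAB hvs hvk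
  have hx₀ : 0 < ‖x‖ := H.norm_pos_of_mem hx.1
  have hx₁ : ‖x‖ ≤ 1 := (mem_ball_zero_iff.1 hx.2).le
  calc |v x| = |peval P x + (v x - peval P x)| := by rw [add_sub_cancel]
    _ ≤ |peval P x| + |v x - peval P x| := abs_add_le _ _
    _ ≤ N * (C * B * ‖x‖ ^ (k + 1)) + C * B * ‖x‖ ^ σ :=
      add_le_add (abs_peval_le_of_isHomogeneous hhom hcoeff x) (hclose x hx)
    _ ≤ N * (C * B * ‖x‖ ^ min σ (k + 1)) + C * B * ‖x‖ ^ min σ (k + 1) := by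
      rw [← Real.rpow_natCast ‖x‖ (k + 1), Nat.cast_succ]
      gcongr N * (C * B * ?_) + C * B * ?_
      · exact Real.rpow_le_rpow_of_exponent_ge hx₀ hx₁ (min_le_right _ _)
      · exact Real.rpow_le_rpow_of_exponent_ge hx₀ hx₁ (min_le_left _ _)
    _ = (N + 1) * C * B * ‖x‖ ^ min σ (k + 1) := by ring

-- The increment `β` is irrational so that no intermediate exponent `i * β` is an integer.
lemma exists_abs_le_rpow_min_nat_mul (n : ℕ) [NeZero n] {k : ℕ} {α β κ M : ℝ} (hα₁ : α ≤ 1)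
    (hκ : 2 ≤ κ) (hkκ : k + 1 + α ≤ κ) (hM : 1 ≤ M) (hβ : Irrational β) (hβ₀ : 0 < β)
    (hβα : β < α) (i : ℕ) :
    ∃ C ≥ 1, ∀ (Ω : Set (En n)) (v : En n → ℝ) (A K : ℝ), VanishingDirichletBound Ω v A κ α M →
      0 < A → (∀ x ∈ Ω ∩ ball 0 1, |v x| ≤ A) →
      (∀ x ∈ Ω ∩ ball 0 1, |v x| ≤ K * ‖x‖ ^ (k + α)) →
      ∀ x ∈ Ω ∩ ball 0 1, |v x| ≤ C * A * ‖x‖ ^ min (i * β) (k + 1) := by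
  induction i with
  | zero =>
    refine ⟨1, le_rfl, fun Ω v A K _ _ hvA _ x hx => ?_⟩
    rw [Nat.cast_zero, zero_mul, min_eq_left (by positivity), Real.rpow_zero]
    simpa using hvA x hx
  | succ i ih =>
    obtain ⟨C, hC, ih⟩ := ih
    have hsucc : ((i + 1 : ℕ) : ℝ) * β = i * β + β := by push_cast; ring
    rcases le_or_gt ((k : ℝ) + 1) (i * β) with hik | hik
    · rw [min_eq_right hik] at ih
      rw [hsucc, min_eq_right (by linarith)]
      exact ⟨C, hC, ih⟩
    rw [min_eq_left hik.le] at ih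
    set σ : ℝ := ((i + 1 : ℕ) : ℝ) * β
    have hirr : Irrational σ := hβ.natCast_mul i.succ_ne_zero
    have hfloor : (⌊σ⌋₊ : ℝ) < σ :=
      (Nat.floor_le (by positivity)).lt_of_ne fun h => hirr ⟨⌊σ⌋₊, by exact_mod_cast h⟩
    have hfloor_le : ⌊σ⌋₊ ≤ k + 1 := by
      refine Nat.lt_succ_iff.1 ((Nat.floor_lt (by positivity)).2 ?_)
      push_cast
      linarith
    obtain ⟨C', -, hstep⟩ := exists_abs_le_rpow_min n (hβ₀.trans hβα) hα₁ hκ hM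
      (by positivity : 0 ≤ i * β) (by linarith) (by linarith) (by linarith) hfloor
      (Nat.lt_floor_add_one σ) hfloor_le
    refine ⟨max 1 (C' * C), le_max_left _ _, fun Ω v A K H hA hvA hvk x hx => ?_⟩
    calc |v x| ≤ C' * (C * A) * ‖x‖ ^ min σ (k + 1) := hstep Ω v A (C * A) K H (by positivity)
          (le_mul_of_one_le_left hA.le hC) (ih Ω v A K H hA hvA hvk) hvk x hx
      _ ≤ max 1 (C' * C) * A * ‖x‖ ^ min σ (k + 1) := by
        rw [← mul_assoc]
        gcongr
        exact le_max_right _ _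

theorem exists_homogeneous_expansion (n : ℕ) [NeZero n] {k : ℕ} (hk : 1 ≤ k) {α M : ℝ}
    (hα : 0 < α) (hα₁ : α < 1) (hM : 1 ≤ M) :
    ∃ C > 0, ∀ (Ω : Set (En n)) (v : En n → ℝ) (A K : ℝ),
      VanishingDirichletBound Ω v A (k + 1 + α) α M →
      0 < A → (∀ x ∈ Ω ∩ ball 0 1, |v x| ≤ A) →
      (∀ x ∈ Ω ∩ ball 0 1, |v x| ≤ K * ‖x‖ ^ (k + α)) →
      ∃ P : MvPolynomial (Fin n) ℝ, plap P = 0 ∧ P.IsHomogeneous (k + 1) ∧ OddInLast P ∧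
        (∀ d, |coeff d P| ≤ C * A) ∧
        ∀ x ∈ Ω ∩ ball 0 1, |v x - peval P x| ≤ C * A * ‖x‖ ^ (k + 1 + α) := by
  have hκ : (2 : ℝ) ≤ k + 1 + α := by linarith [Nat.one_le_cast (α := ℝ) |>.2 hk]
  obtain ⟨β, hβ, hβ₀, hβα⟩ := exists_irrational_btwn hα
  obtain ⟨i, hi⟩ := exists_nat_ge (((k : ℝ) + 1) / β)
  obtain ⟨C, hC, hgrowth⟩ :=
    exists_abs_le_rpow_min_nat_mul n (k := k) hα₁.le hκ le_rfl hM hβ hβ₀ hβα i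
  rw [min_eq_right ((div_le_iff₀ hβ₀).1 hi)] at hgrowth
  obtain ⟨C', hC', hexp⟩ := exists_homogeneous_expansion_of_abs_le_rpow n (k := k) (m := k + 1)
    hα hα₁.le hκ hM (by positivity : (0 : ℝ) ≤ k + 1) le_rfl (by linarith) le_rfl
    (by push_cast; linarith) (by push_cast; linarith) le_rfl
  refine ⟨C' * C, by positivity, fun Ω v A K H hA hvA hvk => ?_⟩
  simp only [mul_assoc C' C A]
  exact hexp Ω v A (C * A) K H (by positivity) (le_mul_of_one_le_left hA.le hC)
    (hgrowth Ω v A K H hA hvA hvk) hvk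

end VanishingDirichletBound

end HomogeneousExpansion

section PolynomialNorms

variable {n : ℕ}

lemma one_le_mfact (d : Fin n →₀ ℕ) : (1 : ℝ) ≤ mfact d := by
  have h : 1 ≤ d.prod fun _ e => e.factorial := Finset.one_le_prod' fun i _ => Nat.factorial_pos _
  exact_mod_cast h

lemma pnorm_nonneg (P : MvPolynomial (Fin n) ℝ) : 0 ≤ pnorm P :=
  Finset.sum_nonneg fun d _ => by positivity

lemma abs_coeff_le_pnorm (P : MvPolynomial (Fin n) ℝ) (d : Fin n →₀ ℕ) : |coeff d P| ≤ pnorm P := by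
  by_cases hd : d ∈ P.support
  · calc |coeff d P| ≤ mfact d * |coeff d P| :=
          le_mul_of_one_le_left (abs_nonneg _) (one_le_mfact d)
      _ ≤ pnorm P := Finset.single_le_sum (f := fun d => (mfact d : ℝ) * |coeff d P|)
          (fun d _ => by positivity) hd
  · rw [notMem_support_iff.1 hd, abs_zero]
    exact pnorm_nonneg P

lemma derivNorm_le {P : MvPolynomial (Fin n) ℝ} {c : ℝ} (hc : ∀ d, |coeff d P| ≤ c) (j : ℕ) :
    derivNorm j P ≤ (∑ d ∈ multiIndices n j, (mfact d : ℝ)) * c := by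
  have hc₀ : 0 ≤ c := (abs_nonneg _).trans (hc 0)
  have hsub : P.support.filter (fun d => mdeg d = j) ⊆ multiIndices n j := fun d hd =>
    mem_multiIndices.2 (Finset.mem_filter.1 hd).2.le
  refine Real.sqrt_le_iff.2 ⟨by positivity, ?_⟩
  calc ∑ d ∈ P.support.filter (fun d => mdeg d = j), ((mfact d : ℝ) * coeff d P) ^ 2
      ≤ ∑ d ∈ multiIndices n j, ((mfact d : ℝ) * coeff d P) ^ 2 :=
        Finset.sum_le_sum_of_subset_of_nonneg hsub fun d _ _ => by positivity
    _ ≤ ∑ d ∈ multiIndices n j, ((mfact d : ℝ) * c) ^ 2 := by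
        refine Finset.sum_le_sum fun d _ => ?_
        rw [mul_pow, mul_pow, ← sq_abs (coeff d P)]
        gcongr
        exact hc d
    _ ≤ (∑ d ∈ multiIndices n j, (mfact d : ℝ) * c) ^ 2 :=
        Finset.sum_sq_le_sq_sum_of_nonneg fun d _ => by positivity
    _ = ((∑ d ∈ multiIndices n j, (mfact d : ℝ)) * c) ^ 2 := by rw [Finset.sum_mul]

end PolynomialNorms

section PolynomialDirichletProblem

variable {n : ℕ}

lemma isHomogeneous_plap {N : ℕ} {P : MvPolynomial (Fin n) ℝ} (hP : P.IsHomogeneous (N + 2)) :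
    (plap P).IsHomogeneous N :=
  IsHomogeneous.sum _ _ _ fun _ _ => hP.pderiv.pderiv

lemma sum_abs_mul_add_two_mul_add_one_le {N : ℕ} {d : Fin n →₀ ℕ} (hd : d.degree ≤ N)
    {a : Fin n → ℝ} {c : ℝ} (s : Finset (Fin n)) (ha : ∀ i ∈ s, |a i| ≤ c) (hc : 0 ≤ c) :
    |∑ i ∈ s, a i * ((d i : ℝ) + 2) * ((d i : ℝ) + 1)| ≤ n * (N + 2) ^ 2 * c := by
  have hterm : ∀ i ∈ s, |a i * ((d i : ℝ) + 2) * ((d i : ℝ) + 1)| ≤ (N + 2) ^ 2 * c := by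
    intro i hi
    have hdi : (d i : ℝ) ≤ N := by exact_mod_cast (Finsupp.le_degree i d).trans hd
    calc |a i * ((d i : ℝ) + 2) * ((d i : ℝ) + 1)|
        = |a i| * ((d i : ℝ) + 2) * ((d i : ℝ) + 1) := by
          rw [abs_mul, abs_mul, abs_of_nonneg (by positivity : (0 : ℝ) ≤ d i + 2),
            abs_of_nonneg (by positivity : (0 : ℝ) ≤ d i + 1)]
      _ ≤ c * (N + 2) * (N + 2) := by
          gcongr
          · exact ha i hi
          · norm_num
      _ = (N + 2) ^ 2 * c := by ring
  calc |∑ i ∈ s, a i * ((d i : ℝ) + 2) * ((d i : ℝ) + 1)|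
      ≤ s.card • ((N + 2) ^ 2 * c) :=
        (Finset.abs_sum_le_sum_abs _ _).trans (Finset.sum_le_card_nsmul _ _ _ hterm)
    _ ≤ n * ((N + 2) ^ 2 * c) := by
        rw [nsmul_eq_mul]
        gcongr
        exact (Finset.card_le_univ s).trans (Fintype.card_fin n).le
    _ = n * (N + 2) ^ 2 * c := by ring

lemma abs_coeff_plap_le {N : ℕ} {P : MvPolynomial (Fin n) ℝ} (hP : P.IsHomogeneous (N + 2)) {c : ℝ}
    (hc : ∀ d, |coeff d P| ≤ c) (d : Fin n →₀ ℕ) : |coeff d (plap P)| ≤ n * (N + 2) ^ 2 * c := by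
  have hc₀ : 0 ≤ c := (abs_nonneg _).trans (hc 0)
  by_cases hd : d.degree = N
  · rw [coeff_plap]
    exact sum_abs_mul_add_two_mul_add_one_le hd.le _ (fun i _ => hc _) hc₀
  · rw [(isHomogeneous_plap hP).coeff_eq_zero hd, abs_zero]
    positivity

variable [NeZero n]

lemma coeff_substLast_zero (P : MvPolynomial (Fin n) ℝ) (d : Fin n →₀ ℕ) :
    coeff d (substLast 0 P) = if d (lastIdx n) = 0 then coeff d P else 0 := by
  induction P using MvPolynomial.induction_on generalizing d with
  | C c =>
    have hd : 0 = d → d (lastIdx n) = 0 := fun h => h ▸ rfl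
    simp only [substLast, algHom_C, algebraMap_eq, coeff_C]
    grind
  | add p q hp hq =>
    simp only [substLast, map_add, coeff_add] at hp hq ⊢
    rw [hp, hq]
    split_ifs <;> simp
  | mul_X p i hp =>
    simp only [substLast, map_mul, aeval_X] at hp ⊢
    split_ifs with hi hd hd
    · rw [mul_zero, coeff_zero, coeff_mul_X', if_neg (by simp [hi, hd])]
    · rw [mul_zero, coeff_zero]
    all_goals
      have hdi : (d - Finsupp.single i 1 : Fin n →₀ ℕ) (lastIdx n) = d (lastIdx n) := by
        simp [hi]
      rw [coeff_mul_X', hp, hdi]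
      simp [coeff_mul_X', hd]

lemma substLast_zero_eq_iff {P Q : MvPolynomial (Fin n) ℝ} :
    substLast 0 P = substLast 0 Q ↔ ∀ d, d (lastIdx n) = 0 → coeff d P = coeff d Q := by
  refine ⟨fun h d hd => ?_, fun h => ?_⟩
  · simpa [coeff_substLast_zero, hd] using congrArg (coeff d) h
  · ext d
    rw [coeff_substLast_zero, coeff_substLast_zero]
    split_ifs with hd
    exacts [h d hd, rfl]

lemma isHomogeneous_substLast_zero {N : ℕ} {P : MvPolynomial (Fin n) ℝ} (hP : P.IsHomogeneous N) :
    (substLast 0 P).IsHomogeneous N :=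
  isHomogeneous_iff_coeff_eq_zero.2 fun d hd => by
    rw [coeff_substLast_zero, hP.coeff_eq_zero hd, ite_self]

lemma abs_coeff_substLast_zero_le {P : MvPolynomial (Fin n) ℝ} {c : ℝ}
    (hc : ∀ d, |coeff d P| ≤ c) (d : Fin n →₀ ℕ) : |coeff d (substLast 0 P)| ≤ c := by
  rw [coeff_substLast_zero]
  split_ifs
  · exact hc d
  · rw [abs_zero]
    exact (abs_nonneg _).trans (hc 0)

/-- The coefficient at `e`, with `e (lastIdx n) = m`, of the power series solution `Q` of `ΔQ = F`
with zero Cauchy data on `x_n = 0`: comparing coefficients at `e - 2` in `ΔQ = F` expresses it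
through coefficients of `Q` at multi-indices with last entry `m - 2`. -/
noncomputable def cauchyCoeff (F : MvPolynomial (Fin n) ℝ) : ℕ → (Fin n →₀ ℕ) → ℝ
  | 0, _ => 0
  | 1, _ => 0
  | m + 2, e =>
    let d := e - Finsupp.single (lastIdx n) 2
    (coeff d F - ∑ i ∈ Finset.univ.erase (lastIdx n),
      cauchyCoeff F m (d + Finsupp.single i 2) * ((d i : ℝ) + 2) * ((d i : ℝ) + 1)) /
        (((m : ℝ) + 2) * ((m : ℝ) + 1))

lemma cauchyCoeff_add_single (F : MvPolynomial (Fin n) ℝ) (m : ℕ) (d : Fin n →₀ ℕ) :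
    cauchyCoeff F (m + 2) (d + Finsupp.single (lastIdx n) 2) =
      (coeff d F - ∑ i ∈ Finset.univ.erase (lastIdx n),
        cauchyCoeff F m (d + Finsupp.single i 2) * ((d i : ℝ) + 2) * ((d i : ℝ) + 1)) /
          (((m : ℝ) + 2) * ((m : ℝ) + 1)) := by
  rw [cauchyCoeff, add_tsub_cancel_right]

lemma exists_eq_add_single_two {m : ℕ} {e : Fin n →₀ ℕ} (he : e (lastIdx n) = m + 2) :
    ∃ d : Fin n →₀ ℕ, e = d + Finsupp.single (lastIdx n) 2 ∧ d (lastIdx n) = m := by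
  refine ⟨e - Finsupp.single (lastIdx n) 2, (tsub_add_cancel_of_le ?_).symm, by simp [he]⟩
  rw [Finsupp.single_le_iff, he]
  omega

lemma add_single_apply_lastIdx {d : Fin n →₀ ℕ} {i : Fin n}
    (hi : i ∈ Finset.univ.erase (lastIdx n)) :
    (d + Finsupp.single i 2 : Fin n →₀ ℕ) (lastIdx n) = d (lastIdx n) := by
  simp [Finset.ne_of_mem_erase hi]

lemma cauchyCoeff_eq_zero {N : ℕ} {F : MvPolynomial (Fin n) ℝ} (hF : F.IsHomogeneous N) {m : ℕ}
    {e : Fin n →₀ ℕ} (he : e (lastIdx n) = m) (hdeg : e.degree ≠ N + 2) :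
    cauchyCoeff F m e = 0 := by
  induction m using Nat.twoStepInduction generalizing e with
  | zero => rfl
  | one => rfl
  | more m ih _ =>
    obtain ⟨d, rfl, hd⟩ := exists_eq_add_single_two he
    have hdN : d.degree ≠ N := by simpa using hdeg
    rw [cauchyCoeff_add_single, hF.coeff_eq_zero hdN, Finset.sum_eq_zero, sub_zero, zero_div]
    intro i hi
    rw [ih ((add_single_apply_lastIdx hi).trans hd) (by simpa using hdN), zero_mul, zero_mul]

lemma abs_cauchyCoeff_le {N : ℕ} {F : MvPolynomial (Fin n) ℝ} {S : ℝ} (hF : ∀ d, |coeff d F| ≤ S)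
    {m : ℕ} {e : Fin n →₀ ℕ} (he : e (lastIdx n) = m) (hdeg : e.degree ≤ N + 2) :
    |cauchyCoeff F m e| ≤ (1 + n * (N + 2) ^ 2) ^ m * S := by
  have hS : 0 ≤ S := (abs_nonneg _).trans (hF 0)
  induction m using Nat.twoStepInduction generalizing e with
  | zero => simpa [cauchyCoeff] using hS
  | one => simp only [cauchyCoeff, abs_zero]; positivity
  | more m ih _ =>
    obtain ⟨d, rfl, hd⟩ := exists_eq_add_single_two he
    have hdN : d.degree ≤ N := by simpa using hdeg
    set T : ℝ := 1 + n * (N + 2) ^ 2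
    have hT : 1 ≤ T := le_add_of_nonneg_right (by positivity)
    have hsum := sum_abs_mul_add_two_mul_add_one_le hdN (Finset.univ.erase (lastIdx n))
      (fun i hi => ih ((add_single_apply_lastIdx hi).trans hd) (by simpa using hdN))
      (by positivity)
    have hden : (1 : ℝ) ≤ ((m : ℝ) + 2) * ((m : ℝ) + 1) := by nlinarith [m.cast_nonneg (α := ℝ)]
    rw [cauchyCoeff_add_single, abs_div, abs_of_nonneg (zero_le_one.trans hden)]
    calc _ ≤ |coeff d F - ∑ i ∈ Finset.univ.erase (lastIdx n),
          cauchyCoeff F m (d + Finsupp.single i 2) * ((d i : ℝ) + 2) * ((d i : ℝ) + 1)| :=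
          div_le_self (abs_nonneg _) hden
      _ ≤ S + n * (N + 2) ^ 2 * (T ^ m * S) := (abs_sub _ _).trans (add_le_add (hF d) hsum)
      _ ≤ T ^ m * S + n * (N + 2) ^ 2 * (T ^ m * S) := by
          gcongr
          exact le_mul_of_one_le_left hS (one_le_pow₀ hT)
      _ = T ^ (m + 1) * S := by ring
      _ ≤ T ^ (m + 2) * S := by
          gcongr
          norm_num

lemma exists_isHomogeneous_plap_eq {N : ℕ} {F : MvPolynomial (Fin n) ℝ} (hF : F.IsHomogeneous N)
    {S : ℝ} (hS : ∀ d, |coeff d F| ≤ S) :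
    ∃ Q : MvPolynomial (Fin n) ℝ, Q.IsHomogeneous (N + 2) ∧ substLast 0 Q = 0 ∧ plap Q = F ∧
      ∀ d, |coeff d Q| ≤ (1 + n * (N + 2) ^ 2) ^ (N + 2) * S := by
  have hS₀ : 0 ≤ S := (abs_nonneg _).trans (hS 0)
  have hT : (1 : ℝ) ≤ 1 + n * (N + 2) ^ 2 := le_add_of_nonneg_right (by positivity)
  set Q := polyOfCoeff (N + 2) fun e : Fin n →₀ ℕ => cauchyCoeff F (e (lastIdx n)) e with hQ
  have hcoeff (e : Fin n →₀ ℕ) : coeff e Q = cauchyCoeff F (e (lastIdx n)) e := by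
    rw [hQ, coeff_polyOfCoeff, ite_eq_left_iff]
    exact fun he => (cauchyCoeff_eq_zero hF rfl (by omega)).symm
  have hhom : Q.IsHomogeneous (N + 2) := isHomogeneous_iff_coeff_eq_zero.2 fun e he =>
    (hcoeff e).trans (cauchyCoeff_eq_zero hF rfl he)
  refine ⟨Q, hhom, ?_, ?_, fun d => ?_⟩
  · ext d
    rw [coeff_substLast_zero]
    split_ifs with hd
    exacts [by rw [hcoeff, hd]; rfl, rfl]
  · ext d
    have hlast : (d + Finsupp.single (lastIdx n) 2 : Fin n →₀ ℕ) (lastIdx n) =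
      d (lastIdx n) + 2 := by simp
    rw [coeff_plap, ← Finset.add_sum_erase _ _ (Finset.mem_univ (lastIdx n)), hcoeff, hlast,
      cauchyCoeff_add_single, mul_assoc, div_mul_cancel₀ _ (by positivity), sub_add_eq_add_sub,
      sub_eq_iff_eq_add, add_right_inj]
    refine Finset.sum_congr rfl fun i hi => ?_
    rw [hcoeff, add_single_apply_lastIdx hi]
  · by_cases hd : d.degree = N + 2
    · rw [hcoeff]
      refine (abs_cauchyCoeff_le hS rfl hd.le).trans ?_
      gcongr
      exact hd ▸ Finsupp.le_degree _ d
    · rw [hhom.coeff_eq_zero hd, abs_zero]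
      positivity

lemma exists_isHomogeneous_plap_eq_substLast_eq (n N : ℕ) [NeZero n] :
    ∃ C > 0, ∀ (F G : MvPolynomial (Fin n) ℝ) (S : ℝ), F.IsHomogeneous N →
      G.IsHomogeneous (N + 2) → (∀ d, |coeff d F| ≤ S) → (∀ d, |coeff d G| ≤ S) →
      ∃ Q : MvPolynomial (Fin n) ℝ, Q.IsHomogeneous (N + 2) ∧ plap Q = F ∧
        substLast 0 Q = substLast 0 G ∧ ∀ d, |coeff d Q| ≤ C * S := by
  set T : ℝ := 1 + n * (N + 2) ^ 2
  refine ⟨1 + T ^ (N + 2) * T, by positivity, fun F G S hF hG hFS hGS => ?_⟩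
  have hG₀ := isHomogeneous_substLast_zero hG
  have hG₀S := abs_coeff_substLast_zero_le hGS
  obtain ⟨Q, hQ, hQlast, hQlap, hQS⟩ := exists_isHomogeneous_plap_eq (S := T * S)
    (hF.sub (isHomogeneous_plap hG₀)) fun d => by
      rw [coeff_sub]
      linarith [abs_sub (coeff d F) (coeff d (plap (substLast 0 G))), hFS d,
        abs_coeff_plap_le hG₀ hG₀S d]
  refine ⟨substLast 0 G + Q, hG₀.add hQ, by rw [plap_add, hQlap, add_sub_cancel],
    substLast_zero_eq_iff.2 fun d hd => ?_, fun d => ?_⟩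
  · have hQd : coeff d Q = 0 := by simpa [coeff_substLast_zero, hd] using congrArg (coeff d) hQlast
    rw [coeff_add, coeff_substLast_zero, if_pos hd, hQd, add_zero]
  · rw [coeff_add]
    linarith [abs_add_le (coeff d (substLast 0 G)) (coeff d Q), hG₀S d, hQS d]

end PolynomialDirichletProblem

section PolynomialBounds

variable {n : ℕ}

lemma abs_prod_pow_le_abs_apply_mul {d : Fin n →₀ ℕ} {j : Fin n} (hj : d j ≠ 0) (x : En n) :
    |d.prod fun i e => x i ^ e| ≤ |x j| * ‖x‖ ^ (d.degree - 1) := by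
  obtain ⟨e, rfl⟩ := exists_add_of_le (Finsupp.single_le_iff.2 (Nat.one_le_iff_ne_zero.2 hj))
  rw [Finsupp.prod_add_index' (fun _ => pow_zero _) (fun _ _ _ => pow_add _ _ _), abs_mul,
    Finsupp.prod_single_index (h := fun i e => x i ^ e) (pow_zero _), pow_one, map_add,
    Finsupp.degree_single, Nat.add_sub_cancel_left]
  gcongr
  exact abs_prod_pow_le_norm_pow e x

lemma exists_abs_peval_le_norm_pow {P : MvPolynomial (Fin n) ℝ} {j : ℕ}
    (hP : ∀ d, d.degree < j → coeff d P = 0) :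
    ∃ C ≥ 0, ∀ x : En n, ‖x‖ ≤ 1 → |peval P x| ≤ C * ‖x‖ ^ j := by
  refine ⟨∑ d ∈ P.support, |coeff d P|, Finset.sum_nonneg fun _ _ => abs_nonneg _, fun x hx => ?_⟩
  rw [peval, eval_eq, Finset.sum_mul]
  refine (Finset.abs_sum_le_sum_abs _ _).trans (Finset.sum_le_sum fun d hd => ?_)
  have hjd : j ≤ d.degree := not_lt.1 (mt (hP d) (mem_support_iff.1 hd))
  rw [abs_mul]
  gcongr
  exact (abs_prod_pow_le_norm_pow d x).trans (pow_le_pow_of_le_one (norm_nonneg _) hx hjd)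

variable [NeZero n]

lemma abs_peval_le_of_substLast_zero_eq {P Q : MvPolynomial (Fin n) ℝ} {j : ℕ} {c : ℝ}
    (hP : P.IsHomogeneous (j + 1)) (hQ : Q.IsHomogeneous (j + 1))
    (hPQ : substLast 0 P = substLast 0 Q) (hc : ∀ d, |coeff d (P - Q)| ≤ c) (x : En n) :
    |peval P x - peval Q x| ≤ (multiIndices n (j + 1)).card * (c * (|xn x| * ‖x‖ ^ j)) := by
  have hc₀ : 0 ≤ c := (abs_nonneg _).trans (hc 0)
  rw [← peval_sub, ← polyOfCoeff_coeff fun d hd => (hP.sub hQ).coeff_eq_zero hd.ne', polyOfCoeff,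
    peval_sum, ← nsmul_eq_mul]
  refine (Finset.abs_sum_le_sum_abs _ _).trans (Finset.sum_le_card_nsmul _ _ _ fun d _ => ?_)
  rw [peval_monomial, abs_mul]
  by_cases hd : d.degree = j + 1 ∧ d (lastIdx n) ≠ 0
  · have hprod := abs_prod_pow_le_abs_apply_mul hd.2 x
    rw [hd.1, Nat.add_sub_cancel] at hprod
    exact mul_le_mul (hc d) hprod (abs_nonneg _) hc₀
  · have hzero : coeff d (P - Q) = 0 := by
      rcases not_and_or.1 hd with hdeg | hlast
      · exact (hP.sub hQ).coeff_eq_zero hdeg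
      · rw [coeff_sub, substLast_zero_eq_iff.1 hPQ d (not_not.1 hlast), sub_self]
    rw [hzero, abs_zero, zero_mul]
    positivity

end PolynomialBounds

section LowOrderTerms

open Filter Topology Pointwise

variable {n : ℕ} [NeZero n]

lemma mul_sq_le_of_le_lapAt {y : En n} {ρ S c : ℝ} {w : En n → ℝ} (hρ : 0 < ρ)
    (hw : ContinuousOn w (closedBall y ρ)) (h2 : ∀ x ∈ ball y ρ, TwiceDifferentiableAt w x)
    (hS : ∀ x ∈ closedBall y ρ, |w x| ≤ S) (hlap : ∀ x ∈ ball y ρ, c ≤ lapAt w x) :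
    c * ρ ^ 2 ≤ 4 * n * S := by
  have hn : (0 : ℝ) < n := dim_pos
  have hle : w y ≤ S - c / (2 * n) * ρ ^ 2 := by
    have := le_peval_of_plap_le_lapAt isOpen_ball isBounded_ball
      (quadBarrier (lastIdx n) y 0 (S - c / (2 * n) * ρ ^ 2) (c / (2 * n)) 0 0)
      (hw.mono closure_ball_subset_closedBall) h2 (fun x hx => ?_) (fun x hx => ?_)
      y (mem_ball_self hρ)
    · simpa using this
    · rw [plap_quadBarrier, peval_C]
      refine le_trans (le_of_eq ?_) (hlap x hx)
      field_simp
      ring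
    · rw [frontier_ball y hρ.ne'] at hx
      rw [peval_quadBarrier, mem_sphere_iff_norm.1 hx]
      linarith [le_of_abs_le (hS x (sphere_subset_closedBall hx))]
  have hneg : -S ≤ w y := neg_le_of_abs_le (hS y (mem_closedBall_self hρ.le))
  calc c * ρ ^ 2 = c / (2 * n) * ρ ^ 2 * (2 * n) := by field_simp
    _ ≤ 2 * S * (2 * n) := by gcongr ?_ * _; linarith
    _ = 4 * n * S := by ring

lemma mul_sq_le_of_le_lapAt_smul {y : En n} {ρ S c t : ℝ} {w : En n → ℝ} (hρ : 0 < ρ) (ht : 0 < t)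
    (h2 : ∀ z ∈ closedBall y ρ, TwiceDifferentiableAt w (t • z))
    (hS : ∀ z ∈ closedBall y ρ, |w (t • z)| ≤ S)
    (hlap : ∀ z ∈ closedBall y ρ, c ≤ lapAt w (t • z)) : c * (t * ρ) ^ 2 ≤ 4 * n * S := by
  have hball : closedBall (t • y) (t * ρ) = t • closedBall y ρ := by
    rw [_root_.smul_closedBall _ _ hρ.le, Real.norm_of_nonneg ht.le]
  have hforall {p : En n → Prop} (hp : ∀ z ∈ closedBall y ρ, p (t • z)) :
      ∀ x ∈ closedBall (t • y) (t * ρ), p x := hball ▸ forall_mem_image.2 hp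
  exact mul_sq_le_of_le_lapAt (by positivity)
    (fun x hx => (hforall h2 x hx).continuousAt.continuousWithinAt)
    (fun x hx => hforall h2 x (ball_subset_closedBall hx)) (hforall hS)
    (fun x hx => hforall (p := fun x => c ≤ lapAt w x) hlap x (ball_subset_closedBall hx))

variable {Ω : Set (En n)} {w : En n → ℝ} {M α K L θ : ℝ} {j : ℕ} {F : MvPolynomial (Fin n) ℝ}

lemma eventually_mul_sq_le_mul_rpow {y : En n} {ε ρ : ℝ} (hα : 0 < α) (hM : 1 ≤ M)
    (hΩ : ∀ x : En n, ‖x‖ < 1 → M * ‖x‖ ^ (1 + α) < xn x → x ∈ Ω)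
    (h2 : ∀ x ∈ Ω ∩ ball 0 1, TwiceDifferentiableAt w x) (hK : 0 ≤ K) (hL : 0 ≤ L) (hθ : 0 ≤ θ)
    (hw : ∀ x ∈ Ω ∩ ball 0 1, |w x| ≤ K * ‖x‖ ^ θ) (hF : F.IsHomogeneous j)
    (hlap : ∀ x ∈ Ω ∩ ball 0 1, |lapAt w x - peval F x| ≤ L * ‖x‖ ^ (j + 1))
    (hε : 0 < ε) (hρ : 0 < ρ) (hy : ∀ z ∈ closedBall y ρ, z ∈ upperCap n ∧ ε ≤ peval F z) :
    ∀ᶠ t in 𝓝[>] (0 : ℝ), ε / 2 * ρ ^ 2 ≤ 4 * n * K * t ^ (θ - (j + 2 : ℕ)) := by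
  obtain ⟨t₀, ht₀, hmem⟩ := exists_smul_mem_of_mem_upperCap hα hM hΩ
  have hsmall : ∀ᶠ t in 𝓝[>] (0 : ℝ), L * t < ε / 2 :=
    ((continuous_const_mul L).tendsto' 0 0 (mul_zero L)).eventually_lt_const (half_pos hε)
      |>.filter_mono nhdsWithin_le_nhds
  filter_upwards [Ioo_mem_nhdsGT ht₀, hsmall] with t ⟨ht, htt₀⟩ hLt
  have hmem' (z : En n) (hz : z ∈ closedBall y ρ) := hmem z (hy z hz).1 t ht htt₀
  have hnorm (z : En n) (hz : z ∈ closedBall y ρ) := norm_smul_le_of_mem_upperCap (hy z hz).1 ht.le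
  have hbound : ε / 2 * t ^ j * (t * ρ) ^ 2 ≤ 4 * n * (K * t ^ θ) := by
    refine mul_sq_le_of_le_lapAt_smul hρ ht (fun z hz => h2 _ (hmem' z hz)) (fun z hz => ?_)
      (fun z hz => ?_)
    · refine (hw _ (hmem' z hz)).trans ?_
      gcongr
      exact hnorm z hz
    · have hFz : t ^ j * ε ≤ peval F (t • z) := by
        rw [peval_smul_of_isHomogeneous hF]
        gcongr
        exact (hy z hz).2
      have herr : L * ‖t • z‖ ^ (j + 1) ≤ ε / 2 * t ^ j :=
        calc L * ‖t • z‖ ^ (j + 1) ≤ L * t ^ (j + 1) := by gcongr; exact hnorm z hz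
          _ = L * t * t ^ j := by ring
          _ ≤ ε / 2 * t ^ j := by gcongr
      linarith [neg_le_of_abs_le (hlap _ (hmem' z hz))]
  rw [Real.rpow_sub_natCast ht.ne', mul_div_assoc', le_div_iff₀ (by positivity)]
  linarith [hbound, show ε / 2 * t ^ j * (t * ρ) ^ 2 = ε / 2 * ρ ^ 2 * t ^ (j + 2) by ring]

lemma peval_nonpos_of_abs_lapAt_sub_le (hα : 0 < α) (hM : 1 ≤ M)
    (hΩ : ∀ x : En n, ‖x‖ < 1 → M * ‖x‖ ^ (1 + α) < xn x → x ∈ Ω)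
    (h2 : ∀ x ∈ Ω ∩ ball 0 1, TwiceDifferentiableAt w x) (hK : 0 ≤ K) (hL : 0 ≤ L)
    (hθ : (j : ℝ) + 2 < θ) (hw : ∀ x ∈ Ω ∩ ball 0 1, |w x| ≤ K * ‖x‖ ^ θ) (hF : F.IsHomogeneous j)
    (hlap : ∀ x ∈ Ω ∩ ball 0 1, |lapAt w x - peval F x| ≤ L * ‖x‖ ^ (j + 1)) :
    ∀ x ∈ upperCap n, peval F x ≤ 0 := by
  intro y hy
  by_contra! hpos
  set ε := peval F y / 2 with hε
  have hopen : IsOpen (upperCap n ∩ {z | ε < peval F z}) :=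
    isOpen_upperCap.inter (isOpen_lt continuous_const (continuous_peval F))
  obtain ⟨ρ, hρ, hball⟩ := nhds_basis_closedBall.mem_iff.1
    (hopen.mem_nhds ⟨hy, show ε < peval F y by linarith⟩)
  have hbound := eventually_mul_sq_le_mul_rpow (ε := ε) hα hM hΩ h2 hK hL (by linarith) hw hF hlap
    (by linarith) hρ fun z hz => ⟨(hball hz).1, (hball hz).2.le⟩
  have hexp : 0 < θ - (j + 2 : ℕ) := by push_cast; linarith
  have hlim : Tendsto (fun t : ℝ => 4 * n * K * t ^ (θ - (j + 2 : ℕ))) (𝓝[>] 0) (𝓝 0) := by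
    have := ((Real.continuous_rpow_const hexp.le).const_mul (4 * n * K)).tendsto 0
    rw [Real.zero_rpow hexp.ne', mul_zero] at this
    exact this.mono_left nhdsWithin_le_nhds
  have hle : ε / 2 * ρ ^ 2 ≤ 0 := ge_of_tendsto hlim hbound
  have : 0 < ε / 2 * ρ ^ 2 := by positivity
  linarith

lemma eq_zero_of_abs_lapAt_sub_le (hα : 0 < α) (hM : 1 ≤ M)
    (hΩ : ∀ x : En n, ‖x‖ < 1 → M * ‖x‖ ^ (1 + α) < xn x → x ∈ Ω)
    (h2 : ∀ x ∈ Ω ∩ ball 0 1, TwiceDifferentiableAt w x) (hK : 0 ≤ K) (hL : 0 ≤ L)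
    (hθ : (j : ℝ) + 2 < θ) (hw : ∀ x ∈ Ω ∩ ball 0 1, |w x| ≤ K * ‖x‖ ^ θ) (hF : F.IsHomogeneous j)
    (hlap : ∀ x ∈ Ω ∩ ball 0 1, |lapAt w x - peval F x| ≤ L * ‖x‖ ^ (j + 1)) : F = 0 := by
  refine eq_zero_of_peval_eq_zero_on_open isOpen_upperCap upperCap_nonempty fun x hx =>
    le_antisymm (peval_nonpos_of_abs_lapAt_sub_le hα hM hΩ h2 hK hL hθ hw hF hlap x hx) ?_
  have hneg : peval (-F) x ≤ 0 :=
    peval_nonpos_of_abs_lapAt_sub_le (w := -w) hα hM hΩ (fun x hx => (h2 x hx).neg) hK hL hθ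
      (fun x hx => by rw [Pi.neg_apply, abs_neg]; exact hw x hx) hF.neg
      (fun x hx => by
        rw [(h2 x hx).lapAt_neg, peval_neg, neg_sub_neg, abs_sub_comm]
        exact hlap x hx) x hx
  rwa [peval_neg, neg_nonpos] at hneg

lemma coeff_eq_zero_of_abs_lapAt_sub_le {m : ℕ} {P : MvPolynomial (Fin n) ℝ} (hα : 0 < α)
    (hM : 1 ≤ M) (hΩ : ∀ x : En n, ‖x‖ < 1 → M * ‖x‖ ^ (1 + α) < xn x → x ∈ Ω)
    (h2 : ∀ x ∈ Ω ∩ ball 0 1, TwiceDifferentiableAt w x) (hK : 0 ≤ K) (hL : 0 ≤ L)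
    (hθ : (m : ℝ) + 1 < θ) (hw : ∀ x ∈ Ω ∩ ball 0 1, |w x| ≤ K * ‖x‖ ^ θ)
    (hlap : ∀ x ∈ Ω ∩ ball 0 1, |lapAt w x - peval P x| ≤ L * ‖x‖ ^ m) {d : Fin n →₀ ℕ}
    (hd : d.degree < m) : coeff d P = 0 := by
  induction hj : d.degree using Nat.strong_induction_on generalizing d with
  | _ j ih =>
    obtain ⟨L', hL', htail⟩ : ∃ L' ≥ 0, ∀ x : En n, ‖x‖ ≤ 1 →
        |peval (P - homogeneousComponent j P) x| ≤ L' * ‖x‖ ^ (j + 1) :=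
      exists_abs_peval_le_norm_pow fun e he => by
        rw [coeff_sub, coeff_homogeneousComponent]
        split_ifs with hej
        · exact sub_self _
        · rw [ih e.degree (by lia) (by lia) rfl, sub_zero]
    have hcomp : homogeneousComponent j P = 0 := by
      refine eq_zero_of_abs_lapAt_sub_le (L := L + L') hα hM hΩ h2 hK (by positivity)
        (hθ.trans_le' ?_) hw (homogeneousComponent_isHomogeneous j P) fun x hx => ?_
      · exact_mod_cast (by lia : j + 2 ≤ m + 1)
      · have hx₁ : ‖x‖ ≤ 1 := (mem_ball_zero_iff.1 hx.2).le
        have hpow : L * ‖x‖ ^ m ≤ L * ‖x‖ ^ (j + 1) := by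
          gcongr L * ?_
          exact pow_le_pow_of_le_one (norm_nonneg x) hx₁ (by lia)
        rw [← sub_add_sub_cancel, ← peval_sub, add_mul]
        exact (abs_add_le _ _).trans (add_le_add ((hlap x hx).trans hpow) (htail x hx₁))
    simpa [coeff_homogeneousComponent, hj] using congrArg (coeff d) hcomp

end LowOrderTerms

section DirichletProblem

open Filter Topology

variable {n : ℕ}

lemma apply_zero_eq_zero_of_abs_le_rpow {Ω : Set (En n)} {u : En n → ℝ} {K s : ℝ} (hs : 0 < s)
    (h₀ : (0 : En n) ∈ closure Ω) (hc : ContinuousOn u (closure Ω ∩ ball 0 1))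
    (hu : ∀ x ∈ Ω ∩ ball 0 1, |u x| ≤ K * ‖x‖ ^ s) : u 0 = 0 := by
  have hcl : (0 : En n) ∈ closure (Ω ∩ ball 0 1) := by
    rw [inter_comm]
    exact isOpen_ball.inter_closure ⟨mem_ball_self one_pos, h₀⟩
  have : (𝓝[Ω ∩ ball (0 : En n) 1] 0).NeBot := mem_closure_iff_nhdsWithin_neBot.1 hcl
  have hlim : Tendsto u (𝓝[Ω ∩ ball 0 1] 0) (𝓝 (u 0)) :=
    (hc 0 ⟨h₀, mem_ball_self one_pos⟩).mono (inter_subset_inter_left _ subset_closure)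
  have hbound : Tendsto (fun x : En n => K * ‖x‖ ^ s) (𝓝[Ω ∩ ball 0 1] 0) (𝓝 0) := by
    have hcont : Continuous fun x : En n => K * ‖x‖ ^ s :=
      (continuous_norm.rpow_const fun _ => Or.inr hs.le).const_mul K
    exact (hcont.tendsto' 0 0 (by simp [Real.zero_rpow hs.ne'])).mono_left nhdsWithin_le_nhds
  exact tendsto_nhds_unique hlim (squeeze_zero_norm' (eventually_nhdsWithin_of_forall hu) hbound)

lemma SolvesDirichlet.twiceDifferentiableAt {Ω : Set (En n)} {u f g : En n → ℝ} (hΩ : IsOpen Ω)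
    (h : SolvesDirichlet Ω u f g) : ∀ x ∈ Ω ∩ ball 0 1, TwiceDifferentiableAt u x := by
  refine fun x hx => ⟨?_, (h.2.1 x hx).2.1⟩
  filter_upwards [(hΩ.inter isOpen_ball).mem_nhds hx] with y hy using (h.2.1 y hy).1

lemma SolvesDirichlet.isHomogeneous_boundary {Ω : Set (En n)} {u f g : En n → ℝ}
    {Pg : MvPolynomial (Fin n) ℝ} {k : ℕ} {α Ku Kg : ℝ} (h : SolvesDirichlet Ω u f g)
    (h₀ : (0 : En n) ∈ frontier Ω) (hα : 0 < α)
    (hu : ∀ x ∈ Ω ∩ ball 0 1, |u x| ≤ Ku * ‖x‖ ^ ((k : ℝ) + α))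
    (hPg : Pg.totalDegree ≤ k + 1)
    (hg : ∀ x ∈ frontier Ω ∩ ball 0 1, |g x - peval Pg x| ≤ Kg * ‖x‖ ^ (((k + 1 : ℕ) : ℝ) + α))
    (hPg₀ : ∀ d : Fin n →₀ ℕ, 1 ≤ d.degree → d.degree ≤ k → coeff d Pg = 0) :
    Pg.IsHomogeneous (k + 1) := by
  have hball : (0 : En n) ∈ frontier Ω ∩ ball 0 1 := ⟨h₀, mem_ball_self one_pos⟩
  have hu₀ : u 0 = 0 :=
    apply_zero_eq_zero_of_abs_le_rpow (by positivity) (frontier_subset_closure h₀) h.1 hu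
  have hconst : coeff 0 Pg = 0 := by
    have := hg 0 hball
    rw [← h.2.2 0 hball, hu₀, norm_zero, Real.zero_rpow (by positivity), mul_zero, zero_sub,
      abs_neg, peval_zero_right] at this
    exact abs_nonpos_iff.1 this
  refine isHomogeneous_iff_coeff_eq_zero.2 fun d hd => ?_
  rcases hd.lt_or_gt with hlt | hgt
  · rcases Nat.eq_zero_or_pos d.degree with hzero | hpos
    · rwa [(Finsupp.degree_eq_zero_iff d).1 hzero]
    · exact hPg₀ d hpos (Nat.le_of_lt_succ hlt)
  · exact totalDegree_le_iff_coeff_eq_zero.1 hPg d hgt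

variable [NeZero n]

lemma xpn_le_norm (x : En n) : xpn x ≤ ‖x‖ := by
  rw [xpn, EuclideanSpace.norm_eq]
  simp only [Real.norm_eq_abs, sq_abs]
  exact Real.sqrt_le_sqrt
    (Finset.sum_le_sum_of_subset_of_nonneg (Finset.subset_univ _) fun _ _ _ => sq_nonneg _)

lemma abs_xn_le_of_mem_frontier {Ω : Set (En n)} (hΩ : IsOpen Ω) {M α : ℝ} (hα : 0 ≤ 1 + α)
    (hmem : ∀ x : En n, ‖x‖ < 1 → M * ‖x‖ ^ (1 + α) < xn x → x ∈ Ω)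
    (hnotMem : ∀ x : En n, ‖x‖ < 1 → xn x < -(M * ‖x‖ ^ (1 + α)) → x ∉ Ω)
    {x : En n} (hx : x ∈ frontier Ω) (hx₁ : ‖x‖ < 1) : |xn x| ≤ M * ‖x‖ ^ (1 + α) := by
  refine abs_le.2 ⟨?_, ?_⟩ <;> by_contra! hlt
  · have hcont : Continuous fun y : En n => -(M * ‖y‖ ^ (1 + α)) :=
      ((continuous_norm.rpow_const fun _ => Or.inr hα).const_mul M).neg
    have hopen : IsOpen ({y : En n | ‖y‖ < 1} ∩ {y | xn y < -(M * ‖y‖ ^ (1 + α))}) :=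
      (isOpen_lt continuous_norm continuous_const).inter (isOpen_lt continuous_xn hcont)
    obtain ⟨y, hy, hyΩ⟩ := mem_closure_iff.1 (frontier_subset_closure hx) _ hopen ⟨hx₁, hlt⟩
    exact hnotMem y hy.1 hy.2 hyΩ
  · rw [hΩ.frontier_eq] at hx
    exact hx.2 (hmem x hx₁ hlt)

namespace Domain1α

variable {Ω : Set (En n)} {α K M : ℝ}

lemma mul_xpn_rpow_le (hα : 0 ≤ 1 + α) (hM : 0 ≤ M) (hKM : K ≤ M) (x : En n) :
    K * xpn x ^ (1 + α) ≤ M * ‖x‖ ^ (1 + α) :=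
  have hxpn : 0 ≤ xpn x := Real.sqrt_nonneg _
  mul_le_mul hKM (Real.rpow_le_rpow hxpn (xpn_le_norm x) hα) (Real.rpow_nonneg hxpn _) hM

lemma mem_of_lt (h : Domain1α α K Ω) (hα : 0 ≤ 1 + α) (hM : 0 ≤ M) (hKM : K ≤ M) (x : En n)
    (hx : ‖x‖ < 1) (hlt : M * ‖x‖ ^ (1 + α) < xn x) : x ∈ Ω :=
  h.1 x hx ((mul_xpn_rpow_le hα hM hKM x).trans_lt hlt)

lemma notMem_of_lt (h : Domain1α α K Ω) (hα : 0 ≤ 1 + α) (hM : 0 ≤ M) (hKM : K ≤ M) (x : En n)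
    (hx : ‖x‖ < 1) (hlt : xn x < -(M * ‖x‖ ^ (1 + α))) : x ∉ Ω :=
  h.2 x hx (hlt.trans_le (neg_le_neg (mul_xpn_rpow_le hα hM hKM x)))

end Domain1α

/-- The hypotheses on a Dirichlet problem whose solution `u` vanishes to order `k` at `0`, after
its data have been normalized: the Taylor polynomials `Pf` and `Pg` of `f` and `g` at `0` are
homogeneous, and a single constant `N` bounds `u`, their coefficients and their remainders. -/
structure HomogeneousDirichletData (Ω : Set (En n)) (u f g : En n → ℝ)
    (Pf Pg : MvPolynomial (Fin n) ℝ) (k : ℕ) (α M N : ℝ) : Prop where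
  isOpen : IsOpen Ω
  zero_notMem : (0 : En n) ∉ Ω
  solvesDirichlet : SolvesDirichlet Ω u f g
  mem_of_lt : ∀ x : En n, ‖x‖ < 1 → M * ‖x‖ ^ (1 + α) < xn x → x ∈ Ω
  notMem_of_lt : ∀ x : En n, ‖x‖ < 1 → xn x < -(M * ‖x‖ ^ (1 + α)) → x ∉ Ω
  abs_le : ∀ x ∈ Ω ∩ ball 0 1, |u x| ≤ N
  isHomogeneous_rhs : Pf.IsHomogeneous (k - 1)
  abs_coeff_rhs_le : ∀ d, |coeff d Pf| ≤ N
  abs_rhs_sub_le : ∀ x ∈ Ω ∩ ball 0 1, |f x - peval Pf x| ≤ N * ‖x‖ ^ (k - 1 + α)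
  isHomogeneous_boundary : Pg.IsHomogeneous (k + 1)
  abs_coeff_boundary_le : ∀ d, |coeff d Pg| ≤ N
  abs_boundary_sub_le : ∀ x ∈ frontier Ω ∩ ball 0 1, |g x - peval Pg x| ≤ N * ‖x‖ ^ (k + 1 + α)

/-- Bounds `u - Q` and its data in terms of those of `u`, when the coefficients of the homogeneous
polynomial `Q` of degree `k + 1` are at most `C` times the bound for the data of `u`. -/
noncomputable def remainderConst (n k : ℕ) (C M : ℝ) : ℝ :=
  1 + (multiIndices n (k + 1)).card * (1 + C) * M

lemma one_add_card_mul_le_remainderConst (n k : ℕ) {C M : ℝ} (hC : 0 ≤ C) (hM : 1 ≤ M) :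
    1 + (multiIndices n (k + 1)).card * C ≤ remainderConst n k C M := by
  rw [remainderConst, mul_assoc]
  gcongr
  nlinarith

lemma one_le_remainderConst (n k : ℕ) {C M : ℝ} (hC : 0 ≤ C) (hM : 1 ≤ M) :
    1 ≤ remainderConst n k C M :=
  (le_add_of_nonneg_right (by positivity)).trans (one_add_card_mul_le_remainderConst n k hC hM)

namespace HomogeneousDirichletData

variable {Ω : Set (En n)} {u f g : En n → ℝ} {Pf Pg Q : MvPolynomial (Fin n) ℝ} {k : ℕ}
  {α M N C K : ℝ}

lemma const_nonneg (h : HomogeneousDirichletData Ω u f g Pf Pg k α M N) : 0 ≤ N :=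
  (abs_nonneg _).trans (h.abs_coeff_rhs_le 0)

lemma abs_sub_peval_le (h : HomogeneousDirichletData Ω u f g Pf Pg k α M N) (hC : 0 ≤ C)
    (hM : 1 ≤ M) (hQ : Q.IsHomogeneous (k + 1)) (hQN : ∀ d, |coeff d Q| ≤ C * N) :
    ∀ x ∈ Ω ∩ ball 0 1, |(u - peval Q) x| ≤ remainderConst n k C M * N := by
  intro x hx
  have hN := h.const_nonneg
  have hpow : ‖x‖ ^ (k + 1) ≤ 1 := pow_le_one₀ (norm_nonneg x) (mem_ball_zero_iff.1 hx.2).le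
  calc |u x - peval Q x| ≤ |u x| + |peval Q x| := abs_sub _ _
    _ ≤ N + (multiIndices n (k + 1)).card * (C * N * ‖x‖ ^ (k + 1)) :=
      add_le_add (h.abs_le x hx) (abs_peval_le_of_isHomogeneous hQ hQN x)
    _ ≤ N + (multiIndices n (k + 1)).card * (C * N * 1) := by gcongr
    _ = (1 + (multiIndices n (k + 1)).card * C) * N := by ring
    _ ≤ remainderConst n k C M * N := by
      gcongr
      exact one_add_card_mul_le_remainderConst n k hC hM

lemma abs_sub_peval_le_rpow (h : HomogeneousDirichletData Ω u f g Pf Pg k α M N) (hC : 0 ≤ C)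
    (hα : 0 ≤ k + α) (hα₁ : α ≤ 1) (hQ : Q.IsHomogeneous (k + 1))
    (hQN : ∀ d, |coeff d Q| ≤ C * N) (hu : ∀ x ∈ Ω ∩ ball 0 1, |u x| ≤ K * ‖x‖ ^ (k + α)) :
    ∀ x ∈ Ω ∩ ball 0 1, |(u - peval Q) x| ≤
      (K + (multiIndices n (k + 1)).card * (C * N)) * ‖x‖ ^ (k + α) := by
  intro x hx
  have hN := h.const_nonneg
  have hpow : ‖x‖ ^ (k + 1) ≤ ‖x‖ ^ (k + α) := by
    rw [← Real.rpow_natCast]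
    refine Real.rpow_le_rpow_of_exponent_ge' (norm_nonneg x) (mem_ball_zero_iff.1 hx.2).le hα ?_
    push_cast
    linarith
  calc |u x - peval Q x| ≤ |u x| + |peval Q x| := abs_sub _ _
    _ ≤ K * ‖x‖ ^ (k + α) + (multiIndices n (k + 1)).card * (C * N * ‖x‖ ^ (k + 1)) :=
      add_le_add (hu x hx) (abs_peval_le_of_isHomogeneous hQ hQN x)
    _ ≤ K * ‖x‖ ^ (k + α) + (multiIndices n (k + 1)).card * (C * N * ‖x‖ ^ (k + α)) := by gcongr
    _ = (K + (multiIndices n (k + 1)).card * (C * N)) * ‖x‖ ^ (k + α) := by ring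

/-- On `∂Ω` the polynomials `Pg` and `Q` differ by `O(|x_n| |x| ^ k)`, and `x_n = O(|x| ^ (1 + α))`
there: this is how the boundary regularity enters. -/
lemma abs_sub_peval_le_of_mem_frontier (h : HomogeneousDirichletData Ω u f g Pf Pg k α M N)
    (hC : 0 ≤ C) (hα : 0 < α) (hQ : Q.IsHomogeneous (k + 1))
    (hQPg : substLast 0 Q = substLast 0 Pg) (hQN : ∀ d, |coeff d Q| ≤ C * N) :
    ∀ x ∈ frontier Ω ∩ ball 0 1,
      |(u - peval Q) x| ≤ remainderConst n k C M * N * ‖x‖ ^ (k + 1 + α) := by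
  intro x hx
  have hN := h.const_nonneg
  have hcoeff (d : Fin n →₀ ℕ) : |coeff d (Pg - Q)| ≤ (1 + C) * N := by
    rw [coeff_sub]
    linarith [abs_sub (coeff d Pg) (coeff d Q), h.abs_coeff_boundary_le d, hQN d]
  have hxn : |xn x| ≤ M * ‖x‖ ^ (1 + α) := abs_xn_le_of_mem_frontier h.isOpen (by linarith)
    h.mem_of_lt h.notMem_of_lt hx.1 (mem_ball_zero_iff.1 hx.2)
  have hpow : ‖x‖ ^ (1 + α) * ‖x‖ ^ k = ‖x‖ ^ (k + 1 + α) := by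
    rw [← Real.rpow_natCast, ← Real.rpow_add_of_nonneg (norm_nonneg x) (by positivity)
      (by positivity), add_comm, add_assoc]
  calc |u x - peval Q x| = |(g x - peval Pg x) + (peval Pg x - peval Q x)| := by
        rw [h.solvesDirichlet.2.2 x hx, sub_add_sub_cancel]
    _ ≤ N * ‖x‖ ^ (k + 1 + α) +
        (multiIndices n (k + 1)).card * ((1 + C) * N * (|xn x| * ‖x‖ ^ k)) :=
      (abs_add_le _ _).trans (add_le_add (h.abs_boundary_sub_le x hx)
        (abs_peval_le_of_substLast_zero_eq h.isHomogeneous_boundary hQ hQPg.symm hcoeff x))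
    _ ≤ N * ‖x‖ ^ (k + 1 + α) +
        (multiIndices n (k + 1)).card * ((1 + C) * N * (M * ‖x‖ ^ (1 + α) * ‖x‖ ^ k)) := by
      gcongr
    _ = remainderConst n k C M * N * ‖x‖ ^ (k + 1 + α) := by
      rw [mul_assoc M, hpow, remainderConst]
      ring

lemma vanishingDirichletBound_sub_peval (h : HomogeneousDirichletData Ω u f g Pf Pg k α M N)
    (hC : 0 ≤ C) (hα : 0 < α) (hM : 1 ≤ M) (hQ : Q.IsHomogeneous (k + 1)) (hQPf : plap Q = Pf)
    (hQPg : substLast 0 Q = substLast 0 Pg) (hQN : ∀ d, |coeff d Q| ≤ C * N) :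
    VanishingDirichletBound Ω (u - peval Q) (remainderConst n k C M * N) (k + 1 + α) α M := by
  have hN := h.const_nonneg
  have hNle : N ≤ remainderConst n k C M * N :=
    le_mul_of_one_le_left hN (one_le_remainderConst n k hC hM)
  have hu := h.solvesDirichlet.twiceDifferentiableAt h.isOpen
  exact
    { const_nonneg := hN.trans hNle
      isOpen := h.isOpen
      zero_notMem := h.zero_notMem
      continuousOn := h.solvesDirichlet.1.sub (continuous_peval Q).continuousOn
      twiceDifferentiableAt := fun x hx => (hu x hx).sub (twiceDifferentiableAt_peval Q x)
      abs_lapAt_le := fun x hx => by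
        rw [(hu x hx).lapAt_sub (twiceDifferentiableAt_peval Q x), lapAt_peval, hQPf,
          (h.solvesDirichlet.2.1 x hx).2.2, show (k : ℝ) + 1 + α - 2 = k - 1 + α by ring]
        exact (h.abs_rhs_sub_le x hx).trans (by gcongr)
      abs_le_of_mem_frontier := h.abs_sub_peval_le_of_mem_frontier hC hα hQ hQPg hQN
      mem_of_lt := h.mem_of_lt
      notMem_of_lt := h.notMem_of_lt }

lemma eq_zero_of_const_eq_zero (h : HomogeneousDirichletData Ω u f g Pf Pg k α M 0) :
    Pf = 0 ∧ Pg = 0 ∧ ∀ x ∈ Ω ∩ ball 0 1, u x = 0 :=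
  ⟨MvPolynomial.ext _ _ fun d => abs_nonpos_iff.1 (h.abs_coeff_rhs_le d),
    MvPolynomial.ext _ _ fun d => abs_nonpos_iff.1 (h.abs_coeff_boundary_le d),
    fun x hx => abs_nonpos_iff.1 (h.abs_le x hx)⟩

theorem exists_expansion (n : ℕ) [NeZero n] {k : ℕ} (hk : 1 ≤ k) {α M : ℝ} (hα : 0 < α)
    (hα₁ : α < 1) (hM : 1 ≤ M) :
    ∃ C > 0, ∀ (Ω : Set (En n)) (u f g : En n → ℝ) (Pf Pg : MvPolynomial (Fin n) ℝ) (N K : ℝ),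
      HomogeneousDirichletData Ω u f g Pf Pg k α M N →
      (∀ x ∈ Ω ∩ ball 0 1, |u x| ≤ K * ‖x‖ ^ (k + α)) →
      ∃ P : MvPolynomial (Fin n) ℝ, P.IsHomogeneous (k + 1) ∧ plap P = Pf ∧
        substLast 0 P = substLast 0 Pg ∧ (∀ d, |coeff d P| ≤ C * N) ∧
        ∀ x ∈ Ω ∩ ball 0 1, |u x - peval P x| ≤ C * N * ‖x‖ ^ (k + 1 + α) := by
  obtain ⟨C₁, hC₁, hpoly⟩ := exists_isHomogeneous_plap_eq_substLast_eq n (k - 1)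
  rw [show k - 1 + 2 = k + 1 by lia] at hpoly
  obtain ⟨C₂, hC₂, hexp⟩ := VanishingDirichletBound.exists_homogeneous_expansion n hk hα hα₁ hM
  set D := remainderConst n k C₁ M
  have hD : 0 < D := one_pos.trans_le (one_le_remainderConst n k hC₁.le hM)
  refine ⟨C₁ + C₂ * D, by positivity, fun Ω u f g Pf Pg N K h hu => ?_⟩
  obtain rfl | hN := h.const_nonneg.eq_or_lt
  · obtain ⟨rfl, rfl, hzero⟩ := h.eq_zero_of_const_eq_zero
    exact ⟨0, isHomogeneous_zero _ _ _, plap_zero, rfl, by simp,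
      fun x hx => by simp [hzero x hx]⟩
  obtain ⟨Q, hQ, hQPf, hQPg, hQN⟩ := hpoly Pf Pg N h.isHomogeneous_rhs h.isHomogeneous_boundary
    h.abs_coeff_rhs_le h.abs_coeff_boundary_le
  obtain ⟨P, hP, hPhom, hodd, hPN, hle⟩ := hexp Ω (u - peval Q) (D * N) _
    (h.vanishingDirichletBound_sub_peval hC₁.le hα hM hQ hQPf hQPg hQN) (by positivity)
    (h.abs_sub_peval_le hC₁.le hM hQ hQN)
    (h.abs_sub_peval_le_rpow hC₁.le (by positivity) hα₁.le hQ hQN hu)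
  refine ⟨Q + P, hQ.add hPhom, by rw [plap_add, hQPf, hP, add_zero], ?_, fun d => ?_,
    fun x hx => ?_⟩
  · rw [← hQPg, substLast_zero_eq_iff]
    exact fun d hd => by rw [coeff_add, hodd d (by simp [hd]), add_zero]
  · rw [coeff_add]
    linarith [abs_add_le (coeff d Q) (coeff d P), hQN d, hPN d]
  · rw [peval_add, ← sub_sub]
    refine (hle x hx).trans ?_
    rw [← mul_assoc]
    gcongr
    exact le_add_of_nonneg_left hC₁.le

end HomogeneousDirichletData

namespace SolvesDirichlet

variable {Ω : Set (En n)} {u f g : En n → ℝ} {Pf Pg : MvPolynomial (Fin n) ℝ} {k : ℕ}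
  {α M Ku Kf Kg : ℝ}

lemma isHomogeneous_rhs (h : SolvesDirichlet Ω u f g) (hΩ : IsOpen Ω) (hk : 1 ≤ k) (hα : 0 < α)
    (hM : 1 ≤ M) (hmem : ∀ x : En n, ‖x‖ < 1 → M * ‖x‖ ^ (1 + α) < xn x → x ∈ Ω)
    (hu : ∀ x ∈ Ω ∩ ball 0 1, |u x| ≤ Ku * ‖x‖ ^ ((k : ℝ) + α))
    (hPf : Pf.totalDegree ≤ k - 1) (hKf : 0 ≤ Kf)
    (hf : ∀ x ∈ Ω ∩ ball 0 1, |f x - peval Pf x| ≤ Kf * ‖x‖ ^ (((k - 1 : ℕ) : ℝ) + α)) :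
    Pf.IsHomogeneous (k - 1) := by
  refine isHomogeneous_iff_coeff_eq_zero.2 fun d hd => ?_
  rcases hd.lt_or_gt with hlt | hgt
  · refine coeff_eq_zero_of_abs_lapAt_sub_le (K := |Ku|) (θ := k + α) hα hM hmem
      (h.twiceDifferentiableAt hΩ) (abs_nonneg _) hKf ?_ (fun x hx => ?_) (fun x hx => ?_) hlt
    · rw [Nat.cast_sub hk, Nat.cast_one]
      linarith
    · refine (hu x hx).trans ?_
      gcongr
      exact le_abs_self Ku
    · rw [(h.2.1 x hx).2.2, ← Real.rpow_natCast]
      refine (hf x hx).trans ?_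
      gcongr Kf * ?_
      exact Real.rpow_le_rpow_of_exponent_ge' (norm_nonneg x) (mem_ball_zero_iff.1 hx.2).le
        (by positivity) (by linarith)
  · exact totalDegree_le_iff_coeff_eq_zero.1 hPf d hgt

lemma homogeneousDirichletData {KΩ Mu : ℝ} (h : SolvesDirichlet Ω u f g) (hΩ : IsOpen Ω)
    (h₀ : (0 : En n) ∈ frontier Ω) (hk : 1 ≤ k) (hα : 0 < α) (hdom : Domain1α α KΩ Ω)
    (hKΩ : KΩ ≤ M) (hu : ∀ x ∈ Ω ∩ ball 0 1, |u x| ≤ Ku * ‖x‖ ^ ((k : ℝ) + α))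
    (hPf : Pf.totalDegree ≤ k - 1) (hKf : 0 ≤ Kf)
    (hf : ∀ x ∈ Ω ∩ ball 0 1, |f x - peval Pf x| ≤ Kf * ‖x‖ ^ (((k - 1 : ℕ) : ℝ) + α))
    (hPg : Pg.totalDegree ≤ k + 1) (hKg : 0 ≤ Kg)
    (hg : ∀ x ∈ frontier Ω ∩ ball 0 1, |g x - peval Pg x| ≤ Kg * ‖x‖ ^ (((k + 1 : ℕ) : ℝ) + α))
    (hPg₀ : ∀ d : Fin n →₀ ℕ, 1 ≤ d.degree → d.degree ≤ k → coeff d Pg = 0)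
    (hMu : 0 ≤ Mu) (hMu' : ∀ x ∈ Ω ∩ ball 0 1, |u x| ≤ Mu) :
    HomogeneousDirichletData Ω u f g Pf Pg k α (max M 1)
      (Mu + (pnorm Pf + Kf) + (pnorm Pg + Kg)) := by
  have hnf := pnorm_nonneg Pf
  have hng := pnorm_nonneg Pg
  have hmem := hdom.mem_of_lt (M := max M 1) (by positivity) (by positivity) (le_max_of_le_left hKΩ)
  exact
    { isOpen := hΩ
      zero_notMem := fun hmem₀ => (hΩ.frontier_eq ▸ h₀).2 hmem₀
      solvesDirichlet := h
      mem_of_lt := hmem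
      notMem_of_lt := hdom.notMem_of_lt (by positivity) (by positivity) (le_max_of_le_left hKΩ)
      abs_le := fun x hx => (hMu' x hx).trans (by linarith)
      isHomogeneous_rhs := h.isHomogeneous_rhs hΩ hk hα (le_max_right M 1) hmem hu hPf hKf hf
      abs_coeff_rhs_le := fun d => (abs_coeff_le_pnorm Pf d).trans (by linarith)
      abs_rhs_sub_le := fun x hx => by
        rw [← Nat.cast_pred hk]
        exact (hf x hx).trans (by gcongr; linarith)
      isHomogeneous_boundary := h.isHomogeneous_boundary h₀ hα hu hPg hg hPg₀
      abs_coeff_boundary_le := fun d => (abs_coeff_le_pnorm Pg d).trans (by linarith)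
      abs_boundary_sub_le := fun x hx => by
        rw [← Nat.cast_add_one]
        exact (hg x hx).trans (by gcongr; linarith) }

end SolvesDirichlet

end DirichletProblem

theorem stmt_8_general (n : ℕ) [NeZero n] (k : ℕ) (hk : 1 ≤ k)
    (α : ℝ) (hα0 : 0 < α) (hα1 : α < 1) (M : ℝ) :
    ∃ C : ℝ, 0 < C ∧
      ∀ (Ω : Set (En n)) (u f g : En n → ℝ)
        (Pu Pf Pg : MvPolynomial (Fin n) ℝ) (Ku Kf Kg KΩ Mu : ℝ),
        IsOpen Ω → (0 : En n) ∈ frontier Ω →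
        SolvesDirichlet Ω u f g →
        Domain1α α KΩ Ω → KΩ ≤ M →
        Pu.totalDegree ≤ k →
        (∀ x ∈ Ω ∩ ball (0 : En n) 1, |u x - peval Pu x| ≤ Ku * ‖x‖ ^ ((k : ℝ) + α)) →
        (∀ d : Fin n →₀ ℕ, mdeg d ≤ k → coeff d Pu = 0) →
        Pf.totalDegree ≤ k - 1 → 0 ≤ Kf →
        (∀ x ∈ Ω ∩ ball (0 : En n) 1,
          |f x - peval Pf x| ≤ Kf * ‖x‖ ^ (((k - 1 : ℕ) : ℝ) + α)) →
        Pg.totalDegree ≤ k + 1 → 0 ≤ Kg →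
        (∀ x ∈ frontier Ω ∩ ball (0 : En n) 1,
          |g x - peval Pg x| ≤ Kg * ‖x‖ ^ (((k + 1 : ℕ) : ℝ) + α)) →
        (∀ d : Fin n →₀ ℕ, 1 ≤ mdeg d → mdeg d ≤ k → coeff d Pg = 0) →
        0 ≤ Mu → (∀ x ∈ Ω ∩ ball (0 : En n) 1, |u x| ≤ Mu) →
        ∃ P : MvPolynomial (Fin n) ℝ, P.IsHomogeneous (k + 1) ∧
          (∀ x ∈ Ω ∩ ball (0 : En n) 1,
            |u x - peval P x| ≤
              C * ‖x‖ ^ (((k + 1 : ℕ) : ℝ) + α) * (Mu + (pnorm Pf + Kf) + (pnorm Pg + Kg))) ∧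
          derivNorm (k + 1) P ≤ C * (Mu + (pnorm Pf + Kf) + (pnorm Pg + Kg)) ∧
          plap P = Pf ∧
          substLast 0 P = substLast 0 Pg := by
  obtain ⟨C, hC, hexp⟩ :=
    HomogeneousDirichletData.exists_expansion n hk hα0 hα1 (le_max_right M 1)
  set S : ℝ := ∑ d ∈ multiIndices n (k + 1), (mfact d : ℝ)
  refine ⟨C + S * C, by positivity, ?_⟩
  intro Ω u f g Pu Pf Pg Ku Kf Kg KΩ Mu hΩ h₀ h hdom hKΩ hPu hu hPu₀ hPf hKf hf hPg hKg hg hPg₀ hMu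
    hMu'
  obtain rfl : Pu = 0 := MvPolynomial.ext _ _ fun d => (le_or_gt d.degree k).elim (hPu₀ d)
    (totalDegree_le_iff_coeff_eq_zero.1 hPu d)
  simp only [peval_zero, sub_zero] at hu
  obtain ⟨P, hPhom, hPf', hPg', hPN, hle⟩ := hexp Ω u f g Pf Pg _ Ku
    (h.homogeneousDirichletData hΩ h₀ hk hα0 hdom hKΩ hu hPf hKf hf hPg hKg hg hPg₀ hMu hMu') hu
  have hN : 0 ≤ Mu + (pnorm Pf + Kf) + (pnorm Pg + Kg) := by
    linarith [pnorm_nonneg Pf, pnorm_nonneg Pg]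
  refine ⟨P, hPhom, fun x hx => (hle x hx).trans ?_, (derivNorm_le hPN (k + 1)).trans ?_,
    hPf', hPg'⟩
  · rw [mul_right_comm, Nat.cast_add_one]
    gcongr
    exact le_add_of_nonneg_right (by positivity)
  · rw [← mul_assoc]
    gcongr
    exact le_add_of_nonneg_left hC.le

/-- Lemma 2.2: boundary pointwise `C^{k+1,α}` regularity for the Dirichlet
problem on a `C^{1,α}` domain when the derivatives of `u` up to order `k` and of `g` up to
order `k` (except `g(0)`) vanish at `0 ∈ ∂Ω`. -/
theorem stmt_8 (n : ℕ) [NeZero n] (hn : 2 ≤ n) (k : ℕ) (hk : 1 ≤ k)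
    (α : ℝ) (hα0 : 0 < α) (hα1 : α < 1) (M : ℝ) :
    ∃ C : ℝ, 0 < C ∧
      ∀ (Ω : Set (En n)) (u f g : En n → ℝ)
        (Pu Pf Pg : MvPolynomial (Fin n) ℝ) (Ku Kf Kg KΩ Mu : ℝ),
        IsOpen Ω → IsConnected Ω → IsBounded Ω → (0 : En n) ∈ frontier Ω →
        SolvesDirichlet Ω u f g →
        -- `∂Ω ∈ C^{1,α}(0)` with `‖∂Ω∩B₁‖_{C^{1,α}(0)} ≤ M`
        0 ≤ KΩ → Domain1α α KΩ Ω → KΩ ≤ M →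
        -- `u ∈ C^{k,α}(0)` with `u(0) = |Du(0)| = ⋯ = |D^k u(0)| = 0`
        Pu.totalDegree ≤ k →
        (∀ x ∈ Ω ∩ ball (0 : En n) 1, |u x - peval Pu x| ≤ Ku * ‖x‖ ^ ((k : ℝ) + α)) →
        (∀ d : Fin n →₀ ℕ, mdeg d ≤ k → MvPolynomial.coeff d Pu = 0) →
        -- `f ∈ C^{k-1,α}(0)`
        Pf.totalDegree ≤ k - 1 → 0 ≤ Kf →
        (∀ x ∈ Ω ∩ ball (0 : En n) 1,
          |f x - peval Pf x| ≤ Kf * ‖x‖ ^ (((k - 1 : ℕ) : ℝ) + α)) →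
        -- `g ∈ C^{k+1,α}(0)` with `|Dg(0)| = ⋯ = |D^k g(0)| = 0`
        Pg.totalDegree ≤ k + 1 → 0 ≤ Kg →
        (∀ x ∈ frontier Ω ∩ ball (0 : En n) 1,
          |g x - peval Pg x| ≤ Kg * ‖x‖ ^ (((k + 1 : ℕ) : ℝ) + α)) →
        (∀ d : Fin n →₀ ℕ, 1 ≤ mdeg d → mdeg d ≤ k → MvPolynomial.coeff d Pg = 0) →
        -- `‖u‖_{L^∞(Ω∩B₁)} ≤ Mu`
        0 ≤ Mu → (∀ x ∈ Ω ∩ ball (0 : En n) 1, |u x| ≤ Mu) →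
        -- conclusion: `u ∈ C^{k+1,α}(0)` with homogeneous `P` of degree `k+1`
        ∃ P : MvPolynomial (Fin n) ℝ, P.IsHomogeneous (k + 1) ∧
          (∀ x ∈ Ω ∩ ball (0 : En n) 1,
            |u x - peval P x| ≤
              C * ‖x‖ ^ (((k + 1 : ℕ) : ℝ) + α) * (Mu + (pnorm Pf + Kf) + (pnorm Pg + Kg))) ∧
          derivNorm (k + 1) P ≤ C * (Mu + (pnorm Pf + Kf) + (pnorm Pg + Kg)) ∧
          plap P = Pf ∧
          substLast 0 P = substLast 0 Pg := by
  obtain ⟨C, hC, h⟩ := stmt_8_general n k hk α hα0 hα1 M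
  exact ⟨C, hC, fun Ω u f g Pu Pf Pg Ku Kf Kg KΩ Mu hΩ _ _ h₀ hu _ =>
    h Ω u f g Pu Pf Pg Ku Kf Kg KΩ Mu hΩ h₀ hu⟩
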